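/- arXiv:1405.4410 — 3 statements merged into one kernel-verified Lean document; each statement's English description precedes it below -/
import Mathlib

section
/- For every real number ε > 0 there exists a real number δ > 0, depending only on n, p, α, ε, C₁ and C₂, with the following property: let r > 0, z ∈ ℝⁿ, and let v be a bounded nonnegative C¹ function on the open ball B_r(z) which is a solution of div A(x,Dv) + b(x)|Dv|^α ≥ 0 in B_r(z) and satisfies r^{p−α}·(sup_{B_r(z)} v)^{α−p+1}·(ess sup_{B_r(z)} b) ≤ C₁/2. If the Lebesgue measure of the set {x ∈ B_r(z) : v(x) > 0} is at most δ·rⁿ, then sup_{B_{r/8}(z)} v ≤ ε·sup_{B_r(z)} v. -/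
open MeasureTheory Metric Set Filter
open scoped RealInnerProductSpace ENNReal

noncomputable section

abbrev Euc (n : ℕ) := EuclideanSpace ℝ (Fin n)

/-- Weak solution of `div A(x,Dv) + b(x)|Dv|^α ≥ a(x)` on an open set `U`:
for every nonnegative test function `φ ∈ C₀^∞(U)`,
`-∫ A(x,Dv)·Dφ + ∫ b |Dv|^α φ ≥ ∫ a φ`. -/
def IsWeakSol {n : ℕ} (A : Euc n → Euc n → Euc n) (b : Euc n → ℝ) (α : ℝ)
    (a : Euc n → ℝ) (U : Set (Euc n)) (v : Euc n → ℝ) : Prop :=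
  ∀ φ : Euc n → ℝ, ContDiff ℝ (⊤ : ℕ∞) φ → HasCompactSupport φ → tsupport φ ⊆ U →
    (∀ x, 0 ≤ φ x) →
    (∫ x in U, a x * φ x) ≤
      (-(∫ x in U, ⟪A x (gradient v x), gradient φ x⟫)) +
        ∫ x in U, b x * ‖gradient v x‖ ^ α * φ x

/-- Structural conditions on `A`: measurability, coercivity and growth. -/
def StructCond {n : ℕ} (A : Euc n → Euc n → Euc n) (p C₁ C₂ : ℝ) : Prop :=
  Measurable (Function.uncurry A) ∧
    ∀ x ζ : Euc n, C₁ * ‖ζ‖ ^ p ≤ ⟪ζ, A x ζ⟫ ∧ ‖A x ζ‖ ≤ C₂ * ‖ζ‖ ^ (p - 1)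

/-- Locally bounded function on `ℝⁿ`. -/
def LocBdd {n : ℕ} (b : Euc n → ℝ) : Prop :=
  ∀ K : Set (Euc n), IsCompact K → ∃ C, ∀ x ∈ K, b x ≤ C

/-- `M(r; u) = max_{|x| = r} u x`. -/
def sphMax {n : ℕ} (u : Euc n → ℝ) (r : ℝ) : ℝ := sSup (u '' Metric.sphere (0 : Euc n) r)

/-- `g_θ(t) = inf_{s ∈ (t/θ, θ t)} g s`. -/
def ginf (g : ℝ → ℝ) (θ t : ℝ) : ℝ := sInf (g '' Set.Ioo (t / θ) (θ * t))

/-- The open annulus `{x : r₁ < |x| < r₂}`. -/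
def Ann (n : ℕ) (r₁ r₂ : ℝ) : Set (Euc n) := {x : Euc n | r₁ < ‖x‖ ∧ ‖x‖ < r₂}

/-- `q_σ(r) = ess inf_{r/σ < |x| < σ r} q x`. -/
def qinf {n : ℕ} (q : Euc n → ℝ) (σ r : ℝ) : ℝ :=
  essInf q (volume.restrict (Ann n (r / σ) (σ * r)))

/-- `f_σ(r) = q_σ(r) / (1 + r q_σ(r)^{(α-p+1)/α} ess sup_{r/σ<|x|<σr} b^{(p-1)/α})`. -/
def fdef {n : ℕ} (q b : Euc n → ℝ) (p α σ r : ℝ) : ℝ :=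
  qinf q σ r /
    (1 + r * qinf q σ r ^ ((α - p + 1) / α) *
      essSup (fun x => b x ^ ((p - 1) / α)) (volume.restrict (Ann n (r / σ) (σ * r))))


theorem pw_young (p : ℝ) (hp : 1 < p) (N : ℕ) (hN : p ≤ N + 1) (τ T X η : ℝ) (hτ : 0 < τ)
    (hT : 0 < T) (hX : 0 ≤ X) (hη : 0 ≤ η) (hη1 : η ≤ 1) :
    X ^ (p - 1) * η ^ N * T ≤ τ * (X ^ p * η ^ (N + 1)) + (1 / τ) ^ (p - 1) * T ^ p := by
  by_cases h : T ≤ τ * (X * η)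
  · have hX0 : 0 < X := by
      rcases hX.lt_or_eq with h0 | h0
      · exact h0
      · rw [← h0] at h; simp at h; linarith
    have e : X ^ p = X ^ (p - 1) * X := by
      rw [← Real.rpow_add_one hX0.ne']; congr 1; ring
    have h1 : X ^ (p - 1) * η ^ N * T ≤ X ^ (p - 1) * η ^ N * (τ * (X * η)) := by gcongr
    have h2 : 0 ≤ (1 / τ) ^ (p - 1) * T ^ p := by positivity
    rw [e, pow_succ]
    nlinarith
  · push Not at h
    have h3 : η ^ N ≤ η ^ (p - 1) := by
      rw [← Real.rpow_natCast]
      exact Real.rpow_le_rpow_of_exponent_ge' hη hη1 (by linarith) (by linarith)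
    have h4 : X * η ≤ (1 / τ) * T := by
      rw [div_mul_eq_mul_div, le_div_iff₀ hτ]; linarith
    have e : T ^ p = T ^ (p - 1) * T := by
      rw [← Real.rpow_add_one hT.ne']; congr 1; ring
    have h5 : X ^ (p - 1) * η ^ N * T ≤ ((1 / τ) * T) ^ (p - 1) * T := by
      calc X ^ (p - 1) * η ^ N * T ≤ X ^ (p - 1) * η ^ (p - 1) * T := by gcongr
        _ = (X * η) ^ (p - 1) * T := by rw [Real.mul_rpow hX hη]
        _ ≤ _ := by gcongr
    rw [Real.mul_rpow (by positivity) hT.le] at h5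
    have h2 : 0 ≤ τ * (X ^ p * η ^ (N + 1)) := by positivity
    rw [e]; nlinarith

theorem pw_b (p α C₁ : ℝ) (hC₁ : 0 < C₁) (hα₁ : p - 1 ≤ α) (hα₂ : α ≤ p) (hp : 1 < p)
    (r M X β : ℝ) (hr : 0 < r) (hM : 0 < M) (hX : 0 ≤ X)
    (hb : r ^ (p - α) * M ^ (α - p + 1) * β ≤ C₁ / 2) :
    β * X ^ α * M ≤ C₁ / 2 * (X ^ p + (M / r) ^ p) := by
  have e1 : β * X ^ α * M = (r ^ (p - α) * M ^ (α - p + 1) * β) * ((M / r) ^ (p - α) * X ^ α) := by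
    rw [Real.div_rpow hM.le hr.le]
    have : M ^ (α - p + 1) * M ^ (p - α) = M := by
      rw [← Real.rpow_add hM]; ring_nf; exact Real.rpow_one M
    have h2 : r ^ (p - α) ≠ 0 := (Real.rpow_pos_of_pos hr _).ne'
    field_simp
    linear_combination (-(β * X ^ α)) * this
  have hs : 0 < M / r := by positivity
  have h2 : (M / r) ^ (p - α) * X ^ α ≤ X ^ p + (M / r) ^ p := by
    rcases le_total X (M / r) with h | h
    · have : (M / r) ^ (p - α) * X ^ α ≤ (M / r) ^ (p - α) * (M / r) ^ α := by
        gcongr; linarith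
      rw [← Real.rpow_add hs] at this
      have h3 : 0 ≤ X ^ p := by positivity
      simp at this; linarith
    · have hX0 : 0 < X := lt_of_lt_of_le hs h
      have : (M / r) ^ (p - α) * X ^ α ≤ X ^ (p - α) * X ^ α := by
        gcongr; 
      rw [← Real.rpow_add hX0] at this
      have h3 : 0 ≤ (M / r) ^ p := by positivity
      simp at this; linarith
  rw [e1]
  exact mul_le_mul hb h2 (by positivity) (by positivity)

theorem pw_main (p α C₁ C₂ : ℝ) (hC₁ : 0 < C₁) (hC₂ : 0 < C₂) (hα₁ : p - 1 ≤ α) (hα₂ : α ≤ p)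
    (hp : 1 < p) (N : ℕ) (hN : p ≤ N + 1) : ∃ K : ℝ, 0 < K ∧ ∀ r M X β w η : ℝ,
    0 < r → 0 < M → 0 ≤ X → 0 ≤ w → w ≤ M → 0 ≤ η → η ≤ 1 → 0 ≤ β → 
    r ^ (p - α) * M ^ (α - p + 1) * β ≤ C₁ / 2 →
    2 * w * η ^ (N + 1) * X + (N + 1) * w ^ 2 * η ^ N * (16 / r) ≤
      (2 * (16 * M / r) ^ (1 - p) / C₁) * (2 * w * η ^ (N + 1) * (C₁ * X ^ p)
        - (N + 1) * w ^ 2 * η ^ N * (C₂ * X ^ (p - 1) * (16 / r))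
        - β * X ^ α * (w ^ 2 * η ^ (N + 1))) + K * (M * (16 * M / r)) := by
  set τ := C₁ / (2 * (N + 1) * C₂) with hτ
  have hτ0 : 0 < τ := by positivity
  set K1 := (N + 1) * C₂ * (1 / τ) ^ (p - 1) with hK1
  have hK10 : 0 < K1 := by positivity
  refine ⟨(2 / C₁) * (K1 + C₁ / 2) + 2 + (N + 1), by positivity, ?_⟩
  intro r M X β w η hr hM hX hw hwM hη hη1 hβ hb
  set T := 16 * M / r with hT
  have hT0 : 0 < T := by positivity
  set Q := w * η ^ (N + 1) * X ^ p with hQ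
  have hη2 : η ^ (N + 1) ≤ 1 := pow_le_one₀ hη hη1
  have hη3 : η ^ N ≤ 1 := pow_le_one₀ hη hη1
  have eT : T ^ (1 - p) * T ^ p = T := by
    rw [← Real.rpow_add hT0]; simp
  have hTp : 0 < T ^ (1 - p) := by positivity
  have a0 : X ≤ T ^ (1 - p) * X ^ p + T := by
    rcases le_total X T with h | h
    · have : 0 ≤ T ^ (1 - p) * X ^ p := by positivity
      linarith
    · have hX0 : 0 < X := by linarith
      have : X ^ (1 - p) ≤ T ^ (1 - p) := Real.rpow_le_rpow_of_nonpos hT0 h (by linarith)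
      have h2 : X ^ (1 - p) * X ^ p = X := by
        rw [← Real.rpow_add hX0]; simp
      have h3 : X ^ (1 - p) * X ^ p ≤ T ^ (1 - p) * X ^ p := by gcongr
      linarith
  have a : w * η ^ (N + 1) * X ≤ T ^ (1 - p) * Q + M * T := by
    have h1 : w * η ^ (N + 1) * X ≤ w * η ^ (N + 1) * (T ^ (1 - p) * X ^ p + T) := by gcongr
    have h2 : w * η ^ (N + 1) * T ≤ M * 1 * T := by gcongr
    rw [hQ]; linarith
  have b : (N + 1) * w ^ 2 * η ^ N * (16 / r) ≤ (N + 1) * (M * T) := by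
    have : (N + 1) * w ^ 2 * η ^ N * (16 / r) ≤ (N + 1) * M ^ 2 * 1 * (16 / r) := by gcongr
    refine this.trans (le_of_eq ?_)
    rw [hT]; ring
  have c : (N + 1) * w ^ 2 * η ^ N * (C₂ * X ^ (p - 1) * (16 / r)) ≤ C₁ / 2 * Q + K1 * M * T ^ p := by
    have y := pw_young p hp N hN τ T X η hτ0 hT0 hX hη hη1
    calc (N + 1) * w ^ 2 * η ^ N * (C₂ * X ^ (p - 1) * (16 / r)) 
        = ((N + 1) * C₂ * w) * (X ^ (p - 1) * η ^ N * (16 * w / r)) := by ring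
      _ ≤ ((N + 1) * C₂ * w) * (X ^ (p - 1) * η ^ N * T) := by rw [hT]; gcongr
      _ ≤ ((N + 1) * C₂ * w) * (τ * (X ^ p * η ^ (N + 1)) + (1 / τ) ^ (p - 1) * T ^ p) := by gcongr
      _ = C₁ / 2 * Q + K1 * w * T ^ p := by
          rw [hK1, hQ]
          have : (N + 1) * C₂ * τ = C₁ / 2 := by rw [hτ]; field_simp
          linear_combination (w * X ^ p * η ^ (N + 1)) * this
      _ ≤ _ := by gcongr
  have d : β * X ^ α * (w ^ 2 * η ^ (N + 1)) ≤ C₁ / 2 * (Q + M * T ^ p) := by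
    have y := pw_b p α C₁ hC₁ hα₁ hα₂ hp r M X β hr hM hX hb
    have hs : (M / r) ^ p ≤ T ^ p := by
      apply Real.rpow_le_rpow (by positivity) _ (by linarith)
      rw [hT]; gcongr; linarith
    calc β * X ^ α * (w ^ 2 * η ^ (N + 1)) = (w * η ^ (N + 1)) * (β * X ^ α * w) := by ring
      _ ≤ (w * η ^ (N + 1)) * (β * X ^ α * M) := by gcongr
      _ ≤ (w * η ^ (N + 1)) * (C₁ / 2 * (X ^ p + T ^ p)) := by
          apply mul_le_mul_of_nonneg_left _ (by positivity)
          refine y.trans ?_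
          gcongr
      _ = C₁ / 2 * (Q + (w * η ^ (N + 1)) * T ^ p) := by rw [hQ]; ring
      _ ≤ C₁ / 2 * (Q + (M * 1) * T ^ p) := by gcongr
      _ = _ := by ring
  have e : 2 * w * η ^ (N + 1) * (C₁ * X ^ p) = 2 * C₁ * Q := by rw [hQ]; ring
  have f : 2 * T ^ (1 - p) / C₁ * (2 * C₁ * Q - (C₁ / 2 * Q + K1 * M * T ^ p) - C₁ / 2 * (Q + M * T ^ p))
     ≤ 2 * T ^ (1 - p) / C₁ * (2 * w * η ^ (N + 1) * (C₁ * X ^ p)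
        - (N + 1) * w ^ 2 * η ^ N * (C₂ * X ^ (p - 1) * (16 / r))
        - β * X ^ α * (w ^ 2 * η ^ (N + 1))) := by
    apply mul_le_mul_of_nonneg_left _ (by positivity)
    rw [e]; linarith
  have g : 2 * T ^ (1 - p) / C₁ * (2 * C₁ * Q - (C₁ / 2 * Q + K1 * M * T ^ p) - C₁ / 2 * (Q + M * T ^ p))
     = 2 * T ^ (1 - p) * Q - (2 / C₁) * (K1 + C₁ / 2) * (M * T) := by
    field_simp
    linear_combination (-(M * (2 * K1 + C₁))) * eT
  linarith

theorem iter_aux (n : ℕ) (hn : 2 ≤ n) (C L : ℝ) (hC : 0 < C) (hL : 1 < L) (y : ℕ → ℝ) 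
    (hy : ∀ j, 0 ≤ y j) (h : ∀ j, y (j + 1) ^ (n - 1) ≤ (C * L ^ j * y j) ^ n)
    (h0 : y 0 ≤ 1 / (C ^ n * L ^ (n * (n - 1)))) : Tendsto y atTop (nhds 0) := by
  obtain ⟨k, rfl⟩ : ∃ k, n = k + 1 := ⟨n - 1, by omega⟩
  have hk : k ≠ 0 := by omega
  simp only [Nat.add_sub_cancel] at *
  set δ := 1 / (C ^ (k + 1) * L ^ ((k + 1) * k)) with hδ
  have hδ0 : 0 < δ := by positivity
  have hL0 : 0 < L := by linarith
  have key : ∀ j, y j ≤ δ * ((1 / L) ^ (k + 1)) ^ j := by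
    intro j
    induction j with
    | zero => simpa using h0
    | succ j ih =>
      have h1 := h j
      have h2 : (C * L ^ j * y j) ^ (k + 1) ≤ (C * L ^ j * (δ * ((1 / L) ^ (k + 1)) ^ j)) ^ (k + 1) := by
        have := hy j
        gcongr
      have h3 : (C * L ^ j * (δ * ((1 / L) ^ (k + 1)) ^ j)) ^ (k + 1)
          = (δ * ((1 / L) ^ (k + 1)) ^ (j + 1)) ^ k := by
        have e1 : C ^ (k + 1) * δ * L ^ ((k + 1) * k) = 1 := by
          rw [hδ]; field_simp
        have e2 : (1 / L) ^ ((k + 1) * k) * L ^ ((k + 1) * k) = 1 := by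
          rw [← mul_pow]; field_simp; simp
        have e3 : L ^ (j * (k + 1)) * (1 / L) ^ (j * (k + 1)) = 1 := by
          rw [← mul_pow]; field_simp; simp
        have e4 : C ^ (k + 1) * δ = (1 / L) ^ ((k + 1) * k) := by
          have : L ^ ((k + 1) * k) ≠ 0 := by positivity
          apply mul_right_cancel₀ this
          rw [e1, e2]
        calc (C * L ^ j * (δ * ((1 / L) ^ (k + 1)) ^ j)) ^ (k + 1)
            = (C ^ (k + 1) * δ) * δ ^ k * (L ^ (j * (k + 1)) * (1 / L) ^ (j * (k + 1))) * 
              (1 / L) ^ ((k + 1) * j * k) := by ring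
          _ = _ := by rw [e3, e4]; ring
      exact (pow_le_pow_iff_left₀ (hy _) (by positivity) hk).1 ((h1.trans h2).trans h3.le)
  refine squeeze_zero hy key ?_
  have : Tendsto (fun j : ℕ => ((1 / L) ^ (k + 1)) ^ j) atTop (nhds 0) := by
    apply tendsto_pow_atTop_nhds_zero_of_lt_one (by positivity)
    apply pow_lt_one₀ (by positivity) _ (by omega)
    rw [div_lt_one hL0]; exact hL
  simpa using this.const_mul δ

theorem grad_sub_norm {n : ℕ} (f g : Euc n → ℝ) (x : Euc n) :
    ‖gradient f x - gradient g x‖ = ‖fderiv ℝ f x - fderiv ℝ g x‖ := by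
  unfold gradient
  rw [← map_sub, LinearIsometryEquiv.norm_map]

theorem grad_norm {n : ℕ} (f : Euc n → ℝ) (x : Euc n) :
    ‖gradient f x‖ = ‖fderiv ℝ f x‖ := by
  unfold gradient
  rw [LinearIsometryEquiv.norm_map]

theorem grad_zero_off {n : ℕ} (f : Euc n → ℝ) (x : Euc n) (hx : x ∉ tsupport f) :
    gradient f x = 0 := by
  have : fderiv ℝ f x = 0 := by
    by_contra h
    exact hx (support_fderiv_subset ℝ h)
  rw [← norm_eq_zero, grad_norm, this, norm_zero]

theorem grad_measurable {n : ℕ} (f : Euc n → ℝ) : Measurable (gradient f) := by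
  unfold gradient
  exact (LinearIsometryEquiv.continuous _).measurable.comp (measurable_fderiv ℝ f)

theorem moll {n : ℕ} (φ : Euc n → ℝ) (h1 : ContDiff ℝ 1 φ) (hc : HasCompactSupport φ)
    (h0 : ∀ x, 0 ≤ φ x) (τ d : ℝ) (hτ : 0 < τ) (hd : 0 < d) :
    ∃ ψ : Euc n → ℝ, ContDiff ℝ (⊤ : ℕ∞) ψ ∧ tsupport ψ ⊆ cthickening d (tsupport φ) ∧
      (∀ x, 0 ≤ ψ x) ∧ (∀ x, ‖ψ x - φ x‖ ≤ τ) ∧ ∀ x, ‖gradient ψ x - gradient φ x‖ ≤ τ := by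
  have u1 : UniformContinuous φ := h1.continuous.uniformContinuous_of_tendsto_cocompact 
    (HasCompactSupport.is_zero_at_infty hc)
  have cd : Continuous (fderiv ℝ φ) := h1.continuous_fderiv one_ne_zero
  have u2 : UniformContinuous (fderiv ℝ φ) := cd.uniformContinuous_of_tendsto_cocompact 
    (HasCompactSupport.is_zero_at_infty (hc.fderiv ℝ))
  obtain ⟨d1, hd1, H1⟩ := Metric.uniformContinuous_iff.1 u1 τ hτ
  obtain ⟨d2, hd2, H2⟩ := Metric.uniformContinuous_iff.1 u2 τ hτ
  set R := min d (min d1 d2) with hR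
  have hR0 : 0 < R := by positivity
  let ρ : ContDiffBump (0 : Euc n) := ⟨R / 2, R, by positivity, by linarith⟩
  have hρ : ρ.rOut = R := rfl
  let ψ : Euc n → ℝ := convolution (ρ.normed volume) φ (ContinuousLinearMap.lsmul ℝ ℝ) volume
  have hli : LocallyIntegrable φ volume := h1.continuous.locallyIntegrable
  have hsm : ContDiff ℝ (⊤ : ℕ∞) ψ := 
    ρ.hasCompactSupport_normed.contDiff_convolution_left _ ρ.contDiff_normed hli
  refine ⟨ψ, hsm, ?_, ?_, ?_, ?_⟩
  · apply closure_minimal _ isClosed_cthickening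
    intro x hx
    by_contra hx2
    apply hx
    have hz : ∀ y ∈ ball x R, φ y = 0 := by
      intro y hy
      by_contra hy2
      apply hx2
      have hy3 : y ∈ tsupport φ := subset_tsupport _ hy2
      refine mem_cthickening_of_dist_le x y d _ hy3 ?_
      rw [mem_ball, dist_comm] at hy
      exact hy.le.trans (min_le_left _ _)
    have := ρ.dist_normed_convolution_le (μ := volume) (g := φ) (x₀ := x) (ε := 0) hli.aestronglyMeasurable
      (by intro y hy; rw [hz y hy, hz x (mem_ball_self hR0)]; simp)
    rw [hz x (mem_ball_self hR0)] at this
    have h3 := le_antisymm this dist_nonneg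
    exact dist_eq_zero.1 h3
  · intro x
    apply integral_nonneg
    intro t
    simp only [ContinuousLinearMap.lsmul_apply, smul_eq_mul]
    exact mul_nonneg (ρ.nonneg_normed _) (h0 _)
  · intro x
    rw [← dist_eq_norm]
    refine ρ.dist_normed_convolution_le (μ := volume) (g := φ) (x₀ := x) hli.aestronglyMeasurable ?_
    intro y hy
    rw [hρ, mem_ball] at hy
    exact (H1 (hy.trans_le ((min_le_right _ _).trans (min_le_left _ _)))).le
  · intro x
    have hfd := hc.hasFDerivAt_convolution_right (μ := volume) (ContinuousLinearMap.lsmul ℝ ℝ) 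
      (f := ρ.normed volume) ρ.continuous_normed.locallyIntegrable h1 x
    have hpre : (ContinuousLinearMap.lsmul ℝ ℝ : ℝ →L[ℝ] ℝ →L[ℝ] ℝ).precompR (Euc n) 
        = (ContinuousLinearMap.lsmul ℝ ℝ : ℝ →L[ℝ] (Euc n →L[ℝ] ℝ) →L[ℝ] (Euc n →L[ℝ] ℝ)) := by
      ext; simp
    rw [hpre] at hfd
    rw [grad_sub_norm, hfd.fderiv, ← dist_eq_norm]
    refine ρ.dist_normed_convolution_le (μ := volume) (g := fderiv ℝ φ) (x₀ := x) 
      cd.aestronglyMeasurable ?_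
    intro y hy
    rw [hρ, mem_ball] at hy
    exact (H2 (hy.trans_le ((min_le_right _ _).trans (min_le_right _ _)))).le

theorem integrable_test {n : ℕ} (U : Set (Euc n)) (F : Euc n → Euc n) (G : Euc n → ℝ)
    (hF : Measurable F) (hG : Measurable G)
    (hbd : ∀ K, IsCompact K → K ⊆ U → ∃ C, ∀ x ∈ K, ‖F x‖ ≤ C ∧ ‖G x‖ ≤ C)
    (φ : Euc n → ℝ) (h1 : ContDiff ℝ 1 φ) (hc : HasCompactSupport φ) (hs : tsupport φ ⊆ U) :
    Integrable (fun x => ⟪F x, gradient φ x⟫) (volume.restrict U) ∧ 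
    Integrable (fun x => G x * φ x) (volume.restrict U) := by
  obtain ⟨C, hC⟩ := hbd _ hc hs
  have cd : Continuous (fderiv ℝ φ) := h1.continuous_fderiv one_ne_zero
  obtain ⟨D1, hD1⟩ := hc.exists_bound_of_continuous h1.continuous
  obtain ⟨D2, hD2⟩ := (hc.fderiv ℝ).exists_bound_of_continuous cd
  have hK : volume (tsupport φ) < ⊤ := hc.measure_lt_top
  constructor
  · apply Integrable.restrict
    rw [← integrableOn_iff_integrable_of_support_subset (s := tsupport φ)]
    · refine Measure.integrableOn_of_bounded (M := C * D2) hK.ne 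
        ((hF.inner (grad_measurable φ)).aestronglyMeasurable) ?_
      refine (ae_restrict_iff' (isClosed_tsupport φ).measurableSet).2 (Eventually.of_forall ?_)
      intro x hx
      refine (norm_inner_le_norm _ _).trans ?_
      rw [grad_norm]
      have := hC x hx
      have h2 := hD2 x
      gcongr
      · exact (norm_nonneg _).trans this.1
      · exact this.1
    · intro x hx
      by_contra h
      apply hx
      simp [grad_zero_off φ x h]
  · apply Integrable.restrict
    rw [← integrableOn_iff_integrable_of_support_subset (s := tsupport φ)]
    · refine Measure.integrableOn_of_bounded (M := C * D1) hK.ne 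
        ((hG.mul h1.continuous.measurable).aestronglyMeasurable) ?_
      refine (ae_restrict_iff' (isClosed_tsupport φ).measurableSet).2 (Eventually.of_forall ?_)
      intro x hx
      rw [norm_mul]
      have := hC x hx
      have h2 := hD1 x
      gcongr
      · exact (norm_nonneg _).trans this.1
      · exact this.2
    · intro x hx
      by_contra h
      apply hx
      simp [image_eq_zero_of_notMem_tsupport h]

theorem test_C1 {n : ℕ} (U : Set (Euc n)) (hU : IsOpen U) (F : Euc n → Euc n) (G : Euc n → ℝ)
    (hF : Measurable F) (hG : Measurable G)
    (hbd : ∀ K, IsCompact K → K ⊆ U → ∃ C, ∀ x ∈ K, ‖F x‖ ≤ C ∧ ‖G x‖ ≤ C)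
    (hw : ∀ φ : Euc n → ℝ, ContDiff ℝ (⊤ : ℕ∞) φ → HasCompactSupport φ → tsupport φ ⊆ U →
      (∀ x, 0 ≤ φ x) →
      0 ≤ (-(∫ x in U, ⟪F x, gradient φ x⟫)) + ∫ x in U, G x * φ x)
    (φ : Euc n → ℝ) (h1 : ContDiff ℝ 1 φ) (hc : HasCompactSupport φ) (hs : tsupport φ ⊆ U)
    (h0 : ∀ x, 0 ≤ φ x) : ∫ x in U, (⟪F x, gradient φ x⟫ - G x * φ x) ≤ 0 := by
  obtain ⟨d, hd, hdU⟩ := hc.isCompact.exists_cthickening_subset_open hU hs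
  set K := cthickening d (tsupport φ) with hK
  have hKc : IsCompact K := hc.isCompact.cthickening
  obtain ⟨C, hC⟩ := hbd K hKc hdU
  have hKfin : volume K < ⊤ := hKc.measure_lt_top
  have hsK : tsupport φ ⊆ K := self_subset_cthickening _
  have main : ∀ τ > 0, ∫ x in U, (⟪F x, gradient φ x⟫ - G x * φ x) ≤ (2 * C * volume.real K) * τ := by
    intro τ hτ
    obtain ⟨ψ, p1, p2, p3, p4, p5⟩ := moll φ h1 hc h0 τ d hτ hd
    have pc : HasCompactSupport ψ := hKc.of_isClosed_subset (isClosed_tsupport _) p2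
    have p1' : ContDiff ℝ 1 ψ := p1.of_le (by exact_mod_cast le_top)
    have i1 := integrable_test U F G hF hG hbd φ h1 hc hs
    have i2 := integrable_test U F G hF hG hbd ψ p1' pc (p2.trans hdU)
    have w := hw ψ p1 pc (p2.trans hdU) p3
    have e : ∫ x in U, (⟪F x, gradient φ x⟫ - G x * φ x) = 
       (∫ x in U, ((⟪F x, gradient φ x⟫ - G x * φ x) - (⟪F x, gradient ψ x⟫ - G x * ψ x)))
        + ((∫ x in U, ⟪F x, gradient ψ x⟫) - ∫ x in U, G x * ψ x) := by
      have j1 : Integrable (fun x => ⟪F x, gradient φ x⟫ - G x * φ x) (volume.restrict U) := i1.1.sub i1.2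
      have j2 : Integrable (fun x => ⟪F x, gradient ψ x⟫ - G x * ψ x) (volume.restrict U) := i2.1.sub i2.2
      rw [integral_sub j1 j2, integral_sub i2.1 i2.2]; ring
    have e2 : (∫ x in U, ((⟪F x, gradient φ x⟫ - G x * φ x) - (⟪F x, gradient ψ x⟫ - G x * ψ x)))
      = (∫ x in K, ((⟪F x, gradient φ x⟫ - G x * φ x) - (⟪F x, gradient ψ x⟫ - G x * ψ x))) := by
      refine setIntegral_eq_of_subset_of_forall_sdiff_eq_zero hU.measurableSet hdU ?_
      intro x hx
      have a1 : x ∉ tsupport φ := fun h => hx.2 (hsK h)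
      have a2 : x ∉ tsupport ψ := fun h => hx.2 (p2 h)
      simp [grad_zero_off _ _ a1, grad_zero_off _ _ a2, image_eq_zero_of_notMem_tsupport a1, 
        image_eq_zero_of_notMem_tsupport a2]
    have e3 := norm_setIntegral_le_of_norm_le_const (μ := volume) (s := K) (C := 2 * C * τ) 
      (f := fun x => ((⟪F x, gradient φ x⟫ - G x * φ x) - (⟪F x, gradient ψ x⟫ - G x * ψ x))) hKfin (by
        intro x hx
        have c := hC x hx
        have c0 : 0 ≤ C := (norm_nonneg _).trans c.1
        have : ((⟪F x, gradient φ x⟫ - G x * φ x) - (⟪F x, gradient ψ x⟫ - G x * ψ x)) =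
          G x * (ψ x - φ x) - ⟪F x, gradient ψ x - gradient φ x⟫ := by
          rw [inner_sub_right]; ring
        rw [this]
        refine (norm_sub_le _ _).trans ?_
        have q1 : ‖G x * (ψ x - φ x)‖ ≤ C * τ := by
          rw [norm_mul]; exact mul_le_mul c.2 (p4 x) (norm_nonneg _) c0
        have q2 : ‖⟪F x, gradient ψ x - gradient φ x⟫‖ ≤ C * τ :=
          (norm_inner_le_norm _ _).trans (mul_le_mul c.1 (p5 x) (norm_nonneg _) c0)
        linarith)
    rw [e, e2]
    have e4 := (le_abs_self _).trans e3
    nlinarith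
  by_contra hcon
  push Not at hcon
  set I := ∫ x in U, (⟪F x, gradient φ x⟫ - G x * φ x)
  set L := 2 * C * volume.real K
  have h := main (I / (2 * (|L| + 1))) (by positivity)
  have h2 : L * (I / (2 * (|L| + 1))) ≤ (|L| + 1) * (I / (2 * (|L| + 1))) := by
    gcongr; linarith [le_abs_self L]
  have h3 : (|L| + 1) * (I / (2 * (|L| + 1))) = I / 2 := by
    field_simp
  linarith

theorem pos_pow_deriv (k : ℕ) (t : ℝ) :
    HasDerivAt (fun t : ℝ => (max t 0) ^ (k + 2)) ((k + 2) * (max t 0) ^ (k + 1)) t := by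
  rcases lt_trichotomy t 0 with h | h | h
  · have : (fun t : ℝ => (max t 0) ^ (k + 2)) =ᶠ[nhds t] fun _ => 0 := by
      filter_upwards [Iio_mem_nhds h] with s hs
      rw [max_eq_right (le_of_lt hs)]; simp
    rw [max_eq_right h.le]
    simpa using (hasDerivAt_const t (0 : ℝ)).congr_of_eventuallyEq this
  · subst h
    have : (fun t : ℝ => (max t 0) ^ (k + 2)) =O[nhds 0] fun x => ‖x - 0‖ ^ (k + 2) := by
      apply Asymptotics.IsBigO.of_bound 1
      filter_upwards with s
      rw [norm_pow, norm_pow, norm_norm, one_mul, sub_zero]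
      gcongr
      rw [Real.norm_eq_abs, Real.norm_eq_abs, abs_of_nonneg (le_max_right _ _)]
      exact max_le (le_abs_self _) (abs_nonneg _)
    have h2 := this.hasFDerivAt (𝕜 := ℝ) (by omega)
    have h3 := h2.hasDerivAt
    simpa using h3
  · have : (fun t : ℝ => (max t 0) ^ (k + 2)) =ᶠ[nhds t] fun s => s ^ (k + 2) := by
      filter_upwards [Ioi_mem_nhds h] with s hs
      rw [max_eq_left (le_of_lt hs)]
    rw [max_eq_left h.le]
    have h2 := (hasDerivAt_pow (k + 2) t).congr_of_eventuallyEq this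
    simpa using h2

theorem pos_pow_C1 (k : ℕ) : ContDiff ℝ 1 (fun t : ℝ => (max t 0) ^ (k + 2)) := by
  rw [contDiff_one_iff_deriv]
  refine ⟨fun t => (pos_pow_deriv k t).differentiableAt, ?_⟩
  have : deriv (fun t : ℝ => (max t 0) ^ (k + 2)) = fun t : ℝ => ((k : ℝ) + 2) * (max t 0) ^ (k + 1) :=
    funext fun t => (pos_pow_deriv k t).deriv
  rw [this]
  fun_prop

/-- The test function. -/
def tst {n : ℕ} (v : Euc n → ℝ) (k : ℝ) (z : Euc n) (ρ : ℝ) (N : ℕ) (x : Euc n) : ℝ :=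
  (max (v x - k) 0) ^ 2 * (max (1 - ‖x - z‖ ^ 2 / ρ ^ 2) 0) ^ (N + 2)

theorem eta_zero {n : ℕ} (z : Euc n) (ρ : ℝ) (hρ : 0 < ρ) (x : Euc n) (hx : x ∉ ball z ρ) :
    max (1 - ‖x - z‖ ^ 2 / ρ ^ 2) 0 = 0 := by
  apply max_eq_right
  rw [mem_ball, dist_eq_norm, not_lt] at hx
  have : 1 ≤ ‖x - z‖ ^ 2 / ρ ^ 2 := by
    rw [le_div_iff₀ (by positivity), one_mul]; gcongr
  linarith

theorem tst_tsupport {n : ℕ} (v : Euc n → ℝ) (k : ℝ) (z : Euc n) (ρ : ℝ) (hρ : 0 < ρ) (N : ℕ) :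
    tsupport (tst v k z ρ N) ⊆ closedBall z ρ := by
  apply closure_minimal _ isClosed_closedBall
  intro x hx
  by_contra h
  apply hx
  unfold tst
  rw [eta_zero z ρ hρ x (fun h' => h (ball_subset_closedBall h'))]
  simp

theorem tst_C1 {n : ℕ} (v : Euc n → ℝ) (k : ℝ) (z : Euc n) (ρ r : ℝ) (hρ : 0 < ρ) (hρr : ρ < r) (N : ℕ)
    (hv : ContDiffOn ℝ 1 v (ball z r)) : ContDiff ℝ 1 (tst v k z ρ N) := by
  rw [contDiff_iff_contDiffAt]
  intro x
  by_cases hx : x ∈ ball z r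
  · have h1 : ContDiffAt ℝ 1 v x := hv.contDiffAt (isOpen_ball.mem_nhds hx)
    unfold tst
    refine ContDiffAt.mul ?_ ?_
    · exact (pos_pow_C1 0).contDiffAt.comp x (h1.sub contDiffAt_const)
    · refine (pos_pow_C1 N).contDiffAt.comp x ?_
      refine ContDiffAt.sub contDiffAt_const (ContDiffAt.div_const ?_ _)
      exact (contDiffAt_id.sub contDiffAt_const).norm_sq ℝ
  · have : tst v k z ρ N =ᶠ[nhds x] 0 := by
      rw [← notMem_tsupport_iff_eventuallyEq]
      intro h
      exact hx (closedBall_subset_ball hρr (tst_tsupport v k z ρ hρ N h))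
    exact (contDiffAt_const (c := (0 : ℝ))).congr_of_eventuallyEq this

theorem tst_grad {n : ℕ} (v : Euc n → ℝ) (k : ℝ) (z : Euc n) (ρ r : ℝ) (N : ℕ)
    (hv : ContDiffOn ℝ 1 v (ball z r)) (x : Euc n) (hx : x ∈ ball z r) : 
    gradient (tst v k z ρ N) x = 
      (2 * max (v x - k) 0 * (max (1 - ‖x - z‖ ^ 2 / ρ ^ 2) 0) ^ (N + 2)) • gradient v x +
      ((N + 2) * (max (v x - k) 0) ^ 2 * (max (1 - ‖x - z‖ ^ 2 / ρ ^ 2) 0) ^ (N + 1)) • 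
        ((-(2 / ρ ^ 2)) • (x - z)) := by
  apply HasGradientAt.gradient
  have h1 : ContDiffAt ℝ 1 v x := hv.contDiffAt (isOpen_ball.mem_nhds hx)
  have h2 : HasFDerivAt v (fderiv ℝ v x) x := (h1.differentiableAt one_ne_zero).hasFDerivAt
  have h3 := (pos_pow_deriv 0 (v x - k)).comp_hasFDerivAt x (h2.sub_const k)
  have h4 : HasFDerivAt (fun y : Euc n => ‖y - z‖ ^ 2) (2 • (innerSL ℝ (x - z))) x := by
    have := ((hasFDerivAt_id x).sub_const z).norm_sq
    simpa using this
  have h5 : HasFDerivAt (fun y : Euc n => 1 - ‖y - z‖ ^ 2 / ρ ^ 2) 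
      (-((ρ ^ 2)⁻¹ • (2 • (innerSL ℝ (x - z))))) x := by
    simp only [div_eq_mul_inv]
    exact (h4.mul_const _).const_sub 1
  have h6 := (pos_pow_deriv N (1 - ‖x - z‖ ^ 2 / ρ ^ 2)).comp_hasFDerivAt x h5
  have h7 := h3.mul h6
  rw [hasGradientAt_iff_hasFDerivAt]
  have h8 : HasFDerivAt (tst v k z ρ N) _ x := h7
  refine h8.congr_fderiv ?_
  ext y
  simp
  ring

theorem pw_vec (n : ℕ) (p α C₁ C₂ : ℝ) (hC₁ : 0 < C₁) (hC₂ : 0 < C₂) (hα₁ : p - 1 ≤ α) (hα₂ : α ≤ p)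
    (hp : 1 < p) (N : ℕ) (hN : p ≤ N + 2) : ∃ K : ℝ, 0 < K ∧ 
    ∀ (A : Euc n → Euc n → Euc n), StructCond A p C₁ C₂ →
    ∀ (b : Euc n → ℝ) (r M ρ k : ℝ) (z : Euc n) (v : Euc n → ℝ), 0 < r → 0 < M → 
    r / 8 ≤ ρ → 0 ≤ k → 
    ContDiffOn ℝ 1 v (ball z r) → (∀ x ∈ ball z r, v x ≤ M) →
    ∀ x ∈ ball z r, 0 ≤ b x → r ^ (p - α) * M ^ (α - p + 1) * b x ≤ C₁ / 2 →
    ‖gradient (tst v k z ρ N) x‖ ≤ (2 * (16 * M / r) ^ (1 - p) / C₁) * 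
      (⟪A x (gradient v x), gradient (tst v k z ρ N) x⟫ - 
        b x * ‖gradient v x‖ ^ α * tst v k z ρ N x) + 
      {x ∈ ball z ρ | k < v x}.indicator (fun _ => K * (M * (16 * M / r))) x := by
  obtain ⟨K, hK, H⟩ := pw_main p α C₁ C₂ hC₁ hC₂ hα₁ hα₂ hp (N + 1) (by push_cast; linarith)
  refine ⟨K, hK, ?_⟩
  intro A hA b r M ρ k z v hr hM hρ hk hv hvM x hx hb hbM
  have hρ0 : 0 < ρ := by linarith
  rw [tst_grad v k z ρ r N hv x hx]
  by_cases hE : x ∈ {x ∈ ball z ρ | k < v x}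
  · rw [indicator_of_mem hE]
    have hw : max (v x - k) 0 = v x - k := max_eq_left (by linarith [hE.2])
    have hη : max (1 - ‖x - z‖ ^ 2 / ρ ^ 2) 0 ≤ 1 := by
      apply max_le _ zero_le_one
      have : 0 ≤ ‖x - z‖ ^ 2 / ρ ^ 2 := by positivity
      linarith
    have h := H r M ‖gradient v x‖ (b x) (max (v x - k) 0) (max (1 - ‖x - z‖ ^ 2 / ρ ^ 2) 0)
      hr hM (norm_nonneg _) (le_max_right _ _) (by rw [hw]; linarith [hvM x hx]) (le_max_right _ _) 
      hη hb hbM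
    unfold tst
    set w := max (v x - k) 0
    set η := max (1 - ‖x - z‖ ^ 2 / ρ ^ 2) 0
    have hw0 : 0 ≤ w := le_max_right _ _
    have hη0 : 0 ≤ η := le_max_right _ _
    have hθ : ‖(-(2 / ρ ^ 2)) • (x - z)‖ ≤ 16 / r := by
      rw [norm_smul, norm_neg, Real.norm_of_nonneg (by positivity)]
      have h1 : ‖x - z‖ ≤ ρ := by
        have := hE.1
        rw [mem_ball, dist_eq_norm] at this
        exact this.le
      calc 2 / ρ ^ 2 * ‖x - z‖ ≤ 2 / ρ ^ 2 * ρ := by gcongr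
        _ = 2 / ρ := by field_simp
        _ ≤ 2 / (r / 8) := by gcongr
        _ = 16 / r := by field_simp; norm_num
    set θ := (-(2 / ρ ^ 2)) • (x - z)
    set ζ := gradient v x
    obtain ⟨a1, a2⟩ := hA.2 x ζ
    push_cast at h
    have e1 : ((N : ℝ) + 1 + 1) = N + 2 := by ring
    rw [e1, show N + 1 + 1 = N + 2 from rfl] at h
    have l1 : ‖(2 * w * η ^ (N + 2)) • ζ + ((N + 2) * w ^ 2 * η ^ (N + 1)) • θ‖ ≤
        2 * w * η ^ (N + 2) * ‖ζ‖ + (N + 2) * w ^ 2 * η ^ (N + 1) * (16 / r) := by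
      refine (norm_add_le _ _).trans ?_
      rw [norm_smul, norm_smul, Real.norm_of_nonneg (by positivity), Real.norm_of_nonneg (by positivity)]
      gcongr
    have l2 : ⟪A x ζ, θ⟫ ≥ -(C₂ * ‖ζ‖ ^ (p - 1) * (16 / r)) := by
      have q1 := abs_real_inner_le_norm (A x ζ) θ
      have q2 : ‖A x ζ‖ * ‖θ‖ ≤ C₂ * ‖ζ‖ ^ (p - 1) * (16 / r) := by gcongr
      have := neg_abs_le ⟪A x ζ, θ⟫
      linarith
    have l3 : 2 * w * η ^ (N + 2) * (C₁ * ‖ζ‖ ^ p) - 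
        (N + 2) * w ^ 2 * η ^ (N + 1) * (C₂ * ‖ζ‖ ^ (p - 1) * (16 / r)) ≤ 
        ⟪A x ζ, (2 * w * η ^ (N + 2)) • ζ + ((N + 2) * w ^ 2 * η ^ (N + 1)) • θ⟫ := by
      rw [inner_add_right, inner_smul_right, inner_smul_right, real_inner_comm]
      have q1 : 2 * w * η ^ (N + 2) * (C₁ * ‖ζ‖ ^ p) ≤ 2 * w * η ^ (N + 2) * ⟪ζ, A x ζ⟫ := by gcongr
      have q2 : (N + 2) * w ^ 2 * η ^ (N + 1) * (-(C₂ * ‖ζ‖ ^ (p - 1) * (16 / r))) ≤ 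
        (N + 2) * w ^ 2 * η ^ (N + 1) * ⟪A x ζ, θ⟫ := by gcongr
      rw [real_inner_comm] at q1
      first | linarith | (rw [real_inner_comm]; linarith)
    refine l1.trans (h.trans ?_)
    gcongr
  · rw [indicator_of_notMem hE]
    unfold tst
    by_cases h : x ∈ ball z ρ
    · have : max (v x - k) 0 = 0 := by
        apply max_eq_right
        by_contra h2
        exact hE ⟨h, by linarith⟩
      rw [this]; simp
    · rw [eta_zero z ρ hρ0 x h]; simp

theorem coeff_bdd {n : ℕ} (p α C₁ C₂ : ℝ) (hC₂ : 0 < C₂) (hα₁ : p - 1 ≤ α) (hp : 1 < p)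
    (A : Euc n → Euc n → Euc n) (hA : StructCond A p C₁ C₂)
    (b : Euc n → ℝ) (hb0 : ∀ x, 0 ≤ b x) (hbl : LocBdd b) (U : Set (Euc n)) (hU : IsOpen U)
    (v : Euc n → ℝ) (hv : ContDiffOn ℝ 1 v U) (K : Set (Euc n)) (hK : IsCompact K) (hKU : K ⊆ U) :
    ∃ C, ∀ x ∈ K, ‖A x (gradient v x)‖ ≤ C ∧ ‖b x * ‖gradient v x‖ ^ α‖ ≤ C := by
  have c1 : ContinuousOn (fderiv ℝ v) K := (hv.continuousOn_fderiv_of_isOpen hU le_rfl).mono hKU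
  obtain ⟨D, hD⟩ := hK.exists_bound_of_continuousOn c1
  obtain ⟨B, hB⟩ := hbl K hK
  refine ⟨max (C₂ * D ^ (p - 1)) (B * D ^ α), fun x hx => ⟨?_, ?_⟩⟩
  · refine ((hA.2 x (gradient v x)).2).trans (le_trans ?_ (le_max_left _ _))
    rw [grad_norm]
    have := hD x hx
    gcongr
  · refine le_trans ?_ (le_max_right _ _)
    rw [grad_norm, Real.norm_of_nonneg (mul_nonneg (hb0 x) (by positivity))]
    have := hD x hx
    have h2 := hB x hx
    have h3 := hb0 x
    gcongr <;> linarith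

theorem grad_int {n : ℕ} (p α C₁ C₂ : ℝ) (hC₁ : 0 < C₁) (hC₂ : 0 < C₂) (hα₁ : p - 1 ≤ α) 
    (hp : 1 < p) (N : ℕ) (K : ℝ)
    (A : Euc n → Euc n → Euc n) (hA : StructCond A p C₁ C₂)
    (b : Euc n → ℝ) (hbm : Measurable b) (hb0 : ∀ x, 0 ≤ b x) (hbl : LocBdd b)
    (r M ρ k : ℝ) (z : Euc n) (v : Euc n → ℝ) (hr : 0 < r) (hM : 0 < M) (hρ : 0 < ρ) (hρr : ρ < r)
    (hv : ContDiffOn ℝ 1 v (ball z r)) (hsol : IsWeakSol A b α (fun _ => 0) (ball z r) v)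
    (hpw : ∀ᵐ x ∂(volume.restrict (ball z r)), 
      ‖gradient (tst v k z ρ N) x‖ ≤ (2 * (16 * M / r) ^ (1 - p) / C₁) * 
      (⟪A x (gradient v x), gradient (tst v k z ρ N) x⟫ - 
        b x * ‖gradient v x‖ ^ α * tst v k z ρ N x) + 
      {x ∈ ball z ρ | k < v x}.indicator (fun _ => K * (M * (16 * M / r))) x) :
    ∫⁻ x, ‖fderiv ℝ (tst v k z ρ N) x‖ₑ ≤ 
      ENNReal.ofReal (K * (M * (16 * M / r)) * volume.real {x ∈ ball z ρ | k < v x}) := by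
  set φ := tst v k z ρ N with hφ
  set U := ball z r with hU
  set E := {x ∈ ball z ρ | k < v x} with hE
  have hφ1 : ContDiff ℝ 1 φ := tst_C1 v k z ρ r hρ hρr N hv
  have hts : tsupport φ ⊆ closedBall z ρ := tst_tsupport v k z ρ hρ N
  have htU : tsupport φ ⊆ U := hts.trans (closedBall_subset_ball hρr)
  have hφc : HasCompactSupport φ := 
    (isCompact_closedBall z ρ).of_isClosed_subset (isClosed_tsupport _) hts
  have hφ0 : ∀ x, 0 ≤ φ x := by
    intro x
    exact mul_nonneg (by positivity) (pow_nonneg (le_max_right _ _) _)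
  have hFm : Measurable (fun x => A x (gradient v x)) := 
    hA.1.comp (measurable_id.prodMk (grad_measurable v))
  have hGm : Measurable (fun x => b x * ‖gradient v x‖ ^ α) :=
    hbm.mul ((grad_measurable v).norm.pow_const α)
  have hbd := coeff_bdd p α C₁ C₂ hC₂ hα₁ hp A hA b hb0 hbl U isOpen_ball v hv
  have hT := test_C1 U isOpen_ball _ _ hFm hGm hbd (by
    intro ψ h1 h2 h3 h4
    have := hsol ψ h1 h2 h3 h4
    simpa using this) φ hφ1 hφc htU hφ0
  have hi := integrable_test U _ _ hFm hGm hbd φ hφ1 hφc htU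
  have hfi : Integrable (fderiv ℝ φ) := 
    (hφ1.continuous_fderiv one_ne_zero).integrable_of_hasCompactSupport (hφc.fderiv ℝ)
  have hEo : IsOpen E := by
    have : E = ball z ρ ∩ (v ⁻¹' Ioi k) := rfl
    rw [this]
    exact (hv.continuousOn.mono (ball_subset_ball hρr.le)).isOpen_inter_preimage isOpen_ball isOpen_Ioi
  have hEfin : volume E < ⊤ := lt_of_le_of_lt (measure_mono (fun x hx => hx.1)) measure_ball_lt_top
  have hEU : E ⊆ U := fun x hx => ball_subset_ball hρr.le hx.1
  rw [← ofReal_integral_norm_eq_lintegral_enorm hfi]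
  apply ENNReal.ofReal_le_ofReal
  have e1 : ∫ x, ‖fderiv ℝ φ x‖ = ∫ x in U, ‖gradient φ x‖ := by
    rw [← setIntegral_eq_integral_of_forall_compl_eq_zero (s := U)]
    · simp only [grad_norm]
    · intro x hx
      rw [← grad_norm, grad_zero_off φ x (fun h => hx (htU h)), norm_zero]
  have j1 : Integrable (fun x => (2 * (16 * M / r) ^ (1 - p) / C₁) * 
      (⟪A x (gradient v x), gradient φ x⟫ - b x * ‖gradient v x‖ ^ α * φ x)) (volume.restrict U) :=
    (hi.1.sub hi.2).const_mul _
  have j2 : Integrable (E.indicator (fun _ => K * (M * (16 * M / r)))) (volume.restrict U) := by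
    apply Integrable.restrict
    rw [integrable_indicator_iff hEo.measurableSet]
    exact integrableOn_const hEfin.ne
  have j3 : Integrable (fun x => ‖gradient φ x‖) (volume.restrict U) := by
    simp only [grad_norm]
    exact hfi.norm.restrict
  rw [e1]
  refine (integral_mono_ae j3 (j1.add j2) hpw).trans ?_
  have e2 : ∫ x in U, E.indicator (fun _ => K * (M * (16 * M / r))) x = 
      K * (M * (16 * M / r)) * volume.real E := by
    rw [integral_indicator hEo.measurableSet, Measure.restrict_restrict hEo.measurableSet,
      inter_eq_left.2 hEU, setIntegral_const, smul_eq_mul, mul_comm]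
  rw [integral_add' j1 j2, e2, integral_const_mul]
  have : 0 ≤ 2 * (16 * M / r) ^ (1 - p) / C₁ := by positivity
  have := mul_nonpos_of_nonneg_of_nonpos this hT
  linarith

theorem step {n : ℕ} (hn : 2 ≤ n) (v : Euc n → ℝ) (k k' : ℝ) (z : Euc n) (ρ ρ' r D : ℝ) 
    (N : ℕ) (hρ' : 0 < ρ') (hρρ : ρ' < ρ) (hρr : ρ < r) (hk : k < k') (hD : 0 ≤ D)
    (hv : ContDiffOn ℝ 1 v (ball z r))
    (h : ∫⁻ x, ‖fderiv ℝ (tst v k z ρ N) x‖ₑ ≤ ENNReal.ofReal D) :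
    ((k' - k) ^ 2 * (1 - ρ' / ρ) ^ (N + 2)) ^ n * 
      (volume.real {x ∈ ball z ρ' | k' < v x}) ^ (n - 1) ≤ 
    ((lintegralPowLePowLIntegralFDerivConst (volume : Measure (Euc n)) ((n : ℝ) / (n - 1)) : ℝ)) ^ (n - 1) * D ^ n := by
  have hρ : 0 < ρ := by linarith
  have hn1 : (0 : ℝ) < n - 1 := by
    have : (2 : ℝ) ≤ n := by exact_mod_cast hn
    linarith
  set q : ℝ := (n : ℝ) / (n - 1) with hq
  have hq0 : 0 < q := by positivity
  have hconj : Real.HolderConjugate (Module.finrank ℝ (Euc n)) q := by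
    rw [finrank_euclideanSpace_fin]
    exact Real.HolderConjugate.conjExponent (by linarith)
  have hφ1 : ContDiff ℝ 1 (tst v k z ρ N) := tst_C1 v k z ρ r hρ hρr N hv
  have hφc : HasCompactSupport (tst v k z ρ N) := 
    (isCompact_closedBall z ρ).of_isClosed_subset (isClosed_tsupport _) (tst_tsupport v k z ρ hρ N)
  have sob := lintegral_pow_le_pow_lintegral_fderiv (volume : Measure (Euc n)) hφ1 hφc hconj
  set S := lintegralPowLePowLIntegralFDerivConst (volume : Measure (Euc n)) q
  set c := (k' - k) ^ 2 * (1 - ρ' / ρ) ^ (N + 2) with hc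
  have h1ρ : 0 < 1 - ρ' / ρ := by
    have : ρ' / ρ < 1 := by rw [div_lt_one hρ]; exact hρρ
    linarith
  have hk2 : 0 < k' - k := by linarith
  have hc0 : 0 < c := by positivity
  set E := {x ∈ ball z ρ' | k' < v x}
  have hEfin : volume E < ⊤ := lt_of_le_of_lt (measure_mono (fun x hx => hx.1)) measure_ball_lt_top
  have hsub : E ⊆ {x | ENNReal.ofReal c ^ q ≤ ‖tst v k z ρ N x‖ₑ ^ q} := by
    intro x hx
    have h1 : c ≤ tst v k z ρ N x := by
      unfold tst
      rw [hc]
      have a1 : k' - k ≤ max (v x - k) 0 := le_max_of_le_left (by linarith [hx.2])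
      have a2 : 1 - ρ' / ρ ≤ max (1 - ‖x - z‖ ^ 2 / ρ ^ 2) 0 := by
        apply le_max_of_le_left
        have b1 : ‖x - z‖ ≤ ρ' := by
          have := hx.1
          rw [mem_ball, dist_eq_norm] at this; exact this.le
        have b2 : ‖x - z‖ ^ 2 / ρ ^ 2 ≤ ρ' / ρ := by
          rw [div_le_div_iff₀ (by positivity) hρ]
          have : ‖x - z‖ ^ 2 ≤ ρ' ^ 2 := by gcongr
          nlinarith [mul_pos hρ hρ', mul_pos (mul_pos hρ hρ') (sub_pos.2 hρρ)]
        linarith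
      gcongr
    simp only [Set.mem_ofPred_eq]
    gcongr
    rw [Real.enorm_eq_ofReal_abs]
    apply ENNReal.ofReal_le_ofReal
    exact h1.trans (le_abs_self _)
  have m1 : ENNReal.ofReal c ^ q * volume E ≤ S * (ENNReal.ofReal D) ^ q := by
    calc _ ≤ ENNReal.ofReal c ^ q * volume {x | ENNReal.ofReal c ^ q ≤ ‖tst v k z ρ N x‖ₑ ^ q} := by
            gcongr
      _ ≤ _ := mul_meas_ge_le_lintegral₀ (hφ1.continuous.measurable.enorm.pow_const q).aemeasurable _
      _ ≤ _ := sob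
      _ ≤ _ := by gcongr
  have m2 : c ^ q * volume.real E ≤ S * D ^ q := by
    have := ENNReal.toReal_mono (by
      apply ENNReal.mul_ne_top ENNReal.coe_ne_top
      exact ENNReal.rpow_ne_top_of_nonneg hq0.le ENNReal.ofReal_ne_top) m1
    rw [ENNReal.toReal_mul, ENNReal.toReal_mul, ← ENNReal.toReal_rpow, ← ENNReal.toReal_rpow,
      ENNReal.toReal_ofReal hc0.le, ENNReal.toReal_ofReal hD] at this
    exact this
  have m3 : (c ^ q * volume.real E) ^ (n - 1) ≤ (S * D ^ q) ^ (n - 1) := by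
    gcongr
  have hpow : ∀ t : ℝ, 0 ≤ t → (t ^ q) ^ (n - 1) = t ^ n := by
    intro t ht
    rw [← Real.rpow_natCast, ← Real.rpow_mul ht, ← Real.rpow_natCast]
    congr 1
    rw [hq, Nat.cast_sub (by omega)]
    push_cast
    field_simp
  rw [mul_pow, mul_pow, hpow _ hc0.le, hpow _ hD] at m3
  exact m3

/-- Lemma 4.6: if the set where `v > 0` occupies a sufficiently small fraction of the ball
`B_r(z)`, then `sup_{B_{r/8}(z)} v ≤ ε sup_{B_r(z)} v`. -/
theorem stmt_14 (n : ℕ) (hn : 2 ≤ n) (p C₁ C₂ α : ℝ) (hp : 1 < p)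
    (hC₁ : 0 < C₁) (hC₂ : 0 < C₂) (hα₁ : p - 1 ≤ α) (hα₂ : α ≤ p)
    (ε : ℝ) (hε : 0 < ε) :
    ∃ δ : ℝ, 0 < δ ∧
      ∀ (A : Euc n → Euc n → Euc n), StructCond A p C₁ C₂ →
      ∀ (b : Euc n → ℝ), Measurable b → (∀ x, 0 ≤ b x) → LocBdd b →
      ∀ (r : ℝ) (z : Euc n) (v : Euc n → ℝ), 0 < r →
        ContDiffOn ℝ 1 v (Metric.ball z r) →
        (∀ x ∈ Metric.ball z r, 0 ≤ v x) →
        BddAbove (v '' Metric.ball z r) →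
        IsWeakSol A b α (fun _ => 0) (Metric.ball z r) v →
        r ^ (p - α) * sSup (v '' Metric.ball z r) ^ (α - p + 1) *
            essSup b (volume.restrict (Metric.ball z r)) ≤ C₁ / 2 →
        volume {x ∈ Metric.ball z r | 0 < v x} ≤ ENNReal.ofReal (δ * r ^ n) →
        sSup (v '' Metric.ball z (r / 8)) ≤ ε * sSup (v '' Metric.ball z r) := by
  obtain ⟨K, hK, HK⟩ := pw_vec n p α C₁ C₂ hC₁ hC₂ hα₁ hα₂ hp ⌈p⌉₊ 
    (by linarith [Nat.le_ceil p])
  set N := ⌈p⌉₊ with hNdef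
  set S : ℝ := (lintegralPowLePowLIntegralFDerivConst (volume : Measure (Euc n)) 
    ((n : ℝ) / (n - 1)) : ℝ) with hS
  have hS0 : 0 ≤ S := NNReal.coe_nonneg _
  set C : ℝ := (S + 1) * (16 * K) / ε ^ 2 * (4 * 4 ^ (N + 2)) with hC
  have hC0 : 0 < C := by positivity
  set L : ℝ := 4 * 2 ^ (N + 2) with hL
  have hL1 : 1 < L := by
    have : (1 : ℝ) ≤ 2 ^ (N + 2) := one_le_pow₀ (by norm_num)
    linarith
  have hL0 : 0 < L := by linarith
  refine ⟨1 / (C ^ n * L ^ (n * (n - 1))), by positivity, ?_⟩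
  intro A hA b hbm hb0 hbl r z v hr hv hv0 hbdd hsol hsm hvol
  set M := sSup (v '' ball z r) with hM
  have hvM : ∀ x ∈ ball z r, v x ≤ M := fun x hx => le_csSup hbdd (mem_image_of_mem v hx)
  have hzr : z ∈ ball z r := mem_ball_self hr
  have hM0 : 0 ≤ M := (hv0 z hzr).trans (hvM z hzr)
  have hsub8 : ball z (r / 8) ⊆ ball z r := ball_subset_ball (by linarith)
  have hne : (v '' ball z (r / 8)).Nonempty := ⟨v z, mem_image_of_mem v (mem_ball_self (by positivity))⟩
  apply csSup_le hne
  rintro _ ⟨x₀, hx₀, rfl⟩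
  rcases hM0.eq_or_lt with hM1 | hM1
  · rw [← hM1, mul_zero]
    have := hvM x₀ (hsub8 hx₀)
    linarith
  by_contra hcon
  push Not at hcon
  -- the pointwise bound on `b`
  have hbe : ∀ᵐ x ∂(volume.restrict (ball z r)), r ^ (p - α) * M ^ (α - p + 1) * b x ≤ C₁ / 2 := by
    obtain ⟨B, hB⟩ := hbl (closedBall z r) (isCompact_closedBall z r)
    have h1 : IsBoundedUnder (· ≤ ·) (ae (volume.restrict (ball z r))) b := by
      refine ⟨B, ?_⟩
      rw [eventually_map]
      refine (ae_restrict_iff' measurableSet_ball).2 (Eventually.of_forall ?_)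
      exact fun x hx => hB x (ball_subset_closedBall hx)
    filter_upwards [ae_le_essSup h1] with x hx
    refine le_trans ?_ hsm
    gcongr
  set κ : ℕ → ℝ := fun j => ε * M * (1 - (1 / 2) ^ j) with hκ
  set ρ : ℕ → ℝ := fun j => r / 8 * (1 + (1 / 2) ^ j) with hρ
  set E : ℕ → Set (Euc n) := fun j => {x ∈ ball z (ρ j) | κ j < v x} with hE
  have hhalf0 : ∀ j : ℕ, (0 : ℝ) < (1 / 2) ^ j := fun j => by positivity
  have hhalf1 : ∀ j : ℕ, ((1 : ℝ) / 2) ^ j ≤ 1 := fun j => pow_le_one₀ (by norm_num) (by norm_num)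
  have hρ8 : ∀ j, r / 8 ≤ ρ j := fun j => by
    have := mul_pos hr (hhalf0 j); simp only [hρ]; linarith
  have hρ4 : ∀ j, ρ j ≤ r / 4 := fun j => by
    have := mul_le_mul_of_nonneg_left (hhalf1 j) hr.le; simp only [hρ]; linarith
  have hstep : ∀ j, (volume.real (E (j + 1)) / r ^ n) ^ (n - 1) ≤ 
      (C * L ^ j * (volume.real (E j) / r ^ n)) ^ n := by
    intro j
    have hρj0 : 0 < ρ j := by linarith [hρ8 j]
    have hκ0 : 0 ≤ κ j := by
      have := hhalf1 j
      have h2 : (0 : ℝ) ≤ 1 - (1 / 2) ^ j := by linarith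
      simp only [hκ]; positivity
    have hdk : κ (j + 1) - κ j = ε * M * (1 / 2) ^ (j + 1) := by
      simp only [hκ]; ring
    have hdρ : ρ j - ρ (j + 1) = r / 8 * (1 / 2) ^ (j + 1) := by
      simp only [hρ]; ring
    have hρlt : ρ (j + 1) < ρ j := by
      have : 0 < r / 8 * (1 / 2) ^ (j + 1) := by positivity
      linarith
    have hpw : ∀ᵐ x ∂(volume.restrict (ball z r)), 
      ‖gradient (tst v (κ j) z (ρ j) N) x‖ ≤ (2 * (16 * M / r) ^ (1 - p) / C₁) * 
      (⟪A x (gradient v x), gradient (tst v (κ j) z (ρ j) N) x⟫ - 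
        b x * ‖gradient v x‖ ^ α * tst v (κ j) z (ρ j) N x) + 
      {x ∈ ball z (ρ j) | κ j < v x}.indicator (fun _ => K * (M * (16 * M / r))) x := by
      filter_upwards [hbe, ae_restrict_mem measurableSet_ball] with x h1 h2
      exact HK A hA b r M (ρ j) (κ j) z v hr hM1 (hρ8 j) hκ0 hv hvM x h2 (hb0 x) h1
    have hg := grad_int p α C₁ C₂ hC₁ hC₂ hα₁ hp N K A hA b hbm hb0 hbl r M (ρ j) (κ j) z v hr hM1
      hρj0 (by linarith [hρ4 j]) hv hsol hpw
    have hst := step hn v (κ j) (κ (j + 1)) z (ρ j) (ρ (j + 1)) r _ N (by linarith [hρ8 (j + 1)]) hρlt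
      (by linarith [hρ4 j]) (by
        have : 0 < ε * M * (1 / 2) ^ (j + 1) := by positivity
        linarith) (by positivity) hv hg
    rw [← hS, hdk] at hst
    have hr1 : (1 / 2 : ℝ) ^ (j + 2) ≤ 1 - ρ (j + 1) / ρ j := by
      have e : 1 - ρ (j + 1) / ρ j = (r / 8 * (1 / 2) ^ (j + 1)) / ρ j := by
        rw [← hdρ]; field_simp
      rw [e, le_div_iff₀ hρj0]
      have h1 : (1 / 2 : ℝ) ^ (j + 2) * ρ j ≤ (1 / 2 : ℝ) ^ (j + 2) * (r / 4) := by
        have := hρ4 j; gcongr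
      refine h1.trans (le_of_eq ?_)
      ring
    change _ * volume.real (E (j + 1)) ^ (n - 1) ≤ S ^ (n - 1) * (K * (M * (16 * M / r)) * volume.real (E j)) ^ n at hst
    set y' := volume.real (E (j + 1))
    set y := volume.real (E j)
    have hy' : 0 ≤ y' := measureReal_nonneg
    have hy : 0 ≤ y := measureReal_nonneg
    set c : ℝ := (ε * M * (1 / 2) ^ (j + 1)) ^ 2 * ((1 / 2) ^ (j + 2)) ^ (N + 2) with hc
    have hc0 : 0 < c := by positivity
    have h1 : c ^ n * y' ^ (n - 1) ≤ (S + 1) ^ n * (K * (M * (16 * M / r)) * y) ^ n := by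
      calc c ^ n * y' ^ (n - 1) ≤ _ := by rw [hc]; gcongr
        _ ≤ _ := hst
        _ ≤ (S + 1) ^ (n - 1) * (K * (M * (16 * M / r)) * y) ^ n := by gcongr; linarith
        _ ≤ _ := by gcongr; exacts [by linarith, by omega]
    have hCL : C * L ^ j * c = (S + 1) * (16 * K) * M ^ 2 := by
      have e1 : (2 : ℝ) ^ j * (1 / 2) ^ j = 1 := by rw [← mul_pow]; norm_num
      have e2 : C * L ^ j * c = (S + 1) * (16 * K) * M ^ 2 * (ε ^ 2 / ε ^ 2) * 
         (((2 : ℝ) ^ j * (1 / 2) ^ j) ^ 2) * (((2 : ℝ) ^ j * (1 / 2) ^ j) ^ (N + 2)) := by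
        rw [hC, hL, hc]
        have f4 : (4 : ℝ) = 2 ^ 2 := by norm_num
        have f5 : ((1 : ℝ) / 2) ^ (j + 1) = (1 / 2) ^ j * (1 / 2) := pow_succ _ _
        have f6 : ((1 : ℝ) / 2) ^ (j + 2) = (1 / 2) ^ j * (1 / 4) := by rw [pow_add]; norm_num
        have f7 : (4 : ℝ) ^ (N + 2) * (1 / 4) ^ (N + 2) = 1 := by rw [← mul_pow]; norm_num
        have f8 : ((4 : ℝ) * 2 ^ (N + 2)) ^ j = ((2 : ℝ) ^ j) ^ 2 * ((2 : ℝ) ^ j) ^ (N + 2) := by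
          have g8 : (4 : ℝ) ^ j = ((2 : ℝ) ^ j) ^ 2 := by
            rw [← pow_mul, mul_comm, pow_mul]; norm_num
          rw [mul_pow, g8, ← pow_mul 2 (N + 2) j, ← pow_mul 2 j (N + 2), mul_comm (N + 2) j]
        rw [f8, f5, f6, mul_pow ((1 / 2 : ℝ) ^ j) (1 / 4) (N + 2), mul_pow _ _ (N + 2)]
        linear_combination ((S + 1) * (16 * K) / ε ^ 2 * ((2 : ℝ) ^ j) ^ 2 * ((2 : ℝ) ^ j) ^ (N + 2)
          * ε ^ 2 * M ^ 2 * ((1 / 2 : ℝ) ^ j) ^ 2 * ((1 / 2 : ℝ) ^ j) ^ (N + 2)) * f7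
      rw [e2, e1, div_self (by positivity)]; simp
    have hrn : r ^ n ≠ 0 := by positivity
    have hrr : (r ^ n) ^ (n - 1) * r ^ n = (r ^ n) ^ n := by
      rw [← pow_succ]; congr 1; omega
    rw [div_pow, div_le_iff₀ (by positivity)]
    have hcn : 0 < c ^ n := by positivity
    rw [← mul_le_mul_iff_right₀ hcn]
    refine h1.trans (le_of_eq ?_)
    calc (S + 1) ^ n * (K * (M * (16 * M / r)) * y) ^ n 
        = ((S + 1) * (16 * K) * M ^ 2) ^ n * y ^ n / r ^ n := by
          rw [← mul_pow, ← mul_pow, ← div_pow]; congr 1; ring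
      _ = (C * L ^ j * c) ^ n * y ^ n / r ^ n := by rw [hCL]
      _ = c ^ n * (C * L ^ j) ^ n * y ^ n * ((r ^ n) ^ (n - 1) / (r ^ n) ^ n) := by
          rw [← hrr, mul_pow (C * L ^ j) c]; field_simp
      _ = _ := by
          rw [mul_pow (C * L ^ j), div_pow]; ring
  have h0 : volume.real (E 0) / r ^ n ≤ 1 / (C ^ n * L ^ (n * (n - 1))) := by
    rw [div_le_iff₀ (by positivity)]
    apply ENNReal.toReal_le_of_le_ofReal (by positivity)
    refine le_trans (measure_mono ?_) hvol
    intro x hx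
    refine ⟨ball_subset_ball (by linarith [hρ4 0]) hx.1, ?_⟩
    have := hx.2
    simpa [hκ] using this
  have hlim := iter_aux n hn C L hC0 hL1 (fun j => volume.real (E j) / r ^ n) 
    (fun j => by positivity) hstep h0
  set W : Set (Euc n) := ball z (r / 8) ∩ v ⁻¹' Ioi (ε * M) with hW
  have hWo : IsOpen W := (hv.continuousOn.mono hsub8).isOpen_inter_preimage isOpen_ball isOpen_Ioi
  have hWpos : 0 < volume W := hWo.measure_pos volume ⟨x₀, hx₀, hcon⟩
  have hWfin : volume W < ⊤ := lt_of_le_of_lt (measure_mono inter_subset_left) measure_ball_lt_top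
  have hWr : 0 < volume.real W := ENNReal.toReal_pos hWpos.ne' hWfin.ne
  have hWE : ∀ j, volume.real W / r ^ n ≤ volume.real (E j) / r ^ n := by
    intro j
    have hfin : volume (E j) ≠ ⊤ := 
      (lt_of_le_of_lt (measure_mono (fun x hx => hx.1)) (measure_ball_lt_top (x := z) (r := ρ j))).ne
    have : volume.real W ≤ volume.real (E j) := by
      apply measureReal_mono _ hfin
      intro x hx
      refine ⟨ball_subset_ball (hρ8 j) hx.1, ?_⟩
      have h1 : ε * M < v x := hx.2
      have h2 : 0 < ε * M * (1 / 2) ^ j := by positivity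
      have : κ j = ε * M - ε * M * (1 / 2) ^ j := by simp only [hκ]; ring
      rw [this]; linarith
    gcongr
  have := ge_of_tendsto' hlim hWE
  have h3 : 0 < volume.real W / r ^ n := by positivity
  linarith
end
end

section
/- For every real number γ > 0 there exists a constant C > 0, depending only on n, p, α, γ, C₁ and C₂, with the following property: let r > 0, z ∈ ℝⁿ, h ≥ 0, and let v be a bounded nonnegative C¹ function on the open ball B_r(z) which is a solution of div A(x,Dv) + b(x)|Dv|^α ≥ χ_ω(x)·h in B_r(z), where ω = {x ∈ B_r(z) : v(x) > 0} and χ_ω is the characteristic function of ω. If r^{p−α}·(sup_{B_r(z)} v)^{α−p+1}·(ess sup_{B_r(z)} b) ≤ C₁/2, the Lebesgue measure of ω is positive, and v(z) ≥ γ·sup_{B_r(z)} v, then sup_{B_r(z)} v ≥ C·r^{p/(p−1)}·h^{1/(p−1)}. -/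
open MeasureTheory Metric Set Filter
open scoped RealInnerProductSpace ENNReal

noncomputable section

theorem young_aux {p a v ε D : ℝ} (hp : 1 < p) (ha : 0 ≤ a) (hv : 0 ≤ v) (hε : 0 < ε) (hD : 0 ≤ D) :
    D * v * a ^ (p - 1) ≤ ε * a ^ p + ε ^ (1 - p) * D ^ p * v ^ p := by
  have hap : a * a ^ (p - 1) = a ^ p := by
    rw [mul_comm, ← Real.rpow_add_one' ha (by linarith)]; ring_nf
  have h1 : 0 ≤ ε ^ (1 - p) * D ^ p * v ^ p := by positivity
  have h2 : 0 ≤ ε * a ^ p := by positivity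
  rcases le_total (D * v) (ε * a) with h | h
  · have : D * v * a ^ (p - 1) ≤ ε * a * a ^ (p - 1) := by gcongr
    rw [mul_assoc ε, hap] at this
    linarith
  · have h3 : a ≤ D * v / ε := by rw [le_div_iff₀ hε]; linarith
    have h4 : a ^ (p - 1) ≤ (D * v / ε) ^ (p - 1) := Real.rpow_le_rpow ha h3 (by linarith)
    have hX : 0 ≤ D * v := by positivity
    have h5 : D * v * (D * v / ε) ^ (p - 1) = ε ^ (1 - p) * D ^ p * v ^ p := by
      rw [Real.div_rpow hX hε.le, show (1 - p) = -(p - 1) by ring, Real.rpow_neg hε.le,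
        mul_assoc (ε ^ (p - 1))⁻¹, ← Real.mul_rpow hD hv]
      have : (D * v) * (D * v) ^ (p - 1) = (D * v) ^ p := by
        rw [mul_comm, ← Real.rpow_add_one' hX (by linarith)]; ring_nf
      rw [← this]; field_simp
    have : D * v * a ^ (p - 1) ≤ D * v * (D * v / ε) ^ (p - 1) := by gcongr
    linarith

theorem rpow_le_one_add {x t : ℝ} (hx : 0 ≤ x) (ht0 : 0 ≤ t) (ht1 : t ≤ 1) : x ^ t ≤ 1 + x := by
  rcases le_total x 1 with h | h
  · linarith [Real.rpow_le_one hx h ht0]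
  · have := Real.rpow_le_rpow_of_exponent_le h ht1
    rw [Real.rpow_one] at this; linarith

theorem b_aux {p α C₁ B b M r a v : ℝ} (hp : 1 < p) (hα₁ : p - 1 ≤ α) (hα₂ : α ≤ p)
    (hC₁ : 0 < C₁) (hb : b ≤ B) (hM : 0 < M) (hr : 0 < r) (ha : 0 ≤ a)
    (hv : 0 ≤ v) (hvM : v ≤ M) (hB : r ^ (p - α) * M ^ (α - p + 1) * B ≤ C₁ / 2) :
    b * a ^ α * v ≤ C₁ / 2 * (a ^ p + a ^ (p - 1) * v / r) := by
  have ht0 : 0 ≤ α - p + 1 := by linarith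
  have ht1 : α - p + 1 ≤ 1 := by linarith
  have hrp : 0 < r ^ (p - α) := by positivity
  have hMp : 0 < M ^ (α - p + 1) := by positivity
  have hb2 : b ≤ C₁ / 2 / (r ^ (p - α) * M ^ (α - p + 1)) := by
    rw [le_div_iff₀ (by positivity)]
    have : b * (r ^ (p - α) * M ^ (α - p + 1)) ≤ B * (r ^ (p - α) * M ^ (α - p + 1)) := by gcongr
    linarith
  have e1 : a ^ α = a ^ (p - 1) * a ^ (α - p + 1) := by
    rw [← Real.rpow_add_of_nonneg ha (by linarith) ht0]; ring_nf
  have e2 : r ^ (p - α) * r ^ (α - p + 1) = r := by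
    rw [← Real.rpow_add hr]; ring_nf; simp
  have e3 : C₁ / 2 / (r ^ (p - α) * M ^ (α - p + 1)) * a ^ α * v
      = C₁ / 2 * (a ^ (p - 1) * v / r) * (a * r / M) ^ (α - p + 1) := by
    rw [e1, Real.div_rpow (by positivity) hM.le, Real.mul_rpow ha hr.le]
    have e5 : r ^ (α - p + 1) = r / r ^ (p - α) := by rw [eq_div_iff hrp.ne']; linarith
    rw [e5]
    field_simp
  have e4 : (a * r / M) ^ (α - p + 1) ≤ 1 + a * r / M :=
    rpow_le_one_add (by positivity) ht0 ht1
  have hap : a * a ^ (p - 1) = a ^ p := by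
    rw [mul_comm, ← Real.rpow_add_one' ha (by linarith)]; ring_nf
  calc b * a ^ α * v ≤ C₁ / 2 / (r ^ (p - α) * M ^ (α - p + 1)) * a ^ α * v := by gcongr
    _ = C₁ / 2 * (a ^ (p - 1) * v / r) * (a * r / M) ^ (α - p + 1) := e3
    _ ≤ C₁ / 2 * (a ^ (p - 1) * v / r) * (1 + a * r / M) := by gcongr
    _ = C₁ / 2 * (a ^ p * (v / M) + a ^ (p - 1) * v / r) := by
      rw [← hap]; field_simp; ring
    _ ≤ C₁ / 2 * (a ^ p * 1 + a ^ (p - 1) * v / r) := by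
      gcongr
      rw [div_le_one hM]; exact hvM
    _ = _ := by ring

theorem seq_aux {T κ : ℝ} (hT : 0 < T) (hκ : 1 < κ) :
    ∃ a : ℝ, 0 < a ∧ ∀ (Y : ℕ → ℝ) (θ : ℝ), 0 < θ → (∀ j, 0 ≤ Y j) →
      (∀ j, Y (j + 1) ≤ (T * 2 ^ j * Y j) ^ κ) → Y 0 ≤ θ * a → ∀ j, Y j ≤ θ ^ (κ ^ j) := by
  set b : ℝ := 2 ^ (κ / (κ - 1)) with hb
  have hκ1 : 0 < κ - 1 := by linarith
  have hb1 : 1 ≤ b := Real.one_le_rpow (by norm_num) (by positivity)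
  have hb0 : 0 < b := by linarith
  have hbk : b ^ κ = 2 ^ κ * b := by
    rw [hb, ← Real.rpow_mul (by norm_num), ← Real.rpow_add (by norm_num)]
    congr 1; field_simp; ring
  set a' : ℝ := (b * T ^ κ) ^ (-(1 / (κ - 1))) with ha'
  have ha'0 : 0 < a' := by positivity
  set a := min a' 1 with ha
  have ha0 : 0 < a := by positivity
  have ha1 : a ≤ 1 := min_le_right _ _
  have hak : (T * a) ^ κ * b ≤ a := by
    have h1 : a ^ (κ - 1) ≤ (b * T ^ κ)⁻¹ := by
      calc a ^ (κ - 1) ≤ a' ^ (κ - 1) := Real.rpow_le_rpow ha0.le (min_le_left _ _) hκ1.le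
        _ = _ := by
          rw [ha', ← Real.rpow_mul (by positivity), ← Real.rpow_neg_one]
          congr 1; field_simp
    have h2 : a ^ κ = a ^ (κ - 1) * a := by
      rw [← Real.rpow_add_one ha0.ne']; ring_nf
    rw [Real.mul_rpow hT.le ha0.le, h2]
    calc T ^ κ * (a ^ (κ - 1) * a) * b ≤ T ^ κ * ((b * T ^ κ)⁻¹ * a) * b := by gcongr
      _ = a := by field_simp
  refine ⟨a, ha0, fun Y θ hθ hY hrec h0 => ?_⟩
  have key : ∀ j, Y j * b ^ j ≤ θ ^ (κ ^ j) * a := by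
    intro j
    induction j with
    | zero => simpa using h0
    | succ j ih =>
      have h1 : Y j ≤ θ ^ (κ ^ j) * a / b ^ j := by
        rw [le_div_iff₀ (by positivity)]; exact ih
      have h2 : Y (j + 1) ≤ (T * 2 ^ j * (θ ^ (κ ^ j) * a / b ^ j)) ^ κ := by
        refine (hrec j).trans (Real.rpow_le_rpow ?_ ?_ (by linarith))
        · have := hY j; positivity
        · gcongr
      have h3 : (T * 2 ^ j * (θ ^ (κ ^ j) * a / b ^ j)) ^ κ
          = θ ^ (κ ^ (j+1)) * (T * a) ^ κ * (((2:ℝ) ^ κ) ^ j / (b ^ κ) ^ j) := by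
        rw [show T * 2 ^ j * (θ ^ (κ ^ j) * a / b ^ j) = θ ^ (κ ^ j) * (T * a) * (2 ^ j / b ^ j) by ring,
          Real.mul_rpow (by positivity) (by positivity), Real.mul_rpow (by positivity) (by positivity),
          Real.div_rpow (by positivity) (by positivity), ← Real.rpow_mul hθ.le, ← pow_succ]
        congr 2
        · rw [← Real.rpow_natCast, ← Real.rpow_natCast, ← Real.rpow_mul (by norm_num), ← Real.rpow_mul (by norm_num), mul_comm]
        · rw [← Real.rpow_natCast, ← Real.rpow_natCast, ← Real.rpow_mul hb0.le, ← Real.rpow_mul hb0.le, mul_comm]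
      rw [h3, hbk, mul_pow] at h2
      have h4 : θ ^ (κ ^ (j+1)) * (T * a) ^ κ * (((2:ℝ) ^ κ) ^ j / (((2:ℝ) ^ κ) ^ j * b ^ j)) * b ^ (j+1)
        = θ ^ (κ ^ (j+1)) * ((T * a) ^ κ * b) := by
        rw [pow_succ b]; field_simp
      calc Y (j+1) * b ^ (j+1) ≤ _ := mul_le_mul_of_nonneg_right h2 (by positivity)
        _ = _ := h4
        _ ≤ _ := by gcongr
  intro j
  have h1 : Y j ≤ Y j * b ^ j := le_mul_of_one_le_right (hY j) (one_le_pow₀ hb1)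
  have h2 : θ ^ (κ ^ j) * a ≤ θ ^ (κ ^ j) := mul_le_of_le_one_right (by positivity) ha1
  linarith [key j]


open scoped Convolution Pointwise in
theorem moll_aux {n : ℕ} {φ : Euc n → ℝ} {z : Euc n} {R R' ε : ℝ} (hφ : ContDiff ℝ 1 φ)
    (hs : tsupport φ ⊆ closedBall z R) (hRR : R < R') (h0 : ∀ x, 0 ≤ φ x) (hε : 0 < ε) :
    ∃ ψ : Euc n → ℝ, ContDiff ℝ (⊤ : ℕ∞) ψ ∧ tsupport ψ ⊆ closedBall z R' ∧ (∀ x, 0 ≤ ψ x) ∧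
      (∀ x, |ψ x - φ x| ≤ ε) ∧ ∀ x, ‖fderiv ℝ ψ x - fderiv ℝ φ x‖ ≤ ε := by
  have hc : HasCompactSupport φ := (isCompact_closedBall z R).of_isClosed_subset (isClosed_tsupport φ) hs
  have hu1 : UniformContinuous φ := hc.uniformContinuous_of_continuous hφ.continuous
  have hcd : Continuous (fderiv ℝ φ) := hφ.continuous_fderiv (by norm_num)
  have hu2 : UniformContinuous (fderiv ℝ φ) :=
    (hc.fderiv ℝ).uniformContinuous_of_continuous hcd
  obtain ⟨δ1, hδ1, H1⟩ := Metric.uniformContinuous_iff.1 hu1 ε hε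
  obtain ⟨δ2, hδ2, H2⟩ := Metric.uniformContinuous_iff.1 hu2 ε hε
  set δ := min (min δ1 δ2) (R' - R) with hδ
  have hδ0 : 0 < δ := by
    have : 0 < R' - R := by linarith
    positivity
  let f : ContDiffBump (0 : Euc n) := ⟨δ / 2, δ, by positivity, by linarith⟩
  have hli : LocallyIntegrable φ volume := hφ.continuous.locallyIntegrable
  have hcf : HasCompactSupport (f.normed (volume : Measure (Euc n))) := f.hasCompactSupport_normed
  refine ⟨f.normed volume ⋆[ContinuousLinearMap.lsmul ℝ ℝ, volume] φ, ?_, ?_, ?_, ?_, ?_⟩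
  · exact hcf.contDiff_convolution_left _ f.contDiff_normed hli
  · refine closure_minimal ?_ isClosed_closedBall
    refine (support_convolution_subset _).trans ?_
    rintro _ ⟨x, hx, y, hy, rfl⟩
    rw [f.support_normed_eq] at hx
    have h1 : dist y z ≤ R := hs (subset_closure hy)
    have h2 : ‖x‖ < δ := by simpa using hx
    have h3 : δ ≤ R' - R := min_le_right _ _
    simp only [mem_closedBall]
    calc dist (x + y) z ≤ ‖x‖ + dist y z := by
          rw [dist_eq_norm, dist_eq_norm, add_sub_assoc]; exact norm_add_le _ _
      _ ≤ R' := by linarith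
  · intro x
    exact integral_nonneg fun t => mul_nonneg (f.nonneg_normed t) (h0 _)
  · intro x
    rw [← Real.dist_eq]
    refine f.dist_normed_convolution_le hφ.continuous.aestronglyMeasurable fun y hy => ?_
    refine (H1 ?_).le
    have : δ ≤ δ1 := (min_le_left _ _).trans (min_le_left _ _)
    exact lt_of_lt_of_le hy this
  · intro x
    have hd := hc.hasFDerivAt_convolution_right (ContinuousLinearMap.lsmul ℝ ℝ)
      (f.continuous_normed (μ := volume)).locallyIntegrable hφ x (μ := volume)
    rw [hd.fderiv]
    have e : (f.normed volume ⋆[(ContinuousLinearMap.lsmul ℝ ℝ : ℝ →L[ℝ] ℝ →L[ℝ] ℝ).precompR (Euc n), volume] fderiv ℝ φ) x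
      = (f.normed volume ⋆[ContinuousLinearMap.lsmul ℝ ℝ, volume] fderiv ℝ φ) x := by
      unfold convolution
      rfl
    rw [e, ← dist_eq_norm]
    refine f.dist_normed_convolution_le hcd.aestronglyMeasurable fun y hy => ?_
    refine (H2 ?_).le
    have : δ ≤ δ2 := (min_le_left _ _).trans (min_le_right _ _)
    exact lt_of_lt_of_le hy this

/-- gluing -/
theorem glue_aux {n : ℕ} {f : Euc n → ℝ} {z : Euc n} {R r : ℝ} (hR : R < r)
    (hf : ContDiffOn ℝ 1 f (ball z r)) (h0 : ∀ x, x ∉ closedBall z R → f x = 0) :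
    ContDiff ℝ 1 f := by
  rw [contDiff_iff_contDiffAt]
  intro x
  by_cases hx : x ∈ ball z r
  · exact (hf x hx).contDiffAt (isOpen_ball.mem_nhds hx)
  · have hx' : x ∈ (closedBall z R)ᶜ := by
      simp only [mem_ball, not_lt, mem_compl_iff, mem_closedBall, not_le] at *
      linarith
    have : f =ᶠ[nhds x] fun _ => 0 := by
      filter_upwards [isClosed_closedBall.isOpen_compl.mem_nhds hx'] with y hy
      exact h0 y hy
    exact contDiffAt_const.congr_of_eventuallyEq this

theorem tsupp_aux {n : ℕ} {f : Euc n → ℝ} {z : Euc n} {R : ℝ} (h0 : ∀ x, x ∉ closedBall z R → f x = 0) :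
    tsupport f ⊆ closedBall z R := by
  refine closure_minimal ?_ isClosed_closedBall
  intro x hx
  by_contra h
  exact hx (h0 x h)


theorem dct_aux {n : ℕ} {E' : Type*} [NormedAddCommGroup E'] [InnerProductSpace ℝ E']
    [SecondCountableTopologyEither (Euc n) E']
    {F : Euc n → E'} {K U : Set (Euc n)} (hU : MeasurableSet U)
    (hKU : K ⊆ U) (hF : IntegrableOn F K) {Φ : Euc n → E'} {Ψ : ℕ → Euc n → E'}
    (hc : ∀ k, Continuous (Ψ k)) (hd : ∀ k x, ‖Ψ k x - Φ x‖ ≤ 1 / ((k : ℝ) + 1))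
    {C : ℝ} (hC : ∀ x, ‖Φ x‖ ≤ C) (h0 : ∀ x, x ∉ K → Φ x = 0) (h0' : ∀ k x, x ∉ K → Ψ k x = 0) :
    Tendsto (fun k => ∫ x in U, ⟪F x, Ψ k x⟫) atTop (nhds (∫ x in U, ⟪F x, Φ x⟫)) := by
  have e1 : ∀ k, ∫ x in U, ⟪F x, Ψ k x⟫ = ∫ x in K, ⟪F x, Ψ k x⟫ := fun k =>
    setIntegral_eq_of_subset_of_forall_sdiff_eq_zero hU hKU fun x hx => by
      rw [h0' k x hx.2, inner_zero_right]
  have e2 : ∫ x in U, ⟪F x, Φ x⟫ = ∫ x in K, ⟪F x, Φ x⟫ :=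
    setIntegral_eq_of_subset_of_forall_sdiff_eq_zero hU hKU fun x hx => by
      rw [h0 x hx.2, inner_zero_right]
  simp_rw [e1]; rw [e2]
  refine tendsto_integral_of_dominated_convergence (fun x => ‖F x‖ * (C + 1)) ?_ ?_ ?_ ?_
  · intro k
    exact hF.aestronglyMeasurable.inner (hc k).aestronglyMeasurable
  · exact hF.norm.mul_const _
  · intro k
    filter_upwards with x
    refine (norm_inner_le_norm _ _).trans ?_
    gcongr
    have h1 : ‖Ψ k x‖ ≤ ‖Ψ k x - Φ x‖ + ‖Φ x‖ := by
      simpa using norm_add_le (Ψ k x - Φ x) (Φ x)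
    have h2 : 1 / ((k : ℝ) + 1) ≤ 1 := by
      rw [div_le_one (by positivity)]; linarith [(Nat.cast_nonneg k : (0:ℝ) ≤ k)]
    linarith [hd k x, hC x]
  · filter_upwards with x
    refine Tendsto.inner tendsto_const_nhds ?_
    rw [tendsto_iff_norm_sub_tendsto_zero]
    exact squeeze_zero (fun k => norm_nonneg _) (fun k => hd k x) tendsto_one_div_add_atTop_nhds_zero_nat

theorem measurable_gradient_aux {n : ℕ} (v : Euc n → ℝ) : Measurable (gradient v) := by
  unfold gradient
  exact (InnerProductSpace.toDual ℝ (Euc n)).symm.continuous.measurable.comp (measurable_fderiv ℝ v)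

theorem norm_gradient_aux {n : ℕ} (v : Euc n → ℝ) (x : Euc n) : ‖gradient v x‖ = ‖fderiv ℝ v x‖ := by
  unfold gradient
  exact LinearIsometryEquiv.norm_map _ _

theorem inner_gradient_aux {n : ℕ} (v : Euc n → ℝ) (x y : Euc n) : ⟪gradient v x, y⟫ = fderiv ℝ v x y := by
  unfold gradient
  exact InnerProductSpace.toDual_symm_apply

theorem continuousOn_norm_gradient_aux {n : ℕ} {v : Euc n → ℝ} {U : Set (Euc n)} (hU : IsOpen U)
    (hv : ContDiffOn ℝ 1 v U) : ContinuousOn (fun x => ‖gradient v x‖) U := by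
  simp_rw [norm_gradient_aux]
  exact (hv.continuousOn_fderiv_of_isOpen hU (by norm_num)).norm

theorem integrableOn_of_bdd_aux {n : ℕ} {E' : Type*} [NormedAddCommGroup E'] {F : Euc n → E'}
    {K : Set (Euc n)} (hK : IsCompact K) (hF : AEStronglyMeasurable F (volume.restrict K)) {C : ℝ}
    (hC : ∀ x ∈ K, ‖F x‖ ≤ C) : IntegrableOn F K := by
  haveI : IsFiniteMeasure (volume.restrict K) := ⟨by simpa using hK.measure_lt_top⟩
  exact Integrable.of_bound hF C
    (by filter_upwards [ae_restrict_mem hK.measurableSet] with x hx using hC x hx)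

theorem integ_terms_aux {n : ℕ} {A : Euc n → Euc n → Euc n} {p C₁ C₂ α : ℝ} (hp : 1 < p)
    (hα : p - 1 ≤ α) (hC₂ : 0 < C₂)
    (hA : StructCond A p C₁ C₂) {b : Euc n → ℝ} (hb : Measurable b) (hb0 : ∀ x, 0 ≤ b x)
    (hbl : LocBdd b) {v : Euc n → ℝ} {U K : Set (Euc n)} (hU : IsOpen U) (hK : IsCompact K) (hKU : K ⊆ U)
    (hv : ContDiffOn ℝ 1 v U) :
    IntegrableOn (fun x => A x (gradient v x)) K ∧ IntegrableOn (fun x => b x * ‖gradient v x‖ ^ α) K := by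
  obtain ⟨D, hD⟩ := hK.exists_bound_of_continuousOn ((continuousOn_norm_gradient_aux hU hv).mono hKU)
  simp only [norm_norm] at hD
  obtain ⟨B, hB⟩ := hbl K hK
  have hg := measurable_gradient_aux v
  constructor
  · refine integrableOn_of_bdd_aux hK ?_ (C := C₂ * D ^ (p - 1)) ?_
    · exact (hA.1.comp (measurable_id.prodMk hg)).aestronglyMeasurable
    · intro x hx
      refine ((hA.2 x _).2).trans ?_
      have := hD x hx
      have : 0 ≤ p - 1 := by linarith
      gcongr
  · refine integrableOn_of_bdd_aux hK ?_ (C := B * D ^ α) ?_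
    · exact (hb.mul (hg.norm.pow_const α)).aestronglyMeasurable
    · intro x hx
      rw [norm_mul, Real.norm_of_nonneg (hb0 x), Real.norm_of_nonneg (by positivity)]
      have h1 := hD x hx
      have h2 : 0 ≤ α := by linarith
      have h3 := hB x hx
      have h4 := hb0 x
      gcongr
      linarith

theorem weak_C1 {n : ℕ} {A : Euc n → Euc n → Euc n} {p C₁ C₂ α : ℝ} (hp : 1 < p)
    (hα : p - 1 ≤ α) (hC₂ : 0 < C₂)
    (hA : StructCond A p C₁ C₂) {b : Euc n → ℝ} (hb : Measurable b) (hb0 : ∀ x, 0 ≤ b x)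
    (hbl : LocBdd b) {v a : Euc n → ℝ} {z : Euc n} {R r : ℝ} (hR : R < r)
    (hv : ContDiffOn ℝ 1 v (ball z r)) (ha : ∀ K, IsCompact K → K ⊆ ball z r → IntegrableOn a K)
    (hw : IsWeakSol A b α a (ball z r) v) {φ : Euc n → ℝ}
    (hφ : ContDiff ℝ 1 φ) (hs : tsupport φ ⊆ closedBall z R) (h0 : ∀ x, 0 ≤ φ x) :
    (∫ x in ball z r, a x * φ x) ≤
      (-(∫ x in ball z r, ⟪A x (gradient v x), gradient φ x⟫)) +
        ∫ x in ball z r, b x * ‖gradient v x‖ ^ α * φ x := by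
  set R' := (R + r) / 2 with hR'
  set K := closedBall z R' with hKdef
  have hK : IsCompact K := isCompact_closedBall _ _
  have hKU : K ⊆ ball z r := closedBall_subset_ball (by linarith)
  obtain ⟨i1, i2⟩ := integ_terms_aux hp hα hC₂ hA hb hb0 hbl isOpen_ball hK hKU hv
  have i3 := ha K hK hKU
  have hsK : tsupport φ ⊆ K := hs.trans (closedBall_subset_closedBall (by linarith))
  have hcs : HasCompactSupport φ := hK.of_isClosed_subset (isClosed_tsupport φ) hsK
  choose ψ h1 h2 h3 h4 h5 using fun k : ℕ =>
    moll_aux hφ hs (show R < R' by linarith) h0 (show (0:ℝ) < 1 / ((k : ℝ) + 1) by positivity)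
  obtain ⟨Cφ, hCφ⟩ := hcs.exists_bound_of_continuous hφ.continuous
  obtain ⟨Cd, hCd⟩ := (hcs.fderiv ℝ).exists_bound_of_continuous (hφ.continuous_fderiv (by norm_num))
  have z1 : ∀ x, x ∉ K → φ x = 0 := fun x hx => image_eq_zero_of_notMem_tsupport fun h => hx (hsK h)
  have z2 : ∀ k x, x ∉ K → ψ k x = 0 := fun k x hx => image_eq_zero_of_notMem_tsupport fun h => hx (h2 k h)
  have g0 : ∀ (f : Euc n → ℝ) x, x ∉ tsupport f → gradient f x = 0 := by
    intro f x hx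
    have : fderiv ℝ f x = 0 := by
      by_contra h
      exact hx (support_fderiv_subset ℝ h)
    unfold gradient
    rw [this, map_zero]
  have t1 := dct_aux measurableSet_ball hKU i3 (Ψ := ψ) (Φ := φ)
    (fun k => (h1 k).continuous) (fun k x => by rw [Real.norm_eq_abs]; exact h4 k x) hCφ z1 z2
  have t2 := dct_aux measurableSet_ball hKU i2 (Ψ := ψ) (Φ := φ)
    (fun k => (h1 k).continuous) (fun k x => by rw [Real.norm_eq_abs]; exact h4 k x) hCφ z1 z2
  have t3 := dct_aux measurableSet_ball hKU i1 (Ψ := fun k => gradient (ψ k)) (Φ := gradient φ)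
    (fun k => by
      unfold gradient
      exact (InnerProductSpace.toDual ℝ (Euc n)).symm.continuous.comp
        ((h1 k).continuous_fderiv (by simp)))
    (fun k x => by
      unfold gradient
      rw [← map_sub, LinearIsometryEquiv.norm_map]; exact h5 k x)
    (C := Cd) (fun x => by rw [norm_gradient_aux]; exact hCd x)
    (fun x hx => g0 _ _ fun h => hx (hsK h)) (fun k x hx => g0 _ _ fun h => hx (h2 k h))
  have conv : ∀ x y : ℝ, ⟪x, y⟫ = x * y := fun x y => by simp [mul_comm]
  simp only [conv] at t1 t2
  refine le_of_tendsto_of_tendsto' t1 (t3.neg.add t2) fun k => ?_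
  exact hw (ψ k) (h1 k) (hK.of_isClosed_subset (isClosed_tsupport _) (h2 k)) ((h2 k).trans hKU) (h3 k)


theorem pointwise_aux {p C₁ C₂ β m κ₁ L r a v e X Z bt : ℝ} (hp : 1 < p) (hC₁ : 0 < C₁) (hC₂ : 0 < C₂)
    (hβ : 1 ≤ β) (hm : 2 * p ≤ m) (hmβ : m ≤ κ₁ * β) (hr : 0 < r) (hL : 1 / r ≤ L)
    (ha : 0 ≤ a) (hv : 0 ≤ v) (he : 0 ≤ e) (he1 : e ≤ 1)
    (hX : C₁ * a ^ p ≤ X) (hZ : -(L * (C₂ * a ^ (p - 1))) ≤ Z)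
    (hbt : bt * v ≤ C₁ / 2 * (a ^ p + a ^ (p - 1) * v / r)) :
    -(β * v ^ (β - 1) * e ^ m * X + m * v ^ β * e ^ (m - 1) * Z) + bt * (v ^ β * e ^ m) ≤
      -(C₁ * β / 4) * (v ^ (β - 1) * a ^ p * e ^ m) +
        (C₁ / 4) ^ (1 - p) * ((C₁ + C₂) * κ₁) ^ p * β * L ^ p * (v ^ (β + p - 1) * e ^ (m - p)) := by
  have hL0 : 0 < L := lt_of_lt_of_le (by positivity) hL
  set V := v ^ (β - 1) with hV
  set E := e ^ (m - p) with hE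
  have hV0 : 0 ≤ V := by positivity
  have hE0 : 0 ≤ E := by positivity
  have e1 : v ^ β = V * v := by
    rw [hV, ← Real.rpow_add_one' hv (by linarith)]; ring_nf
  have e2 : e ^ m = E * e ^ p := by
    rw [hE, ← Real.rpow_add_of_nonneg he (by linarith) (by linarith)]; ring_nf
  have e3 : e ^ (m - 1) = E * e ^ (p - 1) := by
    rw [hE, ← Real.rpow_add_of_nonneg he (by linarith) (by linarith)]; ring_nf
  have e4 : v ^ (β + p - 1) = V * v ^ p := by
    rw [hV, ← Real.rpow_add_of_nonneg hv (by linarith) (by linarith)]; ring_nf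
  have e5 : e ^ p ≤ e ^ (p - 1) := by
    have : e ^ p = e * e ^ (p - 1) := by
      rw [mul_comm, ← Real.rpow_add_one' he (by linarith)]; ring_nf
    rw [this]
    exact mul_le_of_le_one_left (by positivity) he1
  have hm0 : 0 < m := by linarith
  have hκ : 0 < κ₁ := by
    by_contra h
    push Not at h
    nlinarith
  have hY := young_aux hp (mul_nonneg ha he) hv (show 0 < C₁ * β / 4 by positivity)
    (show 0 ≤ (C₁ + C₂) * m * L by positivity)
  rw [Real.mul_rpow ha he, Real.mul_rpow ha he] at hY
  have hK : (C₁ * β / 4) ^ (1 - p) * ((C₁ + C₂) * m * L) ^ p ≤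
      (C₁ / 4) ^ (1 - p) * ((C₁ + C₂) * κ₁) ^ p * β * L ^ p := by
    calc (C₁ * β / 4) ^ (1 - p) * ((C₁ + C₂) * m * L) ^ p ≤
        (C₁ * β / 4) ^ (1 - p) * ((C₁ + C₂) * (κ₁ * β) * L) ^ p := by gcongr
      _ = (C₁ / 4) ^ (1 - p) * ((C₁ + C₂) * κ₁) ^ p * (β ^ (1 - p) * β ^ p) * L ^ p := by
        rw [show C₁ * β / 4 = C₁ / 4 * β by ring, Real.mul_rpow (by positivity) (by positivity),
          show (C₁ + C₂) * (κ₁ * β) * L = (C₁ + C₂) * κ₁ * β * L by ring,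
          Real.mul_rpow (by positivity) (by positivity), Real.mul_rpow (by positivity) (by positivity)]
        ring
      _ = _ := by
        rw [← Real.rpow_add (by linarith)]; simp
  set ap := a ^ p
  set aq := a ^ (p - 1)
  set ep := e ^ p
  set eq := e ^ (p - 1)
  have hap : 0 ≤ ap := by positivity
  have haq : 0 ≤ aq := by positivity
  have hep : 0 ≤ ep := by positivity
  have heq : 0 ≤ eq := by positivity
  have hvp : 0 ≤ v ^ p := by positivity
  rw [e1, e2, e3, e4]
  -- reduce to bracket
  have b1 : -(β * ep * X) ≤ -(β * C₁ * (ap * ep)) := by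
    have := mul_le_mul_of_nonneg_left hX (show 0 ≤ β * ep by positivity)
    linarith
  have b2 : -(m * v * eq * Z) ≤ C₂ * m * L * v * (aq * eq) := by
    have := mul_le_mul_of_nonneg_left hZ (show 0 ≤ m * v * eq by positivity)
    linarith
  have b3 : bt * v * ep ≤ C₁ / 2 * β * (ap * ep) + C₁ * m * L * v * (aq * eq) := by
    calc bt * v * ep ≤ C₁ / 2 * (ap + aq * v / r) * ep := by gcongr
      _ = C₁ / 2 * 1 * (ap * ep) + (C₁ / 2) * 1 * (1 / r) * v * (aq * ep) := by ring
      _ ≤ C₁ / 2 * β * (ap * ep) + C₁ * m * L * v * (aq * eq) := by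
        have : C₁ / 2 ≤ C₁ := by linarith
        gcongr
        linarith
  have b4 : -(β * ep * X) - (m * v * eq * Z) + bt * v * ep ≤ -(C₁ * β / 4) * (ap * ep) +
      (C₁ / 4) ^ (1 - p) * ((C₁ + C₂) * κ₁) ^ p * β * L ^ p * v ^ p := by
    have := mul_le_mul_of_nonneg_right hK hvp
    nlinarith
  have b5 := mul_le_mul_of_nonneg_left b4 (mul_nonneg hV0 hE0)
  linarith

theorem cutoff_aux (n : ℕ) : ∃ S : ℝ, 1 ≤ S ∧ ∀ (z : Euc n) (r : ℝ), 0 < r → ∃ η : Euc n → ℝ,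
    ContDiff ℝ 1 η ∧ (∀ x, 0 ≤ η x) ∧ (∀ x, η x ≤ 1) ∧ (∀ x ∈ ball z (r / 4), η x = 1) ∧
    (∀ x, x ∉ closedBall z (r / 2) → η x = 0) ∧ ∀ x, ‖fderiv ℝ η x‖ ≤ S / r := by
  let f : ContDiffBump (0 : Euc n) := ⟨1 / 4, 1 / 2, by norm_num, by norm_num⟩
  have hf : ContDiff ℝ 1 f := f.contDiff
  obtain ⟨S₀, hS₀⟩ := (f.hasCompactSupport.fderiv ℝ).exists_bound_of_continuous
    (hf.continuous_fderiv (by norm_num))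
  refine ⟨max S₀ 1, le_max_right _ _, fun z r hr => ?_⟩
  have hn : ∀ x : Euc n, ‖r⁻¹ • (x - z)‖ = dist x z / r := by
    intro x
    rw [norm_smul, norm_inv, Real.norm_of_nonneg hr.le, dist_eq_norm]; field_simp
  refine ⟨fun x => f (r⁻¹ • (x - z)), ?_, fun x => f.nonneg, fun x => f.le_one, ?_, ?_, ?_⟩
  · exact hf.comp (by fun_prop)
  · intro x hx
    refine f.one_of_mem_closedBall ?_
    simp only [mem_closedBall, dist_zero_right, hn]
    rw [div_le_iff₀ hr]
    rw [mem_ball] at hx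
    change dist x z ≤ 1 / 4 * r
    linarith
  · intro x hx
    refine f.zero_of_le_dist ?_
    simp only [mem_closedBall, dist_zero_right, hn, not_le] at hx ⊢
    change 1 / 2 ≤ _
    rw [le_div_iff₀ hr]; linarith
  · intro x
    have h1 : HasFDerivAt (fun x : Euc n => r⁻¹ • (x - z)) (r⁻¹ • ContinuousLinearMap.id ℝ (Euc n)) x :=
      ((hasFDerivAt_id x).sub_const z).const_smul r⁻¹
    have h2 : HasFDerivAt f (fderiv ℝ f (r⁻¹ • (x - z))) (r⁻¹ • (x - z)) :=
      (hf.differentiable (by norm_num) _).hasFDerivAt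
    have h3 := h2.comp x h1
    have h4 : fderiv ℝ (fun x => f (r⁻¹ • (x - z))) x = r⁻¹ • fderiv ℝ f (r⁻¹ • (x - z)) := by
      rw [show (fun x => f (r⁻¹ • (x - z))) = f ∘ (fun x : Euc n => r⁻¹ • (x - z)) from rfl, h3.fderiv]
      ext y; simp
    rw [h4, norm_smul, norm_inv, Real.norm_of_nonneg hr.le]
    rw [div_eq_inv_mul]
    gcongr
    exact (hS₀ _).trans (le_max_left _ _)

structure Setup {n : ℕ} (A : Euc n → Euc n → Euc n) (b v η : Euc n → ℝ) (z : Euc n)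
    (r h M p C₁ C₂ α S : ℝ) : Prop where
  hp : 1 < p
  hC₁ : 0 < C₁
  hC₂ : 0 < C₂
  hα₁ : p - 1 ≤ α
  hα₂ : α ≤ p
  hr : 0 < r
  hh : 0 ≤ h
  hM : 0 < M
  hS : 1 ≤ S
  hA : StructCond A p C₁ C₂
  hb : Measurable b
  hb0 : ∀ x, 0 ≤ b x
  hbl : LocBdd b
  hv : ContDiffOn ℝ 1 v (ball z r)
  hv0 : ∀ x ∈ ball z r, 0 ≤ v x
  hvM : ∀ x ∈ ball z r, v x ≤ M
  hw : IsWeakSol A b α (Set.indicator {x ∈ ball z r | 0 < v x} fun _ => h) (ball z r) v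
  hB : ∃ B, r ^ (p - α) * M ^ (α - p + 1) * B ≤ C₁ / 2 ∧ ∀ᵐ x ∂(volume.restrict (ball z r)), b x ≤ B
  hη1 : ContDiff ℝ 1 η
  hη0 : ∀ x, 0 ≤ η x
  hηle : ∀ x, η x ≤ 1
  hηs : ∀ x, x ∉ closedBall z (r / 2) → η x = 0
  hηd : ∀ x, ‖fderiv ℝ η x‖ ≤ S / r

section

variable {n : ℕ} {A : Euc n → Euc n → Euc n} {b v η : Euc n → ℝ} {z : Euc n}
    {r h M p C₁ C₂ α S : ℝ}

theorem Setup.zero_off (H : Setup A b v η z r h M p C₁ C₂ α S) {m : ℝ} (hm : 0 < m) {x : Euc n}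
    (hx : x ∉ closedBall z (r / 2)) : η x ^ m = 0 := by
  rw [H.hηs x hx, Real.zero_rpow hm.ne']

theorem Setup.test_contDiff (H : Setup A b v η z r h M p C₁ C₂ α S) {β m : ℝ} (hβ : 1 ≤ β)
    (hm : 1 ≤ m) : ContDiff ℝ 1 (fun x => v x ^ β * η x ^ m) := by
  have hr := H.hr
  refine glue_aux (z := z) (R := r / 2) (r := r) (by linarith) ?_ ?_
  · have h1 : ContDiffOn ℝ ((1:ℕ) : WithTop ℕ∞) (fun x => v x ^ β) (ball z r) :=
      ContDiffOn.rpow_const_of_le (by simpa using H.hv) (by simpa using hβ)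
    have h2 : ContDiffOn ℝ ((1:ℕ) : WithTop ℕ∞) (fun x => η x ^ m) (ball z r) :=
      ContDiffOn.rpow_const_of_le (by simpa using H.hη1.contDiffOn) (by simpa using hm)
    simpa using h1.mul h2
  · intro x hx
    rw [H.zero_off (by linarith) hx, mul_zero]

theorem Setup.test_tsupport (H : Setup A b v η z r h M p C₁ C₂ α S) {β m : ℝ} 
    (hm : 1 ≤ m) : tsupport (fun x => v x ^ β * η x ^ m) ⊆ closedBall z (r / 2) :=
  tsupp_aux fun x hx => by rw [H.zero_off (by linarith) hx, mul_zero]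

theorem Setup.test_nonneg (H : Setup A b v η z r h M p C₁ C₂ α S) {β m : ℝ} 
    (hm : 1 ≤ m) (x : Euc n) : 0 ≤ v x ^ β * η x ^ m := by
  have hr := H.hr
  by_cases hx : x ∈ closedBall z (r / 2)
  · have := H.hv0 x (closedBall_subset_ball (by linarith) hx)
    have := H.hη0 x
    positivity
  · rw [H.zero_off (by linarith) hx, mul_zero]

theorem Setup.test_fderiv (H : Setup A b v η z r h M p C₁ C₂ α S) {β m : ℝ} (hβ : 1 ≤ β)
    (hm : 1 ≤ m) {x : Euc n} (hx : x ∈ ball z r) :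
    fderiv ℝ (fun x => v x ^ β * η x ^ m) x =
      (β * v x ^ (β - 1) * η x ^ m) • fderiv ℝ v x + (m * v x ^ β * η x ^ (m - 1)) • fderiv ℝ η x := by
  have h1 : HasFDerivAt v (fderiv ℝ v x) x :=
    (((H.hv x hx).contDiffAt (isOpen_ball.mem_nhds hx)).differentiableAt (by norm_num)).hasFDerivAt
  have h2 : HasFDerivAt η (fderiv ℝ η x) x := (H.hη1.differentiable (by norm_num) x).hasFDerivAt
  have h3 := (h1.rpow_const (p := β) (Or.inr hβ)).mul (h2.rpow_const (p := m) (Or.inr hm))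
  rw [show (fun x => v x ^ β * η x ^ m) = (fun x => v x ^ β) * fun x => η x ^ m from rfl, h3.fderiv]
  ext y
  simp
  ring

theorem Setup.integrableOn (H : Setup A b v η z r h M p C₁ C₂ α S) {f : Euc n → ℝ}
    (hf : ContinuousOn f (ball z r)) (h0 : ∀ x, x ∉ closedBall z (r / 2) → f x = 0) :
    IntegrableOn f (ball z r) := by
  have hr := H.hr
  have h1 : IntegrableOn f (closedBall z (r / 2)) :=
    (hf.mono (closedBall_subset_ball (by linarith))).integrableOn_compact (isCompact_closedBall _ _)
  exact h1.of_forall_sdiff_eq_zero measurableSet_ball fun x hx => h0 x hx.2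


theorem Setup.int1 (H : Setup A b v η z r h M p C₁ C₂ α S) {β m : ℝ} (hβ : 0 ≤ β) (hm : 0 < m) :
    IntegrableOn (fun x => v x ^ β * η x ^ m) (ball z r) := by
  refine H.integrableOn ?_ fun x hx => by rw [H.zero_off hm hx, mul_zero]
  exact (H.hv.continuousOn.rpow_const fun x _ => Or.inr hβ).mul
    (H.hη1.continuous.continuousOn.rpow_const fun x _ => Or.inr hm.le)

theorem Setup.int2 (H : Setup A b v η z r h M p C₁ C₂ α S) {β m : ℝ} (hβ : 0 ≤ β) (hm : 0 < m) :
    IntegrableOn (fun x => v x ^ β * ‖gradient v x‖ ^ p * η x ^ m) (ball z r) := by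
  refine H.integrableOn ?_ fun x hx => by rw [H.zero_off hm hx, mul_zero]
  have hp := H.hp
  exact ((H.hv.continuousOn.rpow_const fun x _ => Or.inr hβ).mul
    ((continuousOn_norm_gradient_aux isOpen_ball H.hv).rpow_const fun x _ => Or.inr (by linarith))).mul
    (H.hη1.continuous.continuousOn.rpow_const fun x _ => Or.inr hm.le)

theorem Setup.int_ind (H : Setup A b v η z r h M p C₁ C₂ α S) (K : Set (Euc n)) (hK : IsCompact K) :
    IntegrableOn (Set.indicator {x ∈ ball z r | 0 < v x} fun _ => h) K := by
  have ho : IsOpen {x ∈ ball z r | 0 < v x} :=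
    H.hv.continuousOn.isOpen_inter_preimage isOpen_ball isOpen_Ioi
  have : IntegrableOn (fun _ : Euc n => h) K := integrableOn_const hK.measure_lt_top.ne
  exact this.indicator ho.measurableSet

theorem Setup.energy (H : Setup A b v η z r h M p C₁ C₂ α S) {β m κ₁ : ℝ} (hβ : 1 ≤ β)
    (hm : 2 * p ≤ m) (hmβ : m ≤ κ₁ * β) :
    h * (∫ x in ball z r, v x ^ β * η x ^ m) +
      C₁ * β / 4 * (∫ x in ball z r, v x ^ (β - 1) * ‖gradient v x‖ ^ p * η x ^ m) ≤
    (C₁ / 4) ^ (1 - p) * ((C₁ + C₂) * κ₁) ^ p * β * (S / r) ^ p *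
      ∫ x in ball z r, v x ^ (β + p - 1) * η x ^ (m - p) := by
  have hp := H.hp
  have hr := H.hr
  have hm1 : 1 ≤ m := by linarith
  set φ : Euc n → ℝ := fun x => v x ^ β * η x ^ m with hφ
  have hφC : ContDiff ℝ 1 φ := H.test_contDiff hβ hm1
  have hφs : tsupport φ ⊆ closedBall z (r / 2) := H.test_tsupport hm1
  have hφ0 := H.test_nonneg (β := β) hm1
  have hK : IsCompact (closedBall z (r / 2)) := isCompact_closedBall _ _
  have hKU : closedBall z (r / 2) ⊆ ball z r := closedBall_subset_ball (by linarith)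
  have hcs : HasCompactSupport φ := hK.of_isClosed_subset (isClosed_tsupport φ) hφs
  have W := weak_C1 hp H.hα₁ H.hC₂ H.hA H.hb H.hb0 H.hbl (show r / 2 < r by linarith) H.hv
    (fun K hK _ => H.int_ind K hK) H.hw hφC hφs hφ0
  obtain ⟨i1, i2⟩ := integ_terms_aux hp H.hα₁ H.hC₂ H.hA H.hb H.hb0 H.hbl isOpen_ball hK hKU H.hv
  obtain ⟨Cφ, hCφ⟩ := hcs.exists_bound_of_continuous hφC.continuous
  have hcd : Continuous (fderiv ℝ φ) := hφC.continuous_fderiv (by norm_num)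
  obtain ⟨Cd, hCd⟩ := (hcs.fderiv ℝ).exists_bound_of_continuous hcd
  have hgd : ∀ x, ⟪A x (gradient v x), gradient φ x⟫ = fderiv ℝ φ x (A x (gradient v x)) := by
    intro x; rw [real_inner_comm, inner_gradient_aux]
  have j1 : IntegrableOn (fun x => ⟪A x (gradient v x), gradient φ x⟫) (ball z r) := by
    have : IntegrableOn (fun x => ⟪A x (gradient v x), gradient φ x⟫) (closedBall z (r / 2)) := by
      refine Integrable.mono' (i1.norm.mul_const Cd) ?_ ?_
      · exact i1.aestronglyMeasurable.inner (measurable_gradient_aux φ).aestronglyMeasurable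
      · filter_upwards with x
        refine (norm_inner_le_norm _ _).trans ?_
        gcongr
        rw [norm_gradient_aux]; exact hCd x
    refine this.of_forall_sdiff_eq_zero measurableSet_ball fun x hx => ?_
    have h0 : fderiv ℝ φ x = 0 := by
      by_contra h
      exact hx.2 (hφs (support_fderiv_subset ℝ h))
    rw [hgd, h0]; simp
  have j2 : IntegrableOn (fun x => b x * ‖gradient v x‖ ^ α * φ x) (ball z r) := by
    have : IntegrableOn (fun x => b x * ‖gradient v x‖ ^ α * φ x) (closedBall z (r / 2)) :=
      Integrable.mono' (i2.norm.mul_const Cφ) (i2.aestronglyMeasurable.mul hφC.continuous.aestronglyMeasurable)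
        (by
          filter_upwards with x
          rw [norm_mul]
          gcongr
          exact hCφ x)
    refine this.of_forall_sdiff_eq_zero measurableSet_ball fun x hx => ?_
    simp only [hφ]
    rw [H.zero_off (by linarith) hx.2, mul_zero, mul_zero]
  have eL : ∫ x in ball z r, (Set.indicator {x ∈ ball z r | 0 < v x} (fun _ => h)) x * φ x
      = h * ∫ x in ball z r, φ x := by
    rw [← integral_const_mul]
    refine setIntegral_congr_fun measurableSet_ball fun x hx => ?_
    by_cases hx0 : 0 < v x
    · rw [Set.indicator_of_mem (by exact ⟨hx, hx0⟩)]
    · have : v x = 0 := le_antisymm (not_lt.1 hx0) (H.hv0 x hx)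
      simp [hφ, this, Real.zero_rpow (show β ≠ 0 by linarith)]
  have j1' : IntegrableOn (fun x => -⟪A x (gradient v x), gradient φ x⟫) (ball z r) := j1.neg
  rw [eL, ← integral_neg, ← integral_add j1' j2] at W
  have k1 := H.int2 (β := β - 1) (m := m) (by linarith) (by linarith)
  have k2 := H.int1 (β := β + p - 1) (m := m - p) (by linarith) (by linarith)
  have W2 : ∫ x in ball z r, (-⟪A x (gradient v x), gradient φ x⟫ + b x * ‖gradient v x‖ ^ α * φ x) ≤
      ∫ x in ball z r, (-(C₁ * β / 4) * (v x ^ (β - 1) * ‖gradient v x‖ ^ p * η x ^ m) +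
        (C₁ / 4) ^ (1 - p) * ((C₁ + C₂) * κ₁) ^ p * β * (S / r) ^ p *
          (v x ^ (β + p - 1) * η x ^ (m - p))) := by
    refine integral_mono_ae (j1'.add j2) ((k1.const_mul _).add (k2.const_mul _)) ?_
    obtain ⟨B, hB1, hB2⟩ := H.hB
    filter_upwards [hB2, ae_restrict_mem measurableSet_ball] with x hbx hx
    have s1 := (H.hA.2 x (gradient v x)).1
    have s2 := (H.hA.2 x (gradient v x)).2
    rw [hgd, H.test_fderiv hβ hm1 hx]
    simp only [ContinuousLinearMap.add_apply, ContinuousLinearMap.smul_apply, smul_eq_mul]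
    rw [inner_gradient_aux] at s1
    refine pointwise_aux hp H.hC₁ H.hC₂ hβ hm hmβ hr (L := S / r) ?_ (norm_nonneg _) (H.hv0 x hx)
      (H.hη0 x) (H.hηle x) s1 ?_ ?_
    · have := H.hS
      gcongr
    · have t1 : |fderiv ℝ η x (A x (gradient v x))| ≤ S / r * (C₂ * ‖gradient v x‖ ^ (p - 1)) := by
        refine ((fderiv ℝ η x).le_opNorm _).trans ?_
        have := H.hηd x
        gcongr
        have := H.hS
        positivity
      exact (abs_le.1 t1).1
    · exact b_aux hp H.hα₁ H.hα₂ H.hC₁ hbx H.hM hr (norm_nonneg _) (H.hv0 x hx) (H.hvM x hx) hB1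
  rw [integral_add (k1.const_mul _) (k2.const_mul _), integral_const_mul, integral_const_mul] at W2
  linarith

theorem gns_real {n : ℕ} {κ : ℝ} (hκ : Real.HolderConjugate (n : ℝ) κ) : ∃ c : ℝ, 0 ≤ c ∧ ∀ u : Euc n → ℝ,
    ContDiff ℝ 1 u → HasCompactSupport u → (∀ x, 0 ≤ u x) →
    ∫ x, u x ^ κ ≤ c * (∫ x, ‖fderiv ℝ u x‖) ^ κ := by
  have hκ0 : 0 < κ := hκ.symm.pos
  refine ⟨(lintegralPowLePowLIntegralFDerivConst (volume : Measure (Euc n)) κ : NNReal), NNReal.coe_nonneg _, fun u hu hc h0 => ?_⟩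
  have G := lintegral_pow_le_pow_lintegral_fderiv (volume : Measure (Euc n)) hu hc (p := κ)
    (by simpa using hκ)
  have hcd : Continuous (fderiv ℝ u) := hu.continuous_fderiv (by norm_num)
  have i1 : Integrable (fderiv ℝ u) := hcd.integrable_of_hasCompactSupport (hc.fderiv ℝ)
  rw [← ofReal_integral_norm_eq_lintegral_enorm i1] at G
  have i2 : Integrable (fun x => u x ^ κ) := by
    refine (hu.continuous.rpow_const fun x => Or.inr hκ0.le).integrable_of_hasCompactSupport ?_
    exact hc.comp_left (g := fun t : ℝ => t ^ κ) (Real.zero_rpow hκ0.ne')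
  have e : ∫⁻ x, ‖u x‖ₑ ^ κ = ENNReal.ofReal (∫ x, u x ^ κ) := by
    rw [ofReal_integral_eq_lintegral_ofReal i2 (Eventually.of_forall fun x => Real.rpow_nonneg (h0 x) _)]
    refine lintegral_congr fun x => ?_
    rw [Real.enorm_of_nonneg (h0 x), ENNReal.ofReal_rpow_of_nonneg (h0 x) hκ0.le]
  have hI : 0 ≤ ∫ x, ‖fderiv ℝ u x‖ := integral_nonneg fun x => norm_nonneg _
  rw [e, ENNReal.ofReal_rpow_of_nonneg hI hκ0.le, ← ENNReal.ofReal_coe_nnreal,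
    ← ENNReal.ofReal_mul (NNReal.coe_nonneg _)] at G
  exact (ENNReal.ofReal_le_ofReal_iff (by positivity)).1 G


/-- The energy constant. -/
def KK (n : ℕ) (p C₁ C₂ : ℝ) : ℝ := (C₁ / 4) ^ (1 - p) * ((C₁ + C₂) * (n + 2 + 3 * p)) ^ p

/-- The constant of one Moser step. -/
def KL (n : ℕ) (p C₁ C₂ : ℝ) : ℝ := 1 + 4 * KK n p C₁ C₂ / C₁ + (n + 2 + 3 * p)

theorem Setup.KK_pos (H : Setup A b v η z r h M p C₁ C₂ α S) : 0 < KK n p C₁ C₂ := by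
  have := H.hp; have := H.hC₁; have := H.hC₂
  unfold KK; positivity

/-- The weighted integrals. -/
def JJ (v η : Euc n → ℝ) (z : Euc n) (r p s : ℝ) : ℝ :=
  ∫ x in ball z r, v x ^ s * η x ^ ((n + 2) * s - n * p)

theorem Setup.step (H : Setup A b v η z r h M p C₁ C₂ α S) {κ c : ℝ} (hκ : Real.HolderConjugate (n : ℝ) κ)
    (hc : 0 ≤ c)
    (hG : ∀ u : Euc n → ℝ, ContDiff ℝ 1 u → HasCompactSupport u → (∀ x, 0 ≤ u x) →
      ∫ x, u x ^ κ ≤ c * (∫ x, ‖fderiv ℝ u x‖) ^ κ) {s : ℝ} (hs : p ≤ s) :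
    JJ v η z r p (κ * s) ≤ c * (KL n p C₁ C₂ * s * (S / r) * JJ v η z r p s) ^ κ := by
  have hp := H.hp; have hr := H.hr; have hC₁ := H.hC₁; have hS := H.hS
  have hK := H.KK_pos
  have hκ0 : 0 < κ := hκ.symm.pos
  have hn0 : (0:ℝ) ≤ n := Nat.cast_nonneg n
  have hnκ : κ * n = κ + n := hκ.symm.mul_eq_add
  set L := S / r with hL
  have hL0 : 0 < L := by positivity
  set β := s - p + 1 with hβ
  set m := (n + 2) * s - n * p + p with hm
  have hβ1 : 1 ≤ β := by linarith
  have hnp : n * p ≤ n * s := by gcongr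
  have hm3 : 3 * p ≤ m := by
    have : m = n * s - n * p + 2 * s + p := by rw [hm]; ring
    linarith
  have hmβ : m ≤ (n + 2 + 3 * p) * β := by
    have h1 : m = (n + 2) * β + 3 * p - n - 2 := by rw [hm, hβ]; ring
    have h2 : 3 * p * 1 ≤ 3 * p * β := by gcongr
    rw [h1, add_mul]; linarith
  have hms : m ≤ (n + 2 + 3 * p) * s := hmβ.trans (by gcongr; linarith)
  set w : Euc n → ℝ := fun x => v x ^ s * η x ^ m with hw
  have hwC : ContDiff ℝ 1 w := H.test_contDiff (by linarith) (by linarith)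
  have hws : tsupport w ⊆ closedBall z (r / 2) := H.test_tsupport (by linarith)
  have hw0 : ∀ x, 0 ≤ w x := H.test_nonneg (β := s) (by linarith)
  have hKU : closedBall z (r / 2) ⊆ ball z r := closedBall_subset_ball (by linarith)
  have hcs : HasCompactSupport w :=
    (isCompact_closedBall _ _).of_isClosed_subset (isClosed_tsupport w) hws
  have G := hG w hwC hcs hw0
  have eL : ∫ x, w x ^ κ = JJ v η z r p (κ * s) := by
    rw [← setIntegral_eq_integral_of_forall_compl_eq_zero (s := ball z r)]
    · unfold JJ
      refine setIntegral_congr_fun measurableSet_ball fun x hx => ?_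
      have h1 := H.hv0 x hx
      have h2 := H.hη0 x
      simp only [hw]
      rw [Real.mul_rpow (by positivity) (by positivity), ← Real.rpow_mul h1, ← Real.rpow_mul h2]
      congr 2
      · ring
      · rw [hm]; linear_combination (-p) * hnκ
    · intro x hx
      have : w x = 0 := image_eq_zero_of_notMem_tsupport fun hh => hx (hKU (hws hh))
      rw [this, Real.zero_rpow hκ0.ne']
  have eR : ∫ x, ‖fderiv ℝ w x‖ = ∫ x in ball z r, ‖fderiv ℝ w x‖ := by
    rw [← setIntegral_eq_integral_of_forall_compl_eq_zero (s := ball z r)]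
    intro x hx
    rw [norm_eq_zero]
    by_contra hh
    exact hx (hKU (hws (support_fderiv_subset ℝ hh)))
  have k1 := H.int2 (β := β - 1) (m := m) (by linarith) (by linarith)
  have k2 := H.int1 (β := s) (m := m - p) (by linarith) (by linarith)
  have hcd : Continuous (fderiv ℝ w) := hwC.continuous_fderiv (by norm_num)
  have hJ : JJ v η z r p s = ∫ x in ball z r, v x ^ s * η x ^ (m - p) := by
    unfold JJ; rw [hm]; simp
  have B1 : ∫ x in ball z r, ‖fderiv ℝ w x‖ ≤
      ∫ x in ball z r, ((s * L + m * L) * (v x ^ s * η x ^ (m - p)) +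
        s * L ^ (1 - p) * (v x ^ (β - 1) * ‖gradient v x‖ ^ p * η x ^ m)) := by
    refine setIntegral_mono_on ?_ ((k2.const_mul _).add (k1.const_mul _)) measurableSet_ball ?_
    · exact (hcd.integrable_of_hasCompactSupport (hcs.fderiv ℝ)).norm.integrableOn
    intro x hx
    have h1 := H.hv0 x hx
    have h2 := H.hη0 x
    have h3 := H.hηle x
    rw [H.test_fderiv (by linarith) (by linarith) hx]
    have n1 : ‖(s * v x ^ (s - 1) * η x ^ m) • fderiv ℝ v x + (m * v x ^ s * η x ^ (m - 1)) • fderiv ℝ η x‖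
        ≤ (s * v x ^ (s - 1) * η x ^ m) * ‖gradient v x‖ + (m * v x ^ s * η x ^ (m - 1)) * L := by
      refine (norm_add_le _ _).trans ?_
      have hs0 : 0 ≤ s := by linarith
      have hm0 : 0 ≤ m := by linarith
      rw [norm_smul, norm_smul, Real.norm_of_nonneg (by positivity), Real.norm_of_nonneg (by positivity),
        norm_gradient_aux]
      gcongr
      exact H.hηd x
    refine n1.trans ?_
    have y := young_aux hp h1 (norm_nonneg (gradient v x)) hL0 (zero_le_one)
    rw [Real.one_rpow, one_mul, mul_one] at y
    have e1 : v x ^ (s - 1) = v x ^ (β - 1) * v x ^ (p - 1) := by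
      rw [← Real.rpow_add_of_nonneg h1 (by linarith) (by linarith)]; rw [hβ]; ring_nf
    have e2 : v x ^ s = v x ^ (β - 1) * v x ^ p := by
      rw [← Real.rpow_add_of_nonneg h1 (by linarith) (by linarith)]; rw [hβ]; ring_nf
    have m1 : η x ^ m ≤ η x ^ (m - p) := 
      Real.rpow_le_rpow_of_exponent_ge_of_imp h2 h3 (by linarith) (by intro _ hh; linarith)
    have m2 : η x ^ (m - 1) ≤ η x ^ (m - p) := 
      Real.rpow_le_rpow_of_exponent_ge_of_imp h2 h3 (by linarith) (by intro _ hh; linarith)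
    have hs0 : 0 ≤ s := by linarith
    have hm0 : 0 ≤ m := by linarith
    have t1 : (s * v x ^ (s - 1) * η x ^ m) * ‖gradient v x‖ ≤
        s * L * (v x ^ s * η x ^ (m - p)) +
          s * L ^ (1 - p) * (v x ^ (β - 1) * ‖gradient v x‖ ^ p * η x ^ m) := by
      calc (s * v x ^ (s - 1) * η x ^ m) * ‖gradient v x‖
          = s * v x ^ (β - 1) * η x ^ m * (‖gradient v x‖ * v x ^ (p - 1)) := by rw [e1]; ring
        _ ≤ s * v x ^ (β - 1) * η x ^ m * (L * v x ^ p + L ^ (1 - p) * ‖gradient v x‖ ^ p) := by gcongr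
        _ = s * L * (v x ^ s * η x ^ m) +
          s * L ^ (1 - p) * (v x ^ (β - 1) * ‖gradient v x‖ ^ p * η x ^ m) := by rw [e2]; ring
        _ ≤ _ := by gcongr
    have t2 : (m * v x ^ s * η x ^ (m - 1)) * L ≤ m * L * (v x ^ s * η x ^ (m - p)) := by
      calc (m * v x ^ s * η x ^ (m - 1)) * L = m * L * (v x ^ s * η x ^ (m - 1)) := by ring
        _ ≤ _ := by gcongr
    linarith
  rw [integral_add (k2.const_mul _) (k1.const_mul _), integral_const_mul, integral_const_mul, ← hJ] at B1
  have En := H.energy hβ1 (by linarith) hmβ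
  rw [show β + p - 1 = s by rw [hβ]; ring, ← hJ] at En
  have hJ0 : 0 ≤ JJ v η z r p s := by
    rw [hJ]
    refine setIntegral_nonneg measurableSet_ball fun x hx => ?_
    have := H.hv0 x hx
    have := H.hη0 x
    positivity
  have hI0 : 0 ≤ h * ∫ x in ball z r, v x ^ β * η x ^ m :=
    mul_nonneg H.hh (setIntegral_nonneg measurableSet_ball fun x hx => H.test_nonneg (by linarith) x)
  set P := ∫ x in ball z r, v x ^ (β - 1) * ‖gradient v x‖ ^ p * η x ^ m
  set J := JJ v η z r p s
  have hP : P ≤ 4 * KK n p C₁ C₂ / C₁ * L ^ p * J := by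
    have h1 : C₁ * β / 4 * P ≤ KK n p C₁ C₂ * β * L ^ p * J := by unfold KK; linarith
    have h2 : C₁ * β / 4 * P ≤ C₁ * β / 4 * (4 * KK n p C₁ C₂ / C₁ * L ^ p * J) := by
      refine h1.trans (le_of_eq ?_); field_simp
    exact le_of_mul_le_mul_left h2 (by positivity)
  have hLL : L ^ (1 - p) * L ^ p = L := by
    rw [← Real.rpow_add hL0]; simp
  have B2 : ∫ x in ball z r, ‖fderiv ℝ w x‖ ≤ KL n p C₁ C₂ * s * L * J := by
    refine B1.trans ?_
    calc (s * L + m * L) * J + s * L ^ (1 - p) * P ≤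
        (s * L + (n + 2 + 3 * p) * s * L) * J + s * L ^ (1 - p) * (4 * KK n p C₁ C₂ / C₁ * L ^ p * J) := by
          have hs0 : 0 ≤ s := by linarith
          gcongr
      _ = (s * L + (n + 2 + 3 * p) * s * L) * J + s * (L ^ (1 - p) * L ^ p) * (4 * KK n p C₁ C₂ / C₁) * J := by ring
      _ = _ := by rw [hLL]; unfold KL; ring
  rw [eL, eR] at G
  refine G.trans ?_
  have : 0 ≤ ∫ x in ball z r, ‖fderiv ℝ w x‖ := integral_nonneg fun x => norm_nonneg _
  gcongr

theorem Setup.h_est (H : Setup A b v η z r h M p C₁ C₂ α S) :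
    h * JJ v η z r p p ≤ M ^ (p - 1) * (KK n p C₁ C₂ * (S / r) ^ p * (M ^ p * volume.real (ball z r))) := by
  have hp := H.hp; have hr := H.hr; have hC₁ := H.hC₁; have hS := H.hS; have hh := H.hh
  have hM := H.hM
  have hK := H.KK_pos
  have hn0 : (0:ℝ) ≤ n := Nat.cast_nonneg n
  have En := H.energy (β := 1) (m := 2 * p) (κ₁ := n + 2 + 3 * p) le_rfl le_rfl (by linarith)
  have i1 := H.int1 (β := p) (m := 2 * p) (by linarith) (by linarith)
  have i2 := H.int1 (β := 1) (m := 2 * p) (by linarith) (by linarith)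
  have i3 := H.int1 (β := p) (m := p) (by linarith) (by linarith)
  have hP : 0 ≤ ∫ x in ball z r, v x ^ ((1:ℝ) - 1) * ‖gradient v x‖ ^ p * η x ^ (2 * p) :=
    setIntegral_nonneg measurableSet_ball fun x hx => by
      have := H.hv0 x hx
      have := H.hη0 x
      positivity
  have e1 : JJ v η z r p p ≤ M ^ (p - 1) * ∫ x in ball z r, v x ^ (1:ℝ) * η x ^ (2 * p) := by
    rw [← integral_const_mul]
    unfold JJ
    rw [show (n + 2) * p - n * p = 2 * p by ring]
    refine setIntegral_mono_on i1 (i2.const_mul _) measurableSet_ball fun x hx => ?_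
    have h1 := H.hv0 x hx
    have h2 := H.hη0 x
    have h3 := H.hvM x hx
    have : v x ^ p = v x ^ (p - 1) * v x ^ (1:ℝ) := by
      rw [← Real.rpow_add_of_nonneg h1 (by linarith) (by linarith)]; ring_nf
    rw [this, mul_assoc]
    have h4 : 0 ≤ p - 1 := by linarith
    gcongr
  have e2 : ∫ x in ball z r, v x ^ (1 + p - 1) * η x ^ (2 * p - p) ≤ M ^ p * volume.real (ball z r) := by
    rw [show 1 + p - 1 = p by ring, show 2 * p - p = p by ring]
    have : ∫ x in ball z r, M ^ p = M ^ p * volume.real (ball z r) := by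
      rw [setIntegral_const, smul_eq_mul, mul_comm]
    rw [← this]
    refine setIntegral_mono_on i3 (integrableOn_const measure_ball_lt_top.ne) measurableSet_ball fun x hx => ?_
    have h1 := H.hv0 x hx
    have h2 := H.hη0 x
    have h3 := H.hvM x hx
    have h4 := H.hηle x
    calc v x ^ p * η x ^ p ≤ M ^ p * 1 ^ p := by gcongr
      _ = M ^ p := by simp
  have e3 : h * (∫ x in ball z r, v x ^ (1:ℝ) * η x ^ (2 * p)) ≤
      KK n p C₁ C₂ * (S / r) ^ p * (M ^ p * volume.real (ball z r)) := by
    calc h * (∫ x in ball z r, v x ^ (1:ℝ) * η x ^ (2 * p)) ≤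
        KK n p C₁ C₂ * (S / r) ^ p * ∫ x in ball z r, v x ^ (1 + p - 1) * η x ^ (2 * p - p) := by
          have : 0 ≤ C₁ * 1 / 4 * ∫ x in ball z r, v x ^ ((1:ℝ) - 1) * ‖gradient v x‖ ^ p * η x ^ (2 * p) := by
            positivity
          unfold KK
          linarith
      _ ≤ _ := by gcongr
  calc h * JJ v η z r p p ≤ h * (M ^ (p - 1) * ∫ x in ball z r, v x ^ (1:ℝ) * η x ^ (2 * p)) := by gcongr
    _ = M ^ (p - 1) * (h * ∫ x in ball z r, v x ^ (1:ℝ) * η x ^ (2 * p)) := by ring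
    _ ≤ _ := by gcongr


theorem Setup.lower (H : Setup A b v η z r h M p C₁ C₂ α S) {γ : ℝ} (hγ : 0 < γ)
    (hz : γ * M ≤ v z) (hη : ∀ x ∈ ball z (r / 4), η x = 1) :
    ∃ d : ℝ, 0 < d ∧ ∀ s, p ≤ s → d * (γ / 2 * M) ^ s ≤ JJ v η z r p s := by
  have hp := H.hp; have hr := H.hr; have hM := H.hM
  have hn0 : (0:ℝ) ≤ n := Nat.cast_nonneg n
  have hc : ContinuousAt v z := H.hv.continuousOn.continuousAt (ball_mem_nhds z hr)
  have hlt : γ / 2 * M < v z := by nlinarith [mul_pos hγ hM]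
  obtain ⟨δ, hδ, hδv⟩ := Metric.eventually_nhds_iff_ball.1 (hc.eventually (lt_mem_nhds hlt))
  set δ' := min δ (r / 4) with hδ'
  have hδ0 : 0 < δ' := by positivity
  have hsub : ball z δ' ⊆ ball z r := ball_subset_ball ((min_le_right _ _).trans (by linarith))
  refine ⟨volume.real (ball z δ'), ?_, fun s hs => ?_⟩
  · exact ENNReal.toReal_pos (measure_ball_pos volume z hδ0).ne' measure_ball_lt_top.ne
  have hg : 0 < (n + 2) * s - n * p := by
    have : n * p ≤ n * s := by gcongr
    nlinarith
  have i1 := H.int1 (β := s) (m := (n + 2) * s - n * p) (by linarith) hg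
  have e1 : volume.real (ball z δ') * (γ / 2 * M) ^ s = ∫ x in ball z δ', (γ / 2 * M) ^ s := by
    rw [setIntegral_const, smul_eq_mul]
  rw [e1]
  unfold JJ
  calc ∫ x in ball z δ', (γ / 2 * M) ^ s ≤ ∫ x in ball z δ', v x ^ s * η x ^ ((n + 2) * s - n * p) := by
        refine setIntegral_mono_on (integrableOn_const measure_ball_lt_top.ne) (i1.mono_set hsub)
          measurableSet_ball fun x hx => ?_
        rw [hη x (ball_subset_ball (min_le_right _ _) hx), Real.one_rpow, mul_one]
        exact Real.rpow_le_rpow (by positivity) (hδv x (ball_subset_ball (min_le_left _ _) hx)).le (by linarith)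
    _ ≤ _ := by
        refine setIntegral_mono_set i1 ?_ hsub.eventuallyLE
        filter_upwards [ae_restrict_mem measurableSet_ball] with x hx
        have := H.hv0 x hx
        have := H.hη0 x
        simp only [Pi.zero_apply]
        positivity

theorem main_aux (n : ℕ) (hn : 2 ≤ n) (p C₁ C₂ α S γ : ℝ) (hp : 1 < p)
    (hC₁ : 0 < C₁) (hC₂ : 0 < C₂) (hS : 1 ≤ S) (hγ : 0 < γ) :
    ∃ Q : ℝ, 0 < Q ∧ ∀ (A : Euc n → Euc n → Euc n) (b v η : Euc n → ℝ) (z : Euc n) (r h M : ℝ),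
      Setup A b v η z r h M p C₁ C₂ α S → γ * M ≤ v z → (∀ x ∈ ball z (r / 4), η x = 1) →
      h * r ^ p ≤ Q * M ^ (p - 1) := by
  have hn2 : (2:ℝ) ≤ n := by exact_mod_cast hn
  have hκ : Real.HolderConjugate (n : ℝ) (Real.conjExponent n) := Real.HolderConjugate.conjExponent (by linarith)
  set κ := Real.conjExponent n with hκdef
  have hκ1 : 1 < κ := hκ.symm.lt
  have hκ0 : 0 < κ := by linarith
  have hnκ : κ * n = κ + n := hκ.symm.mul_eq_add
  have hκ2 : κ ≤ 2 := by nlinarith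
  obtain ⟨c, hc, hG⟩ := gns_real hκ
  have hK : 0 < KK n p C₁ C₂ := by unfold KK; positivity
  have hKL : 0 < KL n p C₁ C₂ := by unfold KL; positivity
  set c' := max c 1 with hc'
  have hc'1 : 1 ≤ c' := le_max_right _ _
  set T := c' * KL n p C₁ C₂ * S * p with hT
  have hT0 : 0 < T := by positivity
  obtain ⟨a, ha, hseq⟩ := seq_aux hT0 hκ1
  set ω := volume.real (ball (0 : Euc n) 1) with hω
  have hω0 : 0 < ω := ENNReal.toReal_pos (measure_ball_pos volume _ one_pos).ne' measure_ball_lt_top.ne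
  refine ⟨KK n p C₁ C₂ * S ^ p * ω / ((γ / 4) ^ p * a), by positivity, ?_⟩
  intro A b v η z r h M H hz hη
  have hr := H.hr; have hM := H.hM; have hh := H.hh
  set Y : ℕ → ℝ := fun j => JJ v η z r p (p * κ ^ j) / (M ^ (p * κ ^ j) * r ^ (n : ℝ)) with hY
  have hJ0 : ∀ s, 0 ≤ JJ v η z r p s := fun s =>
    setIntegral_nonneg measurableSet_ball fun x hx => by
      have := H.hv0 x hx
      have := H.hη0 x
      positivity
  have hY0 : ∀ j, 0 ≤ Y j := fun j => div_nonneg (hJ0 _) (by positivity)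
  have hsj : ∀ j : ℕ, p ≤ p * κ ^ j := fun j => le_mul_of_one_le_right (by linarith) (one_le_pow₀ hκ1.le)
  have hrec : ∀ j, Y (j + 1) ≤ (T * 2 ^ j * Y j) ^ κ := by
    intro j
    have st := H.step hκ hc hG (hsj j)
    set s := p * κ ^ j with hs
    have hs0 : 0 < s := by positivity
    have es : p * κ ^ (j + 1) = κ * s := by rw [hs, pow_succ]; ring
    have eJ : JJ v η z r p s = Y j * M ^ s * r ^ (n : ℝ) := by
      simp only [hY, ← hs]; field_simp
    have hYj := hY0 j
    have er : S / r * r ^ (n : ℝ) = S * r ^ ((n : ℝ) - 1) := by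
      rw [Real.rpow_sub_one hr.ne']; ring
    have er2 : (r ^ ((n : ℝ) - 1)) ^ κ = r ^ (n : ℝ) := by
      rw [← Real.rpow_mul hr.le]; congr 1; linarith
    have e1 : (KL n p C₁ C₂ * s * (S / r) * JJ v η z r p s) ^ κ =
        (KL n p C₁ C₂ * S * s * Y j) ^ κ * (M ^ (κ * s) * r ^ (n : ℝ)) := by
      rw [eJ, show KL n p C₁ C₂ * s * (S / r) * (Y j * M ^ s * r ^ (n : ℝ)) =
        KL n p C₁ C₂ * s * Y j * M ^ s * (S / r * r ^ (n : ℝ)) by ring, er,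
        show KL n p C₁ C₂ * s * Y j * M ^ s * (S * r ^ ((n : ℝ) - 1)) =
          (KL n p C₁ C₂ * S * s * Y j) * (M ^ s * r ^ ((n : ℝ) - 1)) by ring,
        Real.mul_rpow (by positivity) (by positivity), Real.mul_rpow (x := M ^ s) (by positivity) (by positivity), er2,
        ← Real.rpow_mul hM.le, mul_comm s κ]
    have e2 : Y (j + 1) ≤ c * (KL n p C₁ C₂ * S * s * Y j) ^ κ := by
      simp only [hY, es]
      rw [div_le_iff₀ (by positivity)]
      rw [e1] at st
      simp only [hY] at st
      linarith
    have hcc : c ≤ c' ^ κ := by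
      calc c ≤ c' := le_max_left _ _
        _ = c' ^ (1:ℝ) := (Real.rpow_one _).symm
        _ ≤ c' ^ κ := Real.rpow_le_rpow_of_exponent_le hc'1 hκ1.le
    have hs2 : s ≤ p * 2 ^ j := by
      rw [hs]; gcongr
    calc Y (j + 1) ≤ c * (KL n p C₁ C₂ * S * s * Y j) ^ κ := e2
      _ ≤ c' ^ κ * (KL n p C₁ C₂ * S * (p * 2 ^ j) * Y j) ^ κ := by gcongr
      _ = (T * 2 ^ j * Y j) ^ κ := by
        rw [← Real.mul_rpow (by positivity) (by positivity)]; congr 1; rw [hT]; ring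
  have hlow : (γ / 4) ^ p * a < Y 0 := by
    by_contra hcon
    push Not at hcon
    have hup := hseq Y ((γ / 4) ^ p) (by positivity) hY0 hrec hcon
    obtain ⟨d, hd, hdl⟩ := H.lower hγ hz hη
    have hfin : ∀ j : ℕ, d / r ^ (n : ℝ) ≤ (1 / 2 : ℝ) ^ (p * κ ^ j) := by
      intro j
      have h1 := hup j
      have h2 := hdl _ (hsj j)
      set s := p * κ ^ j with hs
      rw [← Real.rpow_mul (by positivity), ← hs] at h1
      simp only [hY, ← hs] at h1
      rw [div_le_iff₀ (by positivity)] at h1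
      have h3 : (γ / 4) ^ s = (1 / 2) ^ s * (γ / 2) ^ s := by
        rw [← Real.mul_rpow (by positivity) (by positivity)]; congr 1; ring
      rw [Real.mul_rpow (by positivity) hM.le] at h2
      rw [h3] at h1
      have h4 : d * ((γ / 2) ^ s * M ^ s) ≤ (1 / 2) ^ s * r ^ (n : ℝ) * ((γ / 2) ^ s * M ^ s) := by
        linarith
      rw [div_le_iff₀ (by positivity)]
      exact le_of_mul_le_mul_right h4 (by positivity)
    have ht : Tendsto (fun j : ℕ => (1 / 2 : ℝ) ^ (p * κ ^ j)) atTop (nhds 0) :=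
      (tendsto_rpow_atTop_of_base_lt_one (1 / 2 : ℝ) (by norm_num) (by norm_num)).comp
        ((tendsto_pow_atTop_atTop_of_one_lt hκ1).const_mul_atTop (by linarith))
    have := ge_of_tendsto' ht hfin
    have : 0 < d / r ^ (n : ℝ) := by positivity
    linarith
  have he := H.h_est
  have hvol : volume.real (ball z r) = r ^ (n : ℝ) * ω := by
    rw [measureReal_def, Measure.addHaar_ball_of_pos volume z hr, ENNReal.toReal_mul,
      ENNReal.toReal_ofReal (by positivity), finrank_euclideanSpace, Fintype.card_fin,
      Real.rpow_natCast, hω, measureReal_def]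
  have hY0' : JJ v η z r p p = Y 0 * M ^ p * r ^ (n : ℝ) := by
    simp only [hY, pow_zero, mul_one]; field_simp
  rw [hvol, hY0', Real.div_rpow (by linarith) hr.le] at he
  have h5 : h * Y 0 * r ^ p ≤ KK n p C₁ C₂ * S ^ p * ω * M ^ (p - 1) := by
    have hq : 0 < M ^ p * r ^ (n : ℝ) / r ^ p := by positivity
    refine le_of_mul_le_mul_right ?_ hq
    calc h * Y 0 * r ^ p * (M ^ p * r ^ (n : ℝ) / r ^ p) = h * (Y 0 * M ^ p * r ^ (n : ℝ)) := by field_simp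
      _ ≤ _ := he
      _ = _ := by field_simp
  rw [div_mul_eq_mul_div, le_div_iff₀ (by positivity)]
  calc h * r ^ p * ((γ / 4) ^ p * a) ≤ h * r ^ p * Y 0 := by gcongr
    _ ≤ _ := by linarith


end

/-- Lemma 4.7: for a bounded nonnegative solution of
`div A(x,Dv) + b(x)|Dv|^α ≥ χ_ω h` in `B_r(z)`, where `ω = {v > 0}` has positive measure
and `v(z) ≥ γ sup_{B_r(z)} v`, one has `sup_{B_r(z)} v ≥ C r^{p/(p-1)} h^{1/(p-1)}`. -/
theorem stmt_15 (n : ℕ) (hn : 2 ≤ n) (p C₁ C₂ α : ℝ) (hp : 1 < p)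
    (hC₁ : 0 < C₁) (hC₂ : 0 < C₂) (hα₁ : p - 1 ≤ α) (hα₂ : α ≤ p)
    (γ : ℝ) (hγ : 0 < γ) :
    ∃ C : ℝ, 0 < C ∧
      ∀ (A : Euc n → Euc n → Euc n), StructCond A p C₁ C₂ →
      ∀ (b : Euc n → ℝ), Measurable b → (∀ x, 0 ≤ b x) → LocBdd b →
      ∀ (r h : ℝ) (z : Euc n) (v : Euc n → ℝ), 0 < r → 0 ≤ h →
        ContDiffOn ℝ 1 v (Metric.ball z r) →
        (∀ x ∈ Metric.ball z r, 0 ≤ v x) →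
        BddAbove (v '' Metric.ball z r) →
        IsWeakSol A b α
          (Set.indicator {x ∈ Metric.ball z r | 0 < v x} fun _ => h) (Metric.ball z r) v →
        r ^ (p - α) * sSup (v '' Metric.ball z r) ^ (α - p + 1) *
            essSup b (volume.restrict (Metric.ball z r)) ≤ C₁ / 2 →
        0 < volume {x ∈ Metric.ball z r | 0 < v x} →
        γ * sSup (v '' Metric.ball z r) ≤ v z →
        C * r ^ (p / (p - 1)) * h ^ (1 / (p - 1)) ≤ sSup (v '' Metric.ball z r) := by
  obtain ⟨S, hS, hcut⟩ := cutoff_aux n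
  obtain ⟨Q, hQ, hmain⟩ := main_aux n hn p C₁ C₂ α S γ hp hC₁ hC₂ hS hγ
  have hp1 : 0 < p - 1 := by linarith
  refine ⟨(Q ^ (1 / (p - 1)))⁻¹, by positivity, ?_⟩
  intro A hA b hb hb0 hbl r h z v hr hh hv hv0 hbdd hw hB hpos hz
  set M := sSup (v '' Metric.ball z r) with hM
  have hvM : ∀ x ∈ ball z r, v x ≤ M := fun x hx => le_csSup hbdd (mem_image_of_mem v hx)
  have hM0 : 0 < M := by
    obtain ⟨x, hx, hx0⟩ := nonempty_of_measure_ne_zero hpos.ne'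
    exact lt_of_lt_of_le hx0 (hvM x hx)
  obtain ⟨η, h1, h2, h3, h4, h5, h6⟩ := hcut z r hr
  have hbB : ∀ᵐ x ∂(volume.restrict (ball z r)), b x ≤ essSup b (volume.restrict (ball z r)) := by
    obtain ⟨B, hB'⟩ := hbl (closedBall z r) (isCompact_closedBall _ _)
    refine ae_le_essSup (isBoundedUnder_of_eventually_le (a := B) ?_)
    filter_upwards [ae_restrict_mem measurableSet_ball] with x hx using hB' x (ball_subset_closedBall hx)
  have key := hmain A b v η z r h M
    ⟨hp, hC₁, hC₂, hα₁, hα₂, hr, hh, hM0, hS, hA, hb, hb0, hbl, hv, hv0, hvM, hw, ⟨_, hB, hbB⟩,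
      h1, h2, h3, h5, h6⟩ hz h4
  have k2 := Real.rpow_le_rpow (by positivity) key (show 0 ≤ 1 / (p - 1) by positivity)
  rw [Real.mul_rpow hh (by positivity), Real.mul_rpow hQ.le (by positivity), ← Real.rpow_mul hr.le,
    ← Real.rpow_mul hM0.le, mul_one_div, mul_one_div, div_self hp1.ne', Real.rpow_one] at k2
  rw [mul_assoc, inv_mul_le_iff₀ (by positivity)]
  linarith
end
end

section
/- Let 0 < r₁ < r₂ and h ≥ 0 be real numbers and let v be a bounded nonnegative C¹ function on the open annulus B_{r₁,r₂} which is a solution of div A(x,Dv) + b(x)|Dv|^α ≥ χ_ω(x)·h in B_{r₁,r₂}, where ω = {x ∈ B_{r₁,r₂} : v(x) > 0} and χ_ω is the characteristic function of ω. If there exists a real number m > 0 such that M(ρ;v) = m for all ρ ∈ (r₁, r₂), then h = 0. -/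
open MeasureTheory Metric Set Filter
open scoped RealInnerProductSpace ENNReal

noncomputable section

lemma mollify_aux {n : ℕ} (F : Euc n → Euc n) (M c : ℝ) (x0 : Euc n) (R ρ : ℝ)
    (hρ : ρ < R) (hF : AEStronglyMeasurable F volume) (hM : ∀ x, ‖F x‖ ≤ M)
    (H : ∀ φ : Euc n → ℝ, ContDiff ℝ (⊤ : ℕ∞) φ → HasCompactSupport φ →
      tsupport φ ⊆ ball x0 R → (∀ x, 0 ≤ φ x) →
      ∫ x, (c * φ x + fderiv ℝ φ x (F x)) ≤ 0)
    (φ : Euc n → ℝ) (hφ : ContDiff ℝ 1 φ) (hs : tsupport φ ⊆ closedBall x0 ρ)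
    (hφ0 : ∀ x, 0 ≤ φ x) :
    ∫ x, (c * φ x + fderiv ℝ φ x (F x)) ≤ 0 := by
  have hcs : HasCompactSupport φ := (isCompact_closedBall x0 ρ).of_isClosed_subset
    (isClosed_tsupport φ) hs
  have hcd : HasCompactSupport (fderiv ℝ φ) := hcs.fderiv ℝ
  have hdc : Continuous (fderiv ℝ φ) := hφ.continuous_fderiv (by norm_num)
  obtain ⟨K1, hK1⟩ := hcs.exists_bound_of_continuous hφ.continuous
  obtain ⟨K2, hK2⟩ := hcd.exists_bound_of_continuous hdc
  have hM0 : 0 ≤ M := (norm_nonneg _).trans (hM x0)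
  have hK10 : 0 ≤ K1 := (norm_nonneg _).trans (hK1 x0)
  have hK20 : 0 ≤ K2 := (norm_nonneg _).trans (hK2 x0)
  set d : ℕ → ℝ := fun j => (R - ρ) / 2 / ((j : ℝ) + 1) with hd
  have hdpos : ∀ j, 0 < d j := fun j => by
    have : 0 < R - ρ := by linarith
    simp only [hd]; positivity
  have hdle : ∀ j, d j ≤ (R - ρ) / 2 := fun j => by
    apply div_le_self (by linarith)
    have : (0:ℝ) ≤ j := Nat.cast_nonneg j
    linarith
  let β : ℕ → ContDiffBump (0 : Euc n) := fun j =>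
    ⟨d j / 2, d j, by have := hdpos j; linarith, by have := hdpos j; linarith⟩
  have hβ : Tendsto (fun j => (β j).rOut) atTop (nhds 0) := by
    change Tendsto d atTop (nhds 0)
    have := (tendsto_one_div_add_atTop_nhds_zero_nat (𝕜 := ℝ)).const_mul ((R - ρ) / 2)
    simpa [hd, div_eq_mul_inv] using this
  let ψ : ℕ → Euc n → ℝ := fun j => convolution ((β j).normed volume) φ (ContinuousLinearMap.lsmul ℝ ℝ) volume
  let ψ' : ℕ → Euc n → (Euc n →L[ℝ] ℝ) := fun j =>
    convolution ((β j).normed volume) (fderiv ℝ φ) (ContinuousLinearMap.lsmul ℝ ℝ) volume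
  have hder : ∀ j x, HasFDerivAt (ψ j) (ψ' j x) x := by
    intro j x
    have := hcs.hasFDerivAt_convolution_right (ContinuousLinearMap.lsmul ℝ ℝ)
      ((β j).continuous_normed (μ := volume)).locallyIntegrable hφ x (μ := volume)
    have e2 : ψ' j x = convolution ((β j).normed volume) (fderiv ℝ φ)
      (ContinuousLinearMap.precompR (Euc n) (ContinuousLinearMap.lsmul ℝ ℝ)) volume x := rfl
    rw [e2]
    exact this
  have hsm : ∀ j, ContDiff ℝ (⊤ : ℕ∞) (ψ j) := fun j =>
    ((β j).hasCompactSupport_normed).contDiff_convolution_left _ ((β j).contDiff_normed)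
      hφ.continuous.locallyIntegrable
  have hsupp : ∀ j, tsupport (ψ j) ⊆ closedBall x0 ((R + ρ) / 2) := by
    intro j
    apply closure_minimal _ isClosed_closedBall
    refine (support_convolution_subset _).trans ?_
    rintro _ ⟨y, hy, z, hz, rfl⟩
    rw [(β j).support_normed_eq, mem_ball_zero_iff] at hy
    have hy' : ‖y‖ < d j := hy
    have hz' := hs (subset_tsupport φ hz)
    rw [mem_closedBall, dist_eq_norm] at hz' ⊢
    have : y + z - x0 = y + (z - x0) := by abel
    simp only [this]
    have := norm_add_le y (z - x0)
    have := hdle j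
    linarith
  have hsub : closedBall x0 ((R + ρ) / 2) ⊆ ball x0 R := closedBall_subset_ball (by linarith)
  have hψ0 : ∀ j x, 0 ≤ ψ j x := fun j x =>
    integral_nonneg fun t => mul_nonneg ((β j).nonneg_normed t) (hφ0 _)
  have hneg : ∀ j, ∫ x, (c * ψ j x + fderiv ℝ (ψ j) x (F x)) ≤ 0 := fun j =>
    H _ (hsm j) ((isCompact_closedBall _ _).of_isClosed_subset (isClosed_tsupport _) (hsupp j))
      ((hsupp j).trans hsub) (hψ0 j)
  have hb1 : ∀ j x, ‖ψ j x‖ ≤ 3 * K1 := by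
    intro j x
    have h1 : dist (ψ j x) (φ x) ≤ 2 * K1 := by
      apply (β j).dist_normed_convolution_le hφ.continuous.aestronglyMeasurable
      intro y _
      rw [dist_eq_norm]
      have := norm_sub_le (φ y) (φ x)
      linarith [hK1 x, hK1 y]
    rw [dist_eq_norm] at h1
    have := norm_sub_norm_le (ψ j x) (φ x)
    linarith [hK1 x]
  have hb2 : ∀ j x, ‖ψ' j x‖ ≤ 3 * K2 := by
    intro j x
    have h1 : dist (ψ' j x) (fderiv ℝ φ x) ≤ 2 * K2 := by
      apply (β j).dist_normed_convolution_le hdc.aestronglyMeasurable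
      intro y _
      rw [dist_eq_norm]
      have := norm_sub_le (fderiv ℝ φ y) (fderiv ℝ φ x)
      linarith [hK2 x, hK2 y]
    rw [dist_eq_norm] at h1
    have := norm_sub_norm_le (ψ' j x) (fderiv ℝ φ x)
    linarith [hK2 x]
  have hlim : Tendsto (fun j => ∫ x, (c * ψ j x + fderiv ℝ (ψ j) x (F x))) atTop
      (nhds (∫ x, (c * φ x + fderiv ℝ φ x (F x)))) := by
    apply tendsto_integral_of_dominated_convergence
      ((closedBall x0 ((R + ρ) / 2)).indicator fun _ => |c| * (3 * K1) + 3 * K2 * M)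
    · intro j
      refine ((hsm j).continuous.aestronglyMeasurable.const_mul c).add ?_
      have hc : Continuous (fderiv ℝ (ψ j)) := (hsm j).continuous_fderiv (by norm_num)
      exact (ContinuousLinearMap.apply ℝ ℝ (E := Euc n)).flip.aestronglyMeasurable_comp₂
        hc.aestronglyMeasurable hF
    · rw [integrable_indicator_iff measurableSet_closedBall]
      exact integrableOn_const (isCompact_closedBall _ _).measure_lt_top.ne
    · intro j
      refine Eventually.of_forall fun x => ?_
      by_cases hx : x ∈ closedBall x0 ((R + ρ) / 2)
      · rw [indicator_of_mem hx]
        refine (norm_add_le _ _).trans (add_le_add ?_ ?_)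
        · rw [norm_mul]
          exact mul_le_mul_of_nonneg_left (hb1 j x) (abs_nonneg c)
        · rw [(hder j x).fderiv]
          refine (ContinuousLinearMap.le_opNorm _ _).trans ?_
          exact mul_le_mul (hb2 j x) (hM x) (norm_nonneg _) (by positivity)
      · rw [indicator_of_notMem hx]
        have h1 : x ∉ tsupport (ψ j) := fun h => hx (hsupp j h)
        have h2 : fderiv ℝ (ψ j) x = 0 :=
          image_eq_zero_of_notMem_tsupport fun h => h1 (tsupport_fderiv_subset ℝ h)
        rw [h2, image_eq_zero_of_notMem_tsupport h1]
        simp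
    · refine Eventually.of_forall fun x => ?_
      have h1 : Tendsto (fun j => ψ j x) atTop (nhds (φ x)) :=
        ContDiffBump.convolution_tendsto_right_of_continuous hβ hφ.continuous x
      have h2 : Tendsto (fun j => ψ' j x) atTop (nhds (fderiv ℝ φ x)) :=
        ContDiffBump.convolution_tendsto_right_of_continuous hβ hdc x
      simp only [(hder _ x).fderiv]
      exact (h1.const_mul c).add 
        (((ContinuousLinearMap.apply ℝ ℝ (F x)).continuous.tendsto _).comp h2)
  exact le_of_tendsto' hlim hneg

lemma hasDerivAt_max_pow (q : ℕ) (t : ℝ) :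
    HasDerivAt (fun t : ℝ => (max t 0) ^ (q + 2)) ((q + 2 : ℝ) * (max t 0) ^ (q + 1)) t := by
  rcases lt_trichotomy t 0 with ht | rfl | ht
  · have : (fun t : ℝ => (max t 0) ^ (q + 2)) =ᶠ[nhds t] fun _ => 0 := by
      filter_upwards [gt_mem_nhds ht] with y hy
      simp [max_eq_right hy.le]
    rw [max_eq_right ht.le]
    simpa using (hasDerivAt_const t (0:ℝ)).congr_of_eventuallyEq this
  · rw [hasDerivAt_iff_isLittleO_nhds_zero]
    simp only [zero_add, max_self, ne_eq, Nat.add_eq_zero_iff, OfNat.ofNat_ne_zero, and_false,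
      not_false_eq_true, zero_pow, sub_zero, one_ne_zero, mul_zero, smul_zero]
    refine Asymptotics.IsBigO.trans_isLittleO (g := fun h : ℝ => h ^ (q + 2)) ?_ ?_
    · refine Asymptotics.IsBigO.of_bound 1 (Eventually.of_forall fun y => ?_)
      rw [one_mul, norm_pow, norm_pow]
      gcongr
      rw [Real.norm_eq_abs, Real.norm_eq_abs, abs_of_nonneg (le_max_right _ _)]
      exact max_le (le_abs_self _) (abs_nonneg _)
    · simpa using Asymptotics.isLittleO_pow_pow (𝕜 := ℝ) (m := 1) (n := q + 2) (by omega)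
  · have : (fun t : ℝ => (max t 0) ^ (q + 2)) =ᶠ[nhds t] fun t => t ^ (q + 2) := by
      filter_upwards [lt_mem_nhds ht] with y hy
      simp [max_eq_left hy.le]
    rw [max_eq_left ht.le]
    have h2 := (hasDerivAt_pow (q + 2) t).congr_of_eventuallyEq this
    simpa using h2

lemma contDiff_max_pow (q : ℕ) : ContDiff ℝ 1 (fun t : ℝ => (max t 0) ^ (q + 2)) := by
  rw [contDiff_one_iff_deriv]
  refine ⟨fun t => (hasDerivAt_max_pow q t).differentiableAt, ?_⟩
  rw [funext fun t => (hasDerivAt_max_pow q t).deriv]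
  fun_prop

lemma struct_young {n : ℕ} {A : Euc n → Euc n → Euc n} {p C₁ C₂ : ℝ} (hp : 1 < p)
    (hC₁ : 0 < C₁) (hC₂ : 0 < C₂) (hA : StructCond A p C₁ C₂) (x ζ w : Euc n) (d : ℝ)
    (hw : ‖w‖ ≤ d) :
    -(C₂ * (C₂ / C₁) ^ (p - 1) * d ^ p) ≤ ⟪ζ, A x ζ⟫ - ⟪w, A x ζ⟫ := by
  obtain ⟨h1, h2⟩ := hA.2 x ζ
  have hd : 0 ≤ d := (norm_nonneg _).trans hw
  have h3 : ⟪w, A x ζ⟫ ≤ d * (C₂ * ‖ζ‖ ^ (p - 1)) :=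
    (real_inner_le_norm _ _).trans (mul_le_mul hw h2 (norm_nonneg _) hd)
  have key : ∀ t : ℝ, 0 ≤ t → t ^ p = t * t ^ (p - 1) := by
    intro t ht
    rcases ht.eq_or_lt with rfl | ht
    · rw [Real.zero_rpow (by linarith)]; simp
    · rw [Real.rpow_sub_one ht.ne']; field_simp
  rw [key _ (norm_nonneg _)] at h1
  have hpow : 0 ≤ ‖ζ‖ ^ (p - 1) := by positivity
  have hK : 0 ≤ C₂ * (C₂ / C₁) ^ (p - 1) * d ^ p := by positivity
  by_cases hc : C₂ * d ≤ C₁ * ‖ζ‖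
  · have := mul_le_mul_of_nonneg_right hc hpow
    linarith
  · push Not at hc
    have h4 : ‖ζ‖ ≤ C₂ / C₁ * d := by
      rw [div_mul_eq_mul_div, le_div_iff₀ hC₁]; linarith
    have h5 : ‖ζ‖ ^ (p - 1) ≤ (C₂ / C₁) ^ (p - 1) * d ^ (p - 1) := by
      rw [← Real.mul_rpow (by positivity) hd]
      exact Real.rpow_le_rpow (norm_nonneg _) h4 (by linarith)
    have h6 := mul_le_mul_of_nonneg_left h5 (mul_nonneg hC₂.le hd)
    rw [key d hd]
    have h7 : 0 ≤ C₁ * (‖ζ‖ * ‖ζ‖ ^ (p - 1)) := by positivity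
    linarith

lemma glue_contDiff {n : ℕ} (N : WithTop ℕ∞) (f : Euc n → ℝ) (x0 : Euc n) (R ρ : ℝ) (hρ : ρ < R)
    (h1 : ContDiffOn ℝ N f (ball x0 R)) (h2 : ∀ x, x ∉ closedBall x0 ρ → f x = 0) :
    ContDiff ℝ N f := by
  rw [contDiff_iff_contDiffAt]
  intro x
  by_cases hx : x ∈ ball x0 R
  · exact h1.contDiffAt (isOpen_ball.mem_nhds hx)
  · have hx' : x ∉ closedBall x0 ρ := fun h => hx (closedBall_subset_ball hρ h)
    have : f =ᶠ[nhds x] fun _ => 0 := by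
      filter_upwards [isClosed_closedBall.isOpen_compl.mem_nhds hx'] with y hy
      exact h2 y hy
    exact contDiffAt_const.congr_of_eventuallyEq this

def zfun {n : ℕ} (v : Euc n → ℝ) (x0 : Euc n) (m R s : ℝ) (k : ℕ) : Euc n → ℝ :=
  (ball x0 R).indicator fun x => max (v x - m + s - (‖x - x0‖ ^ 2) ^ k) 0

lemma zfun_props {n : ℕ} (v : Euc n → ℝ) (x0 : Euc n) (m R ρ : ℝ) (k : ℕ)
    (hρ0 : 0 < ρ) (hρ : ρ < R) (hv : ContDiffOn ℝ 1 v (ball x0 R))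
    (hvm : ∀ x ∈ ball x0 R, v x ≤ m) :
    (∀ x, 0 ≤ zfun v x0 m R ((ρ ^ 2) ^ k) k x) ∧
    (∀ x, zfun v x0 m R ((ρ ^ 2) ^ k) k x ≤ (ρ ^ 2) ^ k) ∧
    (∀ x, x ∉ closedBall x0 ρ → zfun v x0 m R ((ρ ^ 2) ^ k) k x = 0) ∧
    Continuous (zfun v x0 m R ((ρ ^ 2) ^ k) k) ∧
    (∀ q : ℕ, ContDiff ℝ 1 fun x => zfun v x0 m R ((ρ ^ 2) ^ k) k x ^ (q + 2)) := by
  have hz : ∀ x ∈ ball x0 R, zfun v x0 m R ((ρ ^ 2) ^ k) k x =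
      max (v x - m + (ρ ^ 2) ^ k - (‖x - x0‖ ^ 2) ^ k) 0 := fun x hx => indicator_of_mem hx _
  have hoff : ∀ x, x ∉ closedBall x0 ρ → zfun v x0 m R ((ρ ^ 2) ^ k) k x = 0 := by
    intro x hx
    by_cases hxR : x ∈ ball x0 R
    · rw [hz x hxR]
      apply max_eq_right
      rw [mem_closedBall, dist_eq_norm, not_le] at hx
      have h1 : (ρ ^ 2) ^ k ≤ (‖x - x0‖ ^ 2) ^ k := by gcongr
      linarith [hvm x hxR]
    · exact indicator_of_notMem hxR _
  have hin : ContDiffOn ℝ 1 (fun x => v x - m + (ρ ^ 2) ^ k - (‖x - x0‖ ^ 2) ^ k) (ball x0 R) := by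
    refine ((hv.sub contDiffOn_const).add contDiffOn_const).sub ?_
    exact (((contDiff_id.sub contDiff_const).norm_sq ℝ).pow k).contDiffOn
  refine ⟨fun x => indicator_nonneg (fun _ _ => le_max_right _ _) x, ?_, hoff, ?_, ?_⟩
  · intro x
    by_cases hxR : x ∈ ball x0 R
    · rw [hz x hxR]
      apply max_le _ (by positivity)
      have h1 : 0 ≤ (‖x - x0‖ ^ 2) ^ k := by positivity
      linarith [hvm x hxR]
    · rw [zfun, indicator_of_notMem hxR]; positivity
  · rw [← contDiff_zero (𝕜 := ℝ)]
    refine glue_contDiff 0 _ x0 R ρ hρ ?_ hoff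
    rw [contDiffOn_zero]
    exact (hin.continuousOn.sup continuousOn_const).congr hz
  · intro q
    refine glue_contDiff 1 _ x0 R ρ hρ ?_ fun x hx => by rw [hoff x hx]; simp
    exact ((contDiff_max_pow q).comp_contDiffOn hin).congr fun x hx => by simp [hz x hx]

lemma integrable_fderiv_apply {n : ℕ} (φ : Euc n → ℝ) (hφ : ContDiff ℝ 1 φ)
    (hc : HasCompactSupport φ) (F : Euc n → Euc n) (M : ℝ)
    (hFm : AEStronglyMeasurable F volume) (hFM : ∀ x, ‖F x‖ ≤ M) :
    Integrable (fun x => fderiv ℝ φ x (F x)) := by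
  have hc' : Continuous (fderiv ℝ φ) := hφ.continuous_fderiv (by norm_num)
  have hi : Integrable (fderiv ℝ φ) := hc'.integrable_of_hasCompactSupport (hc.fderiv ℝ)
  refine (hi.norm.mul_const M).mono' ?_ (Eventually.of_forall fun x => ?_)
  · exact (ContinuousLinearMap.apply ℝ ℝ (E := Euc n)).flip.aestronglyMeasurable_comp₂
      hc'.aestronglyMeasurable hFm
  · refine (ContinuousLinearMap.le_opNorm _ _).trans ?_
    exact mul_le_mul_of_nonneg_left (hFM x) (norm_nonneg _)

lemma step_ineq {n : ℕ} {A : Euc n → Euc n → Euc n} {p C₁ C₂ : ℝ} (hp : 1 < p)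
    (hC₁ : 0 < C₁) (hC₂ : 0 < C₂) (hA : StructCond A p C₁ C₂)
    (v : Euc n → ℝ) (x0 : Euc n) (m R ρ : ℝ) (k : ℕ) (hk : 1 ≤ k)
    (hρ0 : 0 < ρ) (hρ : ρ < R) (hv : ContDiffOn ℝ 1 v (ball x0 R))
    (hvm : ∀ x ∈ ball x0 R, v x ≤ m) (c M : ℝ) (F : Euc n → Euc n)
    (hFm : AEStronglyMeasurable F volume) (hFM : ∀ x, ‖F x‖ ≤ M)
    (hF : ∀ x ∈ ball x0 R, F x = A x (gradient v x))
    (H : ∀ φ : Euc n → ℝ, ContDiff ℝ 1 φ → tsupport φ ⊆ closedBall x0 ρ →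
      (∀ x, 0 ≤ φ x) → ∫ x, (c * φ x + fderiv ℝ φ x (F x)) ≤ 0) (q : ℕ) :
    c * ∫ x, zfun v x0 m R ((ρ ^ 2) ^ k) k x ^ (q + 2) ≤
      (q + 2) * (C₂ * (C₂ / C₁) ^ (p - 1) * (2 * k * ρ ^ (2 * k - 1)) ^ p) *
        ∫ x, zfun v x0 m R ((ρ ^ 2) ^ k) k x ^ (q + 1) := by
  obtain ⟨h0, -, hoff, hcont, hC1⟩ := zfun_props v x0 m R ρ k hρ0 hρ hv hvm
  set ζ := zfun v x0 m R ((ρ ^ 2) ^ k) k with hζ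
  set K := C₂ * (C₂ / C₁) ^ (p - 1) * (2 * k * ρ ^ (2 * k - 1)) ^ p with hK
  have hts : ∀ q : ℕ, tsupport (fun x => ζ x ^ (q + 1)) ⊆ closedBall x0 ρ := by
    intro q
    apply closure_minimal _ isClosed_closedBall
    intro x hx
    by_contra hx'
    exact hx (by simp [hoff x hx'])
  have hcs : ∀ q : ℕ, HasCompactSupport (fun x => ζ x ^ (q + 1)) := fun q =>
    (isCompact_closedBall x0 ρ).of_isClosed_subset (isClosed_tsupport _) (hts q)
  have hint : ∀ q : ℕ, Integrable (fun x => ζ x ^ (q + 1)) := fun q =>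
    (hcont.pow _).integrable_of_hasCompactSupport (hcs q)
  have hmain := H _ (hC1 q) (hts (q + 1)) fun x => pow_nonneg (h0 x) _
  have hpt : ∀ x, -((q + 2) * K * ζ x ^ (q + 1)) ≤
      fderiv ℝ (fun x => ζ x ^ (q + 2)) x (F x) := by
    intro x
    by_cases hx : x ∈ closedBall x0 ρ
    · have hxR : x ∈ ball x0 R := closedBall_subset_ball hρ hx
      have hvd : HasFDerivAt v (fderiv ℝ v x) x :=
        ((hv.contDiffAt (isOpen_ball.mem_nhds hxR)).differentiableAt (by norm_num)).hasFDerivAt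
      have hn : HasFDerivAt (fun y : Euc n => ‖y - x0‖ ^ 2)
          (2 • (innerSL ℝ (x - x0)).comp (ContinuousLinearMap.id ℝ (Euc n))) x :=
        ((hasFDerivAt_id x).sub_const x0).norm_sq
      have hn2 := hn.pow k
      have hz := ((hvd.sub_const m).add_const ((ρ ^ 2) ^ k)).sub hn2
      have hf := (hasDerivAt_max_pow q (v x - m + (ρ ^ 2) ^ k - (‖x - x0‖ ^ 2) ^ k)).comp_hasFDerivAt
        x hz
      have heq : (fun x => ζ x ^ (q + 2)) =ᶠ[nhds x]
          ((fun t : ℝ => (max t 0) ^ (q + 2)) ∘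
            fun y => v y - m + (ρ ^ 2) ^ k - (‖y - x0‖ ^ 2) ^ k) := by
        filter_upwards [isOpen_ball.mem_nhds hxR] with y hy
        simp [hζ, zfun, indicator_of_mem hy]
      have hzx : max (v x - m + (ρ ^ 2) ^ k - (‖x - x0‖ ^ 2) ^ k) 0 = ζ x := by
        simp [hζ, zfun, indicator_of_mem hxR]
      rw [(hf.congr_of_eventuallyEq heq).fderiv, hzx]
      set w : Euc n := ((2 * k : ℝ) * (‖x - x0‖ ^ 2) ^ (k - 1)) • (x - x0) with hw
      have hwn : ‖w‖ ≤ 2 * k * ρ ^ (2 * k - 1) := by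
        rw [mem_closedBall, dist_eq_norm] at hx
        have h2 : 2 * k - 1 = 2 * (k - 1) + 1 := by omega
        rw [hw, norm_smul, Real.norm_eq_abs, abs_of_nonneg (by positivity), h2, pow_succ ρ, pow_mul ρ,
          mul_assoc, mul_assoc, mul_assoc]
        gcongr
      have hy := struct_young hp hC₁ hC₂ hA x (gradient v x) w _ hwn
      rw [← hF x hxR, ← hK, inner_gradient_left] at hy
      have hz0 : 0 ≤ (q + 2 : ℝ) * ζ x ^ (q + 1) := by
        have := h0 x
        positivity
      have := mul_le_mul_of_nonneg_left hy hz0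
      refine le_trans (le_of_eq ?_) (this.trans (le_of_eq ?_))
      · ring
      · simp [hw, inner_smul_left, inner_sub_left]
        left
        ring
    · have h1 : x ∉ tsupport (fun x => ζ x ^ (q + 2)) := fun h => hx (hts (q + 1) h)
      have h2 : fderiv ℝ (fun x => ζ x ^ (q + 2)) x = 0 :=
        image_eq_zero_of_notMem_tsupport fun h => h1 (tsupport_fderiv_subset ℝ h)
      rw [h2, hoff x hx]
      simp
  have hbi := integrable_fderiv_apply _ (hC1 q) (hcs (q + 1)) F M hFm hFM
  rw [integral_add ((hint (q + 1)).const_mul c) hbi, integral_const_mul] at hmain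
  have h3 := integral_mono (((hint q).const_mul ((q + 2) * K)).neg) hbi hpt
  simp only [Pi.neg_apply] at h3
  rw [integral_neg, integral_const_mul] at h3
  linarith

lemma core_false {n : ℕ} {A : Euc n → Euc n → Euc n} {p C₁ C₂ : ℝ} (hp : 1 < p)
    (hC₁ : 0 < C₁) (hC₂ : 0 < C₂) (hA : StructCond A p C₁ C₂)
    (v : Euc n → ℝ) (x0 : Euc n) (m R : ℝ) (hR : 0 < R) (hR1 : R ≤ 1 / 4)
    (hv : ContDiffOn ℝ 1 v (ball x0 R))
    (hvm : ∀ x ∈ ball x0 R, v x ≤ m)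
    (hvx : ∀ x ∈ ball x0 R, m - v x ≤ ‖x - x0‖ / 4) (c M : ℝ) (hc : 0 < c) (F : Euc n → Euc n)
    (hFm : AEStronglyMeasurable F volume) (hFM : ∀ x, ‖F x‖ ≤ M)
    (hF : ∀ x ∈ ball x0 R, F x = A x (gradient v x))
    (H : ∀ ρ, ρ < R → ∀ φ : Euc n → ℝ, ContDiff ℝ 1 φ → tsupport φ ⊆ closedBall x0 ρ →
      (∀ x, 0 ≤ φ x) → ∫ x, (c * φ x + fderiv ℝ φ x (F x)) ≤ 0) : False := by
  obtain ⟨k, hk⟩ := exists_nat_gt (p / (2 * (p - 1)))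
  have hp1 : 0 < p - 1 := by linarith
  rw [div_lt_iff₀ (by positivity)] at hk
  have hk1 : 1 ≤ k := by
    rcases Nat.eq_zero_or_pos k with rfl | h
    · simp at hk; linarith
    · exact h
  have hτ : 0 < (2 * k - 1) * p - 2 * (k : ℝ) := by linarith
  obtain ⟨j, hj⟩ := exists_nat_gt (2 * k * n / ((2 * k - 1) * p - 2 * (k : ℝ)))
  rw [div_lt_iff₀ hτ] at hj
  set K := C₂ * (C₂ / C₁) ^ (p - 1) with hK
  have hKpos : 0 < K := by positivity
  set C : ℝ := 2 ^ (j + 1) * (j + 1).factorial * (K * (2 * k) ^ p / c) ^ j with hC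
  set γ : ℝ := (2 * k - 1) * p * j - 2 * k * (j + n) with hγ
  have hγpos : 0 < γ := by rw [hγ]; linarith
  have hV : 0 < volume.real (ball x0 1) := by
    rw [Measure.real, ENNReal.toReal_pos_iff]
    exact ⟨measure_ball_pos _ _ one_pos, measure_ball_lt_top⟩
  have main : ∀ ρ, 0 < ρ → ρ < R → 1 ≤ C * ρ ^ γ := by
    intro ρ hρ0 hρ
    obtain ⟨h0, hle, hoff, hcont, -⟩ := zfun_props v x0 m R ρ k hρ0 hρ hv hvm
    have hstep := step_ineq hp hC₁ hC₂ hA v x0 m R ρ k hk1 hρ0 hρ hv hvm c M F hFm hFM hF (H ρ hρ)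
    rw [← hK] at hstep
    set s : ℝ := (ρ ^ 2) ^ k with hs
    set ζ := zfun v x0 m R s k with hζ
    have hs0 : 0 < s := by positivity
    have hsρ : s ≤ ρ := by
      have h1 : ρ ^ 2 ≤ ρ := by nlinarith
      exact (pow_le_of_le_one (by positivity) (by linarith) (by omega)).trans h1
    set ε : ℝ := K * (2 * k * ρ ^ (2 * k - 1)) ^ p / c with hε
    have hε0 : 0 ≤ ε := by positivity
    have hint : ∀ q : ℕ, Integrable (fun x => ζ x ^ (q + 1)) := by
      intro q
      refine (hcont.pow _).integrable_of_hasCompactSupport ?_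
      refine (isCompact_closedBall x0 ρ).of_isClosed_subset (isClosed_tsupport _) ?_
      apply closure_minimal _ isClosed_closedBall
      intro x hx
      by_contra hx'
      exact hx (by simp [hoff x hx'])
    have hit : ∀ i : ℕ, ∫ x, ζ x ^ (i + 1) ≤ (i + 1).factorial * ε ^ i * ∫ x, ζ x ^ 1 := by
      intro i
      induction i with
      | zero => simp
      | succ i ih =>
        have h1 := hstep i
        have h2 : ∫ x, ζ x ^ (i + 2) ≤ (i + 2) * ε * ∫ x, ζ x ^ (i + 1) := by
          rw [hε]
          rw [mul_comm c, ← le_div_iff₀ hc] at h1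
          refine h1.trans (le_of_eq ?_)
          ring
        have h3 := mul_le_mul_of_nonneg_left ih (show 0 ≤ ((i : ℝ) + 2) * ε by positivity)
        refine h2.trans (h3.trans (le_of_eq ?_))
        rw [Nat.factorial_succ (i + 1)]
        push_cast
        ring
    have hup : ∫ x, ζ x ^ 1 ≤ s * volume.real (ball x0 1) := by
      have h1 : ∫ x, (ball x0 1).indicator (fun _ => s) x = s * volume.real (ball x0 1) := by
        rw [integral_indicator measurableSet_ball, setIntegral_const, smul_eq_mul, mul_comm]
      rw [← h1]
      refine integral_mono (hint 0) ?_ fun x => ?_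
      · rw [integrable_indicator_iff measurableSet_ball]
        exact integrableOn_const measure_ball_lt_top.ne
      · by_cases hx : x ∈ ball x0 1
        · simp only [indicator_of_mem hx, pow_one]; exact hle x
        · have : x ∉ closedBall x0 ρ := fun h => hx (closedBall_subset_ball (by linarith) h)
          simp [indicator_of_notMem hx, hoff x this]
    have hlow : (s / 2) ^ (j + 1) * (s ^ n * volume.real (ball x0 1)) ≤ ∫ x, ζ x ^ (j + 1) := by
      have hvol : volume.real (ball x0 s) = s ^ n * volume.real (ball x0 1) := by
        rw [Measure.real, Measure.real, Measure.addHaar_ball_of_pos _ _ hs0,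
          Measure.addHaar_ball_center volume x0 1, ENNReal.toReal_mul, finrank_euclideanSpace_fin,
          ENNReal.toReal_ofReal (by positivity)]
      have h1 : ∫ x, (ball x0 s).indicator (fun _ => (s / 2) ^ (j + 1)) x =
          (s / 2) ^ (j + 1) * volume.real (ball x0 s) := by
        rw [integral_indicator measurableSet_ball, setIntegral_const, smul_eq_mul, mul_comm]
      rw [← hvol, ← h1]
      refine integral_mono ?_ (hint j) fun x => ?_
      · rw [integrable_indicator_iff measurableSet_ball]
        exact integrableOn_const measure_ball_lt_top.ne
      · by_cases hx : x ∈ ball x0 s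
        · simp only [indicator_of_mem hx]
          have hxR : x ∈ ball x0 R := ball_subset_ball (by linarith) hx
          have h2 := hvx x hxR
          rw [mem_ball, dist_eq_norm] at hx
          have h3 : (‖x - x0‖ ^ 2) ^ k ≤ s / 4 := by
            calc (‖x - x0‖ ^ 2) ^ k ≤ ‖x - x0‖ ^ 2 :=
                  pow_le_of_le_one (by positivity)
                    (pow_le_one₀ (norm_nonneg _) (by linarith)) (by omega)
              _ ≤ s ^ 2 := by gcongr
              _ ≤ s / 4 := by nlinarith
          have h4 : s / 2 ≤ ζ x := by
            rw [hζ, zfun, indicator_of_mem hxR]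
            exact le_max_of_le_left (by linarith)
          gcongr
        · simp only [indicator_of_notMem hx]
          exact pow_nonneg (h0 x) _
    have hall : (s / 2) ^ (j + 1) * (s ^ n * volume.real (ball x0 1)) ≤
        (j + 1).factorial * ε ^ j * (s * volume.real (ball x0 1)) :=
      hlow.trans ((hit j).trans (mul_le_mul_of_nonneg_left hup (by positivity)))
    have h5 : s ^ (j + n) ≤ 2 ^ (j + 1) * (j + 1).factorial * ε ^ j := by
      have h6 : s ^ (j + n) * (s * volume.real (ball x0 1) / 2 ^ (j + 1)) ≤
          (2 ^ (j + 1) * (j + 1).factorial * ε ^ j) *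
            (s * volume.real (ball x0 1) / 2 ^ (j + 1)) := by
        refine le_trans (le_of_eq ?_) (hall.trans (le_of_eq ?_))
        · rw [div_pow]; ring
        · field_simp
      exact le_of_mul_le_mul_right h6 (by positivity)
    have hsr : s ^ (j + n) = ρ ^ ((2 : ℝ) * k * (j + n)) := by
      rw [hs, ← pow_mul, ← pow_mul, ← Real.rpow_natCast]
      push_cast; rw [mul_assoc]
    have hεr : ε ^ j = (K * (2 * k) ^ p / c) ^ j * ρ ^ ((2 * k - 1) * p * j : ℝ) := by
      have h7 : (ρ ^ (2 * k - 1)) ^ p = ρ ^ ((2 * k - 1) * p : ℝ) := by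
        rw [← Real.rpow_natCast, ← Real.rpow_mul hρ0.le, Nat.cast_sub (by omega)]
        push_cast; rfl
      have h8 : ε = (K * (2 * k) ^ p / c) * ρ ^ ((2 * k - 1) * p : ℝ) := by
        rw [hε, Real.mul_rpow (by positivity) (by positivity), h7]; ring
      rw [h8, mul_pow, Real.rpow_mul_natCast hρ0.le]
    rw [hsr, hεr, ← mul_assoc, ← hC] at h5
    rw [hγ, Real.rpow_sub hρ0, ← mul_div_assoc, le_div_iff₀ (by positivity), one_mul]
    exact h5
  have hlim : Tendsto (fun ρ : ℝ => C * ρ ^ γ) (nhdsWithin 0 (Ioi 0)) (nhds (C * 0)) := by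
    have h1 : ContinuousAt (fun ρ : ℝ => ρ ^ γ) 0 :=
      Real.continuousAt_rpow_const _ _ (Or.inr hγpos.le)
    have h2 : Tendsto (fun ρ : ℝ => ρ ^ γ) (nhds 0) (nhds 0) := by
      have := h1.tendsto
      simpa only [Real.zero_rpow hγpos.ne'] using this
    exact (h2.mono_left nhdsWithin_le_nhds).const_mul C
  have : (1 : ℝ) ≤ C * 0 := by
    refine ge_of_tendsto hlim ?_
    filter_upwards [Ioo_mem_nhdsGT hR] with ρ hρ
    exact main ρ hρ.1 hρ.2
  linarith

/-- Lemma 4.0: if a bounded nonnegative solution of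
`div A(x,Dv) + b(x)|Dv|^α ≥ χ_ω h` in the annulus `B_{r₁,r₂}` (with `ω = {v > 0}`)
has constant sphere-maximum `M(ρ;v) = m > 0` for all `ρ ∈ (r₁, r₂)`, then `h = 0`. -/
theorem stmt_16 (n : ℕ) (hn : 2 ≤ n) (p C₁ C₂ α : ℝ) (hp : 1 < p)
    (hC₁ : 0 < C₁) (hC₂ : 0 < C₂) (hα₁ : p - 1 ≤ α) (hα₂ : α ≤ p)
    (A : Euc n → Euc n → Euc n) (hA : StructCond A p C₁ C₂)
    (b : Euc n → ℝ) (hbm : Measurable b) (hb0 : ∀ x, 0 ≤ b x) (hbloc : LocBdd b)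
    (r₁ r₂ h : ℝ) (hr₁ : 0 < r₁) (hr : r₁ < r₂) (hh : 0 ≤ h)
    (v : Euc n → ℝ) (hv1 : ContDiffOn ℝ 1 v (Ann n r₁ r₂))
    (hv0 : ∀ x ∈ Ann n r₁ r₂, 0 ≤ v x) (hvb : BddAbove (v '' Ann n r₁ r₂))
    (hsol : IsWeakSol A b α
      (Set.indicator {x ∈ Ann n r₁ r₂ | 0 < v x} fun _ => h) (Ann n r₁ r₂) v)
    (m : ℝ) (hm : 0 < m) (hM : ∀ ρ ∈ Set.Ioo r₁ r₂, sphMax v ρ = m) :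
    h = 0 := by
  by_contra hne
  have hpos : 0 < h := lt_of_le_of_ne hh (Ne.symm hne)
  have hα : 0 < α := by linarith
  set U := Ann n r₁ r₂ with hU
  have hUo : IsOpen U := by
    rw [hU]
    exact (isOpen_lt continuous_const continuous_norm).inter
      (isOpen_lt continuous_norm continuous_const)
  -- a maximum point
  have hsph : ∀ ρ ∈ Ioo r₁ r₂, sphere (0 : Euc n) ρ ⊆ U := by
    intro ρ hρ x hx
    rw [mem_sphere_zero_iff_norm] at hx
    exact ⟨by rw [hx]; exact hρ.1, by rw [hx]; exact hρ.2⟩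
  have hvm : ∀ x ∈ U, v x ≤ m := by
    intro x hx
    rw [← hM ‖x‖ hx]
    exact le_csSup (hvb.mono (image_mono (hsph _ hx))) ⟨x, by simp, rfl⟩
  have hρm : (r₁ + r₂) / 2 ∈ Ioo r₁ r₂ := ⟨by linarith, by linarith⟩
  obtain ⟨x0, hx0U, hx0⟩ : ∃ x0 ∈ U, v x0 = m := by
    have h1 := hM _ hρm
    have hne' : (sphere (0 : Euc n) ((r₁ + r₂) / 2)).Nonempty := by
      by_contra hemp
      rw [not_nonempty_iff_eq_empty] at hemp
      rw [sphMax, hemp, image_empty, Real.sSup_empty] at h1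
      linarith
    have hcomp := (isCompact_sphere (0 : Euc n) ((r₁ + r₂) / 2)).image_of_continuousOn
      (hv1.continuousOn.mono (hsph _ hρm))
    obtain ⟨x0, hx0, hx0'⟩ := hcomp.sSup_mem (hne'.image v)
    exact ⟨x0, hsph _ hρm hx0, hx0'.trans h1⟩
  have hUn : U ∈ nhds x0 := hUo.mem_nhds hx0U
  have hfd0 : fderiv ℝ v x0 = 0 := by
    apply IsLocalMax.fderiv_eq_zero
    filter_upwards [hUn] with y hy
    rw [hx0]; exact hvm y hy
  have hg0 : gradient v x0 = 0 := by rw [gradient, hfd0, map_zero]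
  have hgc : ContinuousAt (gradient v) x0 := by
    have h1 : ContinuousAt (fderiv ℝ v) x0 :=
      (hv1.continuousOn_fderiv_of_isOpen hUo le_rfl).continuousAt hUn
    exact (InnerProductSpace.toDual ℝ (Euc n)).symm.continuous.continuousAt.comp h1
  have hgn : Tendsto (fun x => ‖gradient v x‖) (nhds x0) (nhds 0) := by
    have := hgc.norm.tendsto
    simpa [hg0] using this
  obtain ⟨B, hB⟩ := hbloc (closedBall x0 1) (isCompact_closedBall x0 1)
  have hgα : Tendsto (fun x => max B 1 * ‖gradient v x‖ ^ α) (nhds x0) (nhds 0) := by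
    have h1 := (hgn.rpow_const (p := α) (Or.inr hα.le)).const_mul (max B 1)
    simpa [Real.zero_rpow hα.ne'] using h1
  have hev : ∀ᶠ x in nhds x0, x ∈ U ∧ 0 < v x ∧ b x * ‖gradient v x‖ ^ α ≤ h / 2 ∧
      m - v x ≤ ‖x - x0‖ / 4 ∧ ‖gradient v x‖ ≤ 1 := by
    have e1 : ∀ᶠ x in nhds x0, 0 < v x :=
      (hv1.continuousOn.continuousAt hUn).eventually (lt_mem_nhds (by rw [hx0]; exact hm))
    have e2 : ∀ᶠ x in nhds x0, max B 1 * ‖gradient v x‖ ^ α < h / 2 :=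
      hgα.eventually (gt_mem_nhds (by linarith))
    have e3 : ∀ᶠ x in nhds x0, ‖gradient v x‖ < 1 := hgn.eventually (gt_mem_nhds one_pos)
    have e4 : ∀ᶠ x in nhds x0, ‖v x - v x0 - fderiv ℝ v x0 (x - x0)‖ ≤ 1 / 4 * ‖x - x0‖ := by
      have hd : HasFDerivAt v (fderiv ℝ v x0) x0 :=
        ((hv1.contDiffAt hUn).differentiableAt (by norm_num)).hasFDerivAt
      exact hd.isLittleO.bound (by norm_num)
    filter_upwards [hUn, e1, e2, e3, e4, closedBall_mem_nhds x0 one_pos] with x a1 a2 a3 a4 a5 a6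
    refine ⟨a1, a2, ?_, ?_, a4.le⟩
    · have : b x ≤ max B 1 := (hB x a6).trans (le_max_left _ _)
      have := mul_le_mul_of_nonneg_right this (show 0 ≤ ‖gradient v x‖ ^ α by positivity)
      linarith
    · rw [hfd0, hx0] at a5
      simp only [ContinuousLinearMap.zero_apply, sub_zero, Real.norm_eq_abs] at a5
      have := neg_abs_le (v x - m)
      linarith
  obtain ⟨R0, hR0, hball⟩ := Metric.eventually_nhds_iff_ball.1 hev
  set R := min R0 (1 / 4) with hR
  have hRpos : 0 < R := lt_min hR0 (by norm_num)
  have hP : ∀ x ∈ ball x0 R, _ := fun x hx => hball x (ball_subset_ball (min_le_left _ _) hx)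
  have hsubU : ball x0 R ⊆ U := fun x hx => (hP x hx).1
  set F : Euc n → Euc n := (ball x0 R).indicator fun x => A x (gradient v x) with hFdef
  have hF : ∀ x ∈ ball x0 R, F x = A x (gradient v x) := fun x hx => indicator_of_mem hx _
  have hgm : Measurable (gradient v) :=
    (InnerProductSpace.toDual ℝ (Euc n)).symm.continuous.measurable.comp (measurable_fderiv ℝ v)
  have hFm : AEStronglyMeasurable F volume :=
    ((hA.1.comp (measurable_id.prodMk hgm)).indicator measurableSet_ball).aestronglyMeasurable
  have hFM : ∀ x, ‖F x‖ ≤ C₂ := by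
    intro x
    by_cases hx : x ∈ ball x0 R
    · rw [hF x hx]
      refine (hA.2 x _).2.trans ?_
      have := Real.rpow_le_one (norm_nonneg _) (hP x hx).2.2.2.2 (show 0 ≤ p - 1 by linarith)
      nlinarith
    · rw [hFdef, indicator_of_notMem hx, norm_zero]; exact hC₂.le
  refine core_false hp hC₁ hC₂ hA v x0 m R hRpos (min_le_right _ _) (hv1.mono hsubU)
    (fun x hx => hvm x (hsubU hx)) (fun x hx => (hP x hx).2.2.2.1) (h / 2) C₂ (by linarith) F
    hFm hFM hF ?_
  intro ρ hρ
  refine mollify_aux F C₂ (h / 2) x0 R ρ hρ hFm hFM ?_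
  intro φ hφ hcs hts hφ0
  have hoff : ∀ x, x ∉ ball x0 R → φ x = 0 := fun x hx =>
    image_eq_zero_of_notMem_tsupport fun h => hx (hts h)
  have hoffd : ∀ x, x ∉ ball x0 R → fderiv ℝ φ x = 0 := fun x hx =>
    image_eq_zero_of_notMem_tsupport fun h => hx (hts (tsupport_fderiv_subset ℝ h))
  have hφi : Integrable φ := hφ.continuous.integrable_of_hasCompactSupport hcs
  have hmain := hsol φ hφ hcs (hts.trans hsubU) hφ0
  have i1 : (∫ x in U, ({x ∈ U | 0 < v x}.indicator fun _ => h) x * φ x) = h * ∫ x, φ x := by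
    rw [setIntegral_eq_integral_of_forall_compl_eq_zero, ← integral_const_mul]
    · refine integral_congr_ae (Eventually.of_forall fun x => ?_)
      by_cases hx : x ∈ ball x0 R
      · have : x ∈ {x ∈ U | 0 < v x} := ⟨(hP x hx).1, (hP x hx).2.1⟩
        simp only [indicator_of_mem this]
      · simp [hoff x hx]
    · intro x hx
      rw [hoff x fun h => hx (hsubU h), mul_zero]
  have i2 : (∫ x in U, ⟪A x (gradient v x), gradient φ x⟫) = ∫ x, fderiv ℝ φ x (F x) := by
    have hin : ∀ x, ⟪A x (gradient v x), gradient φ x⟫ = fderiv ℝ φ x (A x (gradient v x)) :=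
      fun x => by rw [real_inner_comm, inner_gradient_left]
    simp only [hin]
    rw [setIntegral_eq_integral_of_forall_compl_eq_zero]
    · refine integral_congr_ae (Eventually.of_forall fun x => ?_)
      by_cases hx : x ∈ ball x0 R
      · simp only [hF x hx]
      · simp [hoffd x hx]
    · intro x hx
      rw [hoffd x fun h => hx (hsubU h)]; rfl
  have i3 : (∫ x in U, b x * ‖gradient v x‖ ^ α * φ x) ≤ h / 2 * ∫ x, φ x := by
    rw [setIntegral_eq_integral_of_forall_compl_eq_zero, ← integral_const_mul]
    · refine integral_mono_of_nonneg (Eventually.of_forall fun x => ?_) (hφi.const_mul _)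
        (Eventually.of_forall fun x => ?_)
      · have := hb0 x
        have := hφ0 x
        simp only [Pi.zero_apply]
        positivity
      · by_cases hx : x ∈ ball x0 R
        · exact mul_le_mul_of_nonneg_right (hP x hx).2.2.1 (hφ0 x)
        · simp [hoff x hx]
    · intro x hx
      rw [hoff x fun h => hx (hsubU h), mul_zero]
  rw [i1, i2] at hmain
  rw [integral_add (hφi.const_mul _) (integrable_fderiv_apply φ (hφ.of_le (by exact_mod_cast le_top)) hcs F C₂ hFm hFM),
    integral_const_mul]
  linarith
end
end
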